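/- There is an absolute constant C > 0, independent of the prime power q and of n, such that for all n ≥ 3: sup_{x∈ℝ} | ν_n( ( log O_n(ξ(P)) − M_n log O_n(ξ(P)) ) / ( (1/√3) log^{3/2} n ) < x ) − Φ(x) − (3^{3/2}/(24√(2π))) (1 − x²) e^{−x²/2} / √(log n) | ≤ C ( (log log n)/(log n) )^{2/3}. -/

import Mathlib

/-!
Write `A` for the multiset of degrees of the irreducible factors of a uniformly random monic
polynomial of degree `n`, let `logP A` be the sum of the logarithms of its parts and `logO A` the
logarithm of their least common multiple. The expansion is proved for `logP` by Fourier analysis,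
and transferred to `logO` by bounding the fluctuations of `logP - logO`.

*The recursion.* Counting the degree of `P` as the sum of `deg p` over the prime powers
`p ^ j ∣ P` gives, for every function `f` of `A`,
`n E_n f = ∑_{k ≤ n} ∑_{d ∣ k} wt(k, d) E_{n-k} f(A + (k/d) parts of size d)` (`Ex_rec`), where the
weights `wt(k, ·)` form a probability vector on the divisors of `k` that is concentrated at
`d = k`, uniformly in the field (`wt_sum`, `wt_proper`). Everything follows from this identity, so
all constants are independent of `q`.

*The law of `logP`.* The characteristic function `M_n(s)` of `logP` satisfies
`n M_n = ∑_k (1 + δ_k) M_{n-k}` with `δ_k` close to `k ^ (is) - 1`. When `|s| log n` is small,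
`M_n = exp (∑_{k ≤ n} δ_k / k)` up to a relative error of order `(s log n)²` (`CharSys.main`). For
larger `s` that approximation is used in degrees near `exp (ee / |s|)`; since `|M_n|` is at most
the mean of its predecessors, the resulting decay persists in degree `n` (`Mf_large`). Expanding
the exponent to third order (`WW_expansion`) and normalizing by `(log n) ^ (3/2) / √3`, the
characteristic function is within `O(1 / log n)` of the transform of
`Φ(x) + c (1 - x²) exp (-x²/2)`, after damping by a Gaussian of variance `η²` (`fch_bound`). The
smoothing inequality `smoothing_ineq` with `η = (log n) ^ (-2/3)` turns this into an estimate for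
distribution functions (`logP_law`).

*From `logP` to `logO`.* One has `logP A - logO A = ∑_m Λ(m) (D_m(A) - 1)⁺`, with `D_m(A)` the
number of parts divisible by `m` (`logP_sub_logO`). The terms `m ≤ Y` have variance
`O(log² Y · log n)` by an Efron–Stein type inequality derived from the recursion (`var_bound`,
`var_U`), and the terms `m > Y` have mean `O(log² n / √Y)` (`Ex_V`). With `Y` near `(log n) ^ 4`,
Chebyshev's and Markov's inequalities show that the normalized fluctuation of `logP - logO` exceeds
`ρ = (log log n / log n) ^ (2/3)` with probability `O(ρ)` (`delta_tail`, `large_case`). For bounded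
`n` the claim is trivial after enlarging the constant.
-/

open scoped BigOperators

/-- The standard normal distribution function `Φ`. -/
noncomputable def stdNormalCDF (x : ℝ) : ℝ :=
  (Real.sqrt (2 * Real.pi))⁻¹ * ∫ u in Set.Iic x, Real.exp (-u ^ 2 / 2)

/-- The monic polynomial of degree `n` with coefficient vector `c` below the top degree. -/
noncomputable def monicOfCoeffs {F : Type} [Field F] (n : ℕ) (c : Fin n → F) :
    Polynomial F :=
  Polynomial.X ^ n + ∑ i : Fin n, Polynomial.C (c i) * Polynomial.X ^ (i : ℕ)

/-- The degree of the splitting field of `P`: the lcm of the degrees of the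
irreducible factors of `P`. -/
noncomputable def splitDeg {F : Type} [Field F] (P : Polynomial F) : ℕ :=
  (((UniqueFactorizationMonoid.factors P).map Polynomial.natDegree).toFinset).lcm id

/-! ### Monic polynomials over a finite field and the removal recursion -/

namespace ETS

open Polynomial UniqueFactorizationMonoid

/-- The multiset of degrees of the irreducible factors of `P`, with multiplicity. -/
noncomputable def degs {F : Type} [Field F] (P : F[X]) : Multiset ℕ :=
  (factors P).map natDegree

section
variable {F : Type} [Field F]

open Classical in
lemma degs_eq (P : F[X]) : degs P = (normalizedFactors P).map natDegree := by
  unfold degs normalizedFactors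
  rw [Multiset.map_map]
  refine Multiset.map_congr rfl fun p _ => ?_
  simp only [Function.comp_apply]
  exact (natDegree_eq_of_degree_eq (degree_normalize (p := p))).symm

open Classical in
lemma degs_mul_pow {Q p : F[X]} (hQ : Q ≠ 0) (hp : Irreducible p) (j : ℕ) :
    degs (Q * p ^ j) = degs Q + Multiset.replicate j p.natDegree := by
  rw [degs_eq, degs_eq, normalizedFactors_mul hQ (pow_ne_zero _ hp.ne_zero),
    normalizedFactors_pow, normalizedFactors_irreducible hp, Multiset.map_add,
    Multiset.map_nsmul, Multiset.map_singleton, Multiset.nsmul_singleton]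
  congr 2
  exact natDegree_eq_of_degree_eq (degree_normalize (p := p))

lemma degs_pos {P : F[X]} {k : ℕ} (hk : k ∈ degs P) : 0 < k := by
  obtain ⟨p, hp, rfl⟩ := Multiset.mem_map.1 hk
  exact (irreducible_of_factor p hp).natDegree_pos

lemma degs_sum {P : F[X]} (hP : P ≠ 0) : (degs P).sum = P.natDegree := by
  have h := factors_prod hP
  have h0 : (0 : F[X]) ∉ factors P := fun h => (irreducible_of_factor _ h).ne_zero rfl
  rw [← natDegree_eq_of_degree_eq (degree_eq_degree_of_associated h),
    natDegree_multiset_prod _ h0, degs]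

lemma monicOfCoeffs_aux (n : ℕ) (c : Fin n → F) :
    (∑ i : Fin n, C (c i) * X ^ (i : ℕ)).degree < (n : WithBot ℕ) := by
  refine (degree_sum_le _ _).trans_lt ?_
  rw [Finset.sup_lt_iff (by exact WithBot.bot_lt_coe n)]
  intro i _
  refine (degree_C_mul_X_pow_le _ _).trans_lt ?_
  exact_mod_cast i.2

lemma monicOfCoeffs_monic (n : ℕ) (c : Fin n → F) : (monicOfCoeffs n c).Monic :=
  monic_X_pow_add (monicOfCoeffs_aux n c)

lemma monicOfCoeffs_natDegree (n : ℕ) (c : Fin n → F) : (monicOfCoeffs n c).natDegree = n := by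
  unfold monicOfCoeffs
  rw [natDegree_add_eq_left_of_degree_lt, natDegree_X_pow]
  rw [degree_X_pow]
  exact monicOfCoeffs_aux n c

lemma monicOfCoeffs_coeff (n : ℕ) (c : Fin n → F) (i : Fin n) :
    (monicOfCoeffs n c).coeff i = c i := by
  unfold monicOfCoeffs
  rw [coeff_add, coeff_X_pow, if_neg i.2.ne, zero_add, finsetSum_coeff, Finset.sum_eq_single i]
  · simp
  · intro b _ hb
    rw [coeff_C_mul, coeff_X_pow, if_neg (fun h => hb (Fin.ext h.symm)), mul_zero]
  · simp

lemma monicOfCoeffs_injective (n : ℕ) : Function.Injective (monicOfCoeffs (F := F) n) := by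
  intro c c' h
  funext i
  rw [← monicOfCoeffs_coeff n c i, h, monicOfCoeffs_coeff]

lemma monicOfCoeffs_surj {n : ℕ} {P : F[X]} (hP : P.Monic) (hn : P.natDegree = n) :
    monicOfCoeffs n (fun i => P.coeff i) = P := by
  unfold monicOfCoeffs
  conv_rhs => rw [hP.as_sum, hn]
  rw [Finset.sum_range]

variable [Fintype F]

open Classical in
/-- The finite set of monic polynomials of degree `n`. -/
noncomputable def Mon (F : Type) [Field F] [Fintype F] (n : ℕ) : Finset F[X] :=
  Finset.univ.image (monicOfCoeffs (F := F) n)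

open Classical in
lemma mem_Mon {n : ℕ} {P : F[X]} : P ∈ Mon F n ↔ P.Monic ∧ P.natDegree = n := by
  unfold Mon
  rw [Finset.mem_image]
  constructor
  · rintro ⟨c, -, rfl⟩
    exact ⟨monicOfCoeffs_monic n c, monicOfCoeffs_natDegree n c⟩
  · rintro ⟨h1, h2⟩
    exact ⟨_, Finset.mem_univ _, monicOfCoeffs_surj h1 h2⟩

open Classical in
lemma sum_Mon {V : Type*} [AddCommMonoid V] (n : ℕ) (f : F[X] → V) :
    ∑ P ∈ Mon F n, f P = ∑ c : Fin n → F, f (monicOfCoeffs n c) := by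
  unfold Mon
  rw [Finset.sum_image]
  intro a _ b _ h
  exact monicOfCoeffs_injective n h

open Classical in
/-- The finite set of monic irreducible polynomials of degree `d`. -/
noncomputable def Irr (F : Type) [Field F] [Fintype F] (d : ℕ) : Finset F[X] :=
  (Mon F d).filter Irreducible

open Classical in
lemma mem_Irr {d : ℕ} {p : F[X]} :
    p ∈ Irr F d ↔ (p.Monic ∧ p.natDegree = d) ∧ Irreducible p := by
  unfold Irr; rw [Finset.mem_filter, mem_Mon]

open Classical in
/-- The degree of `P` is the sum of `deg p` over all prime powers `p ^ j ∣ P`. -/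
lemma degree_count {n : ℕ} {P : F[X]} (hP : P ∈ Mon F n) :
    n = ∑ d ∈ Finset.Icc 1 n, ∑ p ∈ Irr F d, ∑ j ∈ Finset.Icc 1 n,
      if p ^ j ∣ P then d else 0 := by
  obtain ⟨hm, hn⟩ := mem_Mon.1 hP
  have h0 := hm.ne_zero
  have hpow : ∀ d ∈ Finset.Icc 1 n, ∀ p ∈ Irr F d,
      (∑ j ∈ Finset.Icc 1 n, if p ^ j ∣ P then d else 0)
        = (normalizedFactors P).count p * natDegree p := by
    intro d hd p hp
    obtain ⟨⟨hpm, hpd⟩, hpi⟩ := mem_Irr.1 hp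
    have hnorm : normalize p = p := hpm.normalize_eq_self
    have hiff : ∀ j, p ^ j ∣ P ↔ j ≤ (normalizedFactors P).count p := by
      intro j
      rw [dvd_iff_normalizedFactors_le_normalizedFactors (pow_ne_zero _ hpi.ne_zero) h0,
        normalizedFactors_pow, normalizedFactors_irreducible hpi, hnorm,
        Multiset.nsmul_singleton, Multiset.le_count_iff_replicate_le]
    have hle : (normalizedFactors P).count p ≤ n := by
      have h1 : p ^ ((normalizedFactors P).count p) ∣ P := (hiff _).2 le_rfl
      have h2 := natDegree_le_of_dvd h1 h0
      rw [natDegree_pow, hn, hpd] at h2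
      have := (Finset.mem_Icc.1 hd).1
      nlinarith
    rw [← Finset.sum_filter, Finset.sum_const, smul_eq_mul, hpd]
    congr 1
    have : (Finset.Icc 1 n).filter (fun j => p ^ j ∣ P)
        = Finset.Icc 1 ((normalizedFactors P).count p) := by
      ext j
      simp only [Finset.mem_filter, Finset.mem_Icc, hiff]
      omega
    rw [this, Nat.card_Icc]; omega
  rw [Finset.sum_congr rfl fun d hd => Finset.sum_congr rfl (hpow d hd)]
  have hdeg : n = ((normalizedFactors P).map natDegree).sum := by
    rw [← degs_eq, degs_sum h0, hn]
  conv_lhs => rw [hdeg]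
  rw [Finset.sum_multiset_map_count, ← Finset.sum_biUnion]
  · simp only [smul_eq_mul]
    refine Finset.sum_subset ?_ ?_
    · intro p hp
      have hp' := Multiset.mem_toFinset.1 hp
      have hi := irreducible_of_normalized_factor p hp'
      have hpm : p.Monic := by
        have := normalize_normalized_factor p hp'
        rw [← this]
        exact monic_normalize hi.ne_zero
      refine Finset.mem_biUnion.2 ⟨p.natDegree, ?_, mem_Irr.2 ⟨⟨hpm, rfl⟩, hi⟩⟩
      refine Finset.mem_Icc.2 ⟨hi.natDegree_pos, ?_⟩
      rw [← hn]
      exact natDegree_le_of_dvd (dvd_of_mem_normalizedFactors hp') h0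
    · intro p _ hp
      rw [Multiset.mem_toFinset] at hp
      rw [Multiset.count_eq_zero_of_notMem hp, zero_mul]
  · intro a _ b _ hab
    refine Finset.disjoint_left.2 fun p hpa hpb => hab ?_
    rw [← (mem_Irr.1 hpa).1.2, ← (mem_Irr.1 hpb).1.2]

open Classical in
/-- Multiples of a prime power `p ^ j` among monic polynomials of degree `n`. -/
lemma sum_dvd {V : Type*} [AddCommMonoid V] (n d j : ℕ) (f : Multiset ℕ → V) {p : F[X]}
    (hp : p ∈ Irr F d) :
    ∑ P ∈ (Mon F n).filter (fun P => p ^ j ∣ P), f (degs P) =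
      if j * d ≤ n then ∑ Q ∈ Mon F (n - j * d), f (degs Q + Multiset.replicate j d) else 0 := by
  obtain ⟨⟨hpm, hpd⟩, hpi⟩ := mem_Irr.1 hp
  split_ifs with h
  · symm
    refine Finset.sum_bij (fun Q _ => Q * p ^ j) ?_ ?_ ?_ ?_
    · intro Q hQ
      obtain ⟨h1, h2⟩ := mem_Mon.1 hQ
      refine Finset.mem_filter.2 ⟨mem_Mon.2 ⟨h1.mul (hpm.pow j), ?_⟩, dvd_mul_left _ _⟩
      rw [h1.natDegree_mul (hpm.pow j), hpm.natDegree_pow, h2, hpd]; omega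
    · intro Q _ Q' _ hQQ
      exact mul_right_cancel₀ (pow_ne_zero _ hpi.ne_zero) hQQ
    · intro P hP
      obtain ⟨hP1, Q, rfl⟩ := Finset.mem_filter.1 hP
      obtain ⟨h1, h2⟩ := mem_Mon.1 hP1
      have hQm : Q.Monic := (hpm.pow j).of_mul_monic_left h1
      refine ⟨Q, mem_Mon.2 ⟨hQm, ?_⟩, mul_comm _ _⟩
      rw [(hpm.pow j).natDegree_mul hQm, hpm.natDegree_pow, hpd] at h2
      omega
    · intro Q hQ
      rw [degs_mul_pow (mem_Mon.1 hQ).1.ne_zero hpi, hpd]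
  · refine Finset.sum_eq_zero fun P hP => absurd ?_ h
    obtain ⟨hP1, hdvd⟩ := Finset.mem_filter.1 hP
    obtain ⟨h1, h2⟩ := mem_Mon.1 hP1
    have := natDegree_le_of_dvd hdvd h1.ne_zero
    rw [hpm.natDegree_pow, hpd, h2] at this
    exact this

/-- The expectation of a function of the multiset of factor degrees, for a uniformly random
monic polynomial of degree `n`. -/
noncomputable def Ex (F : Type) [Field F] [Fintype F] {V : Type*} [AddCommGroup V] [Module ℝ V]
    (n : ℕ) (f : Multiset ℕ → V) : V :=
  ((Fintype.card F : ℝ) ^ n)⁻¹ • ∑ c : Fin n → F, f (degs (monicOfCoeffs n c))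

/-- The weight with which a power `p ^ (k / d)`, `deg p = d`, is removed when a factor of total
degree `k` is removed. -/
noncomputable def wt (F : Type) [Field F] [Fintype F] (k d : ℕ) : ℝ :=
  d * (Irr F d).card / (Fintype.card F : ℝ) ^ k

lemma card_pos' : (0 : ℝ) < Fintype.card F := by
  exact_mod_cast Fintype.card_pos

lemma wt_nonneg (k d : ℕ) : 0 ≤ wt F k d := by
  unfold wt; positivity

open Classical in
/-- The removal recursion: a uniformly random root of the polynomial picks a prime power
`p ^ j ∣ P`; after removing it, the cofactor is again uniformly distributed. -/
lemma Ex_rec {V : Type*} [AddCommGroup V] [Module ℝ V] (n : ℕ) (f : Multiset ℕ → V) :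
    (n : ℝ) • Ex F n f = ∑ k ∈ Finset.Icc 1 n, ∑ d ∈ k.divisors,
      wt F k d • Ex F (n - k) (fun A => f (A + Multiset.replicate (k / d) d)) := by
  have hq := card_pos' (F := F)
  have key : (n : ℝ) • ∑ P ∈ Mon F n, f (degs P)
      = ∑ d ∈ Finset.Icc 1 n, ∑ j ∈ Finset.Icc 1 n, if j * d ≤ n then
          ((d * (Irr F d).card : ℕ) : ℝ) •
            ∑ Q ∈ Mon F (n - j * d), f (degs Q + Multiset.replicate j d) else 0 := by
    rw [Finset.smul_sum]
    have h1 : ∀ P ∈ Mon F n, (n : ℝ) • f (degs P) =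
        ∑ d ∈ Finset.Icc 1 n, ∑ j ∈ Finset.Icc 1 n, ∑ p ∈ Irr F d,
          if p ^ j ∣ P then (d : ℝ) • f (degs P) else 0 := by
      intro P hP
      conv_lhs => rw [degree_count hP]
      push_cast
      rw [Finset.sum_smul]
      refine Finset.sum_congr rfl fun d _ => ?_
      rw [Finset.sum_smul, Finset.sum_comm]
      refine Finset.sum_congr rfl fun p _ => ?_
      rw [Finset.sum_smul]
      refine Finset.sum_congr rfl fun j _ => ?_
      split_ifs <;> simp
    rw [Finset.sum_congr rfl h1, Finset.sum_comm]
    refine Finset.sum_congr rfl fun d _ => ?_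
    rw [Finset.sum_comm]
    refine Finset.sum_congr rfl fun j _ => ?_
    rw [Finset.sum_comm]
    have h2 : ∀ p ∈ Irr F d, (∑ P ∈ Mon F n, if p ^ j ∣ P then (d : ℝ) • f (degs P) else 0) =
        if j * d ≤ n then
          (d : ℝ) • ∑ Q ∈ Mon F (n - j * d), f (degs Q + Multiset.replicate j d) else 0 := by
      intro p hp
      rw [← Finset.sum_filter, ← Finset.smul_sum, sum_dvd n d j f hp]
      split_ifs <;> simp
    rw [Finset.sum_congr rfl h2, Finset.sum_const]
    split_ifs
    · rw [← Nat.cast_smul_eq_nsmul ℝ, smul_smul]; push_cast; rw [mul_comm]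
    · simp
  unfold Ex
  rw [← sum_Mon (F := F) n (fun P => f (degs P)), smul_comm, key,
    Finset.sum_sigma', Finset.sum_sigma', Finset.smul_sum]
  have h3 : ∀ x ∈ (Finset.Icc 1 n).sigma (fun _ : ℕ => Finset.Icc 1 n),
      x ∉ ((Finset.Icc 1 n).sigma (fun _ : ℕ => Finset.Icc 1 n)).filter
        (fun x => x.2 * x.1 ≤ n) →
      (((Fintype.card F : ℝ) ^ n)⁻¹ • if x.2 * x.1 ≤ n then
          ((x.1 * (Irr F x.1).card : ℕ) : ℝ) •
            ∑ Q ∈ Mon F (n - x.2 * x.1), f (degs Q + Multiset.replicate x.2 x.1) else 0) = 0 := by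
    intro x hx hx'
    rw [Finset.mem_filter, not_and] at hx'
    rw [if_neg (hx' hx), smul_zero]
  rw [← Finset.sum_subset (Finset.filter_subset _ _) h3]
  refine Finset.sum_bij' (fun x _ => ⟨x.2 * x.1, x.1⟩) (fun y _ => ⟨y.2, y.1 / y.2⟩) ?_ ?_ ?_ ?_ ?_
  · rintro ⟨d, j⟩ h
    simp only [Finset.mem_filter, Finset.mem_sigma, Finset.mem_Icc, Nat.mem_divisors] at h ⊢
    obtain ⟨⟨⟨h1, h2⟩, h3, h4⟩, h5⟩ := h
    refine ⟨⟨Nat.mul_pos h3 h1, h5⟩, dvd_mul_left _ _, (Nat.mul_pos h3 h1).ne'⟩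
  · rintro ⟨k, d⟩ h
    simp only [Finset.mem_filter, Finset.mem_sigma, Finset.mem_Icc, Nat.mem_divisors] at h ⊢
    obtain ⟨⟨h1, h2⟩, h3, h4⟩ := h
    have hd := Nat.pos_of_dvd_of_pos h3 h1
    have hdk := Nat.le_of_dvd h1 h3
    refine ⟨⟨⟨hd, hdk.trans h2⟩, Nat.div_pos hdk hd, (Nat.div_le_self _ _).trans h2⟩, ?_⟩
    rwa [Nat.div_mul_cancel h3]
  · rintro ⟨d, j⟩ h
    simp only [Finset.mem_filter, Finset.mem_sigma, Finset.mem_Icc] at h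
    simp only [Nat.mul_div_cancel _ (Nat.lt_of_lt_of_le zero_lt_one h.1.1.1)]
  · rintro ⟨k, d⟩ h
    simp only [Finset.mem_sigma, Finset.mem_Icc, Nat.mem_divisors] at h
    simp only [Nat.div_mul_cancel h.2.1]
  · rintro ⟨d, j⟩ h
    simp only [Finset.mem_filter, Finset.mem_sigma, Finset.mem_Icc] at h
    obtain ⟨⟨⟨h1, h2⟩, h3, h4⟩, h5⟩ := h
    simp only
    rw [if_pos h5, Nat.mul_div_cancel _ h1,
      ← sum_Mon (F := F) (n - j * d) (fun P => f (degs P + Multiset.replicate j d)),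
      smul_smul, smul_smul]
    congr 1
    unfold wt
    rw [← pow_sub_mul_pow _ h5]
    push_cast
    field_simp

end
end ETS

/-! ### Expectations and removal weights -/

namespace ETS

section
variable {F : Type} [Field F] [Fintype F]

lemma Ex_eq_zero_deg {V : Type*} [AddCommGroup V] [Module ℝ V] (f : Multiset ℕ → V) :
    Ex F 0 f = f 0 := by
  have h : degs (monicOfCoeffs (F := F) 0 default) = 0 := by
    have h1 := degs_sum (monicOfCoeffs_monic (F := F) 0 default).ne_zero
    rw [monicOfCoeffs_natDegree] at h1
    refine Multiset.eq_zero_of_forall_notMem fun k hk => ?_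
    have h2 := degs_pos hk
    have h3 := Multiset.le_sum_of_mem hk
    omega
  unfold Ex
  rw [Fintype.sum_unique, h]
  simp

lemma Ex_const {V : Type*} [AddCommGroup V] [Module ℝ V] (n : ℕ) (v : V) :
    Ex F n (fun _ => v) = v := by
  have hq := card_pos' (F := F)
  unfold Ex
  rw [Finset.sum_const, Finset.card_univ, Fintype.card_fun, Fintype.card_fin,
    ← Nat.cast_smul_eq_nsmul ℝ, smul_smul]
  push_cast
  rw [inv_mul_cancel₀ (by positivity), one_smul]

lemma Ex_add {V : Type*} [AddCommGroup V] [Module ℝ V] (n : ℕ) (f g : Multiset ℕ → V) :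
    Ex F n (fun A => f A + g A) = Ex F n f + Ex F n g := by
  unfold Ex; rw [Finset.sum_add_distrib, smul_add]

lemma Ex_sub {V : Type*} [AddCommGroup V] [Module ℝ V] (n : ℕ) (f g : Multiset ℕ → V) :
    Ex F n (fun A => f A - g A) = Ex F n f - Ex F n g := by
  unfold Ex; rw [Finset.sum_sub_distrib, smul_sub]

lemma Ex_sum {V ι : Type*} [AddCommGroup V] [Module ℝ V] (n : ℕ) (s : Finset ι)
    (f : ι → Multiset ℕ → V) :
    Ex F n (fun A => ∑ i ∈ s, f i A) = ∑ i ∈ s, Ex F n (f i) := by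
  unfold Ex; rw [Finset.sum_comm, Finset.smul_sum]

lemma Ex_mul_left (n : ℕ) (a : ℝ) (f : Multiset ℕ → ℝ) :
    Ex F n (fun A => a * f A) = a * Ex F n f := by
  unfold Ex; rw [← Finset.mul_sum]; simp only [smul_eq_mul]; ring

lemma Ex_mul_left_complex (n : ℕ) (a : ℂ) (f : Multiset ℕ → ℂ) :
    Ex F n (fun A => a * f A) = a * Ex F n f := by
  unfold Ex; rw [← Finset.mul_sum]; exact (mul_smul_comm _ _ _).symm

lemma Ex_congr {V : Type*} [AddCommGroup V] [Module ℝ V] (n : ℕ) {f g : Multiset ℕ → V}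
    (h : ∀ A : Multiset ℕ, (∀ k ∈ A, 0 < k) → A.sum = n → f A = g A) : Ex F n f = Ex F n g := by
  unfold Ex
  congr 1
  refine Finset.sum_congr rfl fun c _ => h _ (fun k hk => degs_pos hk) ?_
  rw [degs_sum (monicOfCoeffs_monic n c).ne_zero, monicOfCoeffs_natDegree]

lemma Ex_mono (n : ℕ) {f g : Multiset ℕ → ℝ}
    (h : ∀ A : Multiset ℕ, (∀ k ∈ A, 0 < k) → A.sum = n → f A ≤ g A) : Ex F n f ≤ Ex F n g := by
  have hq := card_pos' (F := F)
  unfold Ex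
  refine smul_le_smul_of_nonneg_left ?_ (by positivity)
  refine Finset.sum_le_sum fun c _ => h _ (fun k hk => degs_pos hk) ?_
  rw [degs_sum (monicOfCoeffs_monic n c).ne_zero, monicOfCoeffs_natDegree]

lemma norm_Ex_le {V : Type*} [NormedAddCommGroup V] [NormedSpace ℝ V] (n : ℕ)
    (f : Multiset ℕ → V) : ‖Ex F n f‖ ≤ Ex F n (fun A => ‖f A‖) := by
  have hq := card_pos' (F := F)
  unfold Ex
  rw [norm_smul, Real.norm_of_nonneg (by positivity), smul_eq_mul]
  exact mul_le_mul_of_nonneg_left (norm_sum_le _ _) (by positivity)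

lemma abs_Ex_sub_le (n : ℕ) {f g : Multiset ℕ → ℝ} {b : ℝ} (h : ∀ A, |f A - g A| ≤ b) :
    |Ex F n f - Ex F n g| ≤ b := by
  rw [← Ex_sub, ← Real.norm_eq_abs]
  refine (norm_Ex_le n _).trans ?_
  calc _ ≤ Ex F n (fun _ => b) := Ex_mono n fun A _ _ => h A
    _ = b := Ex_const n b

lemma wt_sum {k : ℕ} (hk : 1 ≤ k) : ∑ d ∈ k.divisors, wt F k d = 1 := by
  have h : ∀ n : ℕ, (n : ℝ) = ∑ k ∈ Finset.Icc 1 n, ∑ d ∈ k.divisors, wt F k d := by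
    intro n
    have := Ex_rec (F := F) n (fun _ => (1 : ℝ))
    simpa only [Ex_const, smul_eq_mul, mul_one] using this
  obtain ⟨m, rfl⟩ := Nat.exists_eq_add_of_le' hk
  have h1 := h (m + 1)
  rw [Finset.sum_Icc_succ_top (by omega), ← h m] at h1
  push_cast at h1
  linarith

lemma two_le_card : (2 : ℝ) ≤ Fintype.card F := by
  have : 1 < Fintype.card F := Fintype.one_lt_card
  exact_mod_cast this

lemma wt_le {k d : ℕ} (hd : 1 ≤ d) (hdk : d ≤ k) : wt F k d ≤ (1 / 2) ^ (k - d) := by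
  have hq := card_pos' (F := F)
  have h1 : wt F d d ≤ 1 := by
    rw [← wt_sum (F := F) hd]
    exact Finset.single_le_sum (f := fun x => wt F d x) (fun x _ => wt_nonneg d x)
      (Nat.mem_divisors_self d (by omega))
  have h2 : wt F k d = wt F d d * (1 / (Fintype.card F : ℝ)) ^ (k - d) := by
    unfold wt
    rw [← pow_sub_mul_pow _ hdk, one_div, inv_pow]
    field_simp
  rw [h2]
  calc _ ≤ 1 * (1 / (Fintype.card F : ℝ)) ^ (k - d) := by gcongr
    _ ≤ _ := by
      rw [one_mul]
      have := two_le_card (F := F)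
      gcongr

end

lemma exists_C0 : ∃ C : ℝ, 1 ≤ C ∧ ∀ k : ℕ, (k : ℝ) ^ 7 * (1 / 2) ^ (k - k / 2) ≤ C := by
  have h := tendsto_pow_const_mul_const_pow_of_abs_lt_one 7 (r := (1 / 2 : ℝ))
    (by rw [abs_of_pos] <;> norm_num)
  obtain ⟨B, hB⟩ := h.bddAbove_range
  refine ⟨max 1 (2 ^ 7 * B), le_max_left _ _, fun k => le_trans ?_ (le_max_right _ _)⟩
  have h1 := hB ⟨k - k / 2, rfl⟩
  have h2 : (k : ℝ) ≤ 2 * ((k - k / 2 : ℕ) : ℝ) := by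
    have : k ≤ 2 * (k - k / 2) := by omega
    exact_mod_cast this
  calc (k : ℝ) ^ 7 * (1 / 2) ^ (k - k / 2)
      ≤ (2 * ((k - k / 2 : ℕ) : ℝ)) ^ 7 * (1 / 2) ^ (k - k / 2) := by gcongr
    _ = 2 ^ 7 * (((k - k / 2 : ℕ) : ℝ) ^ 7 * (1 / 2) ^ (k - k / 2)) := by ring
    _ ≤ _ := by gcongr

/-- An absolute constant bounding `k ^ 6` times the probability that the removed prime power of
degree `k` is not a prime. -/
noncomputable def C0 : ℝ := Classical.choose exists_C0

lemma one_le_C0 : 1 ≤ C0 := (Classical.choose_spec exists_C0).1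

lemma C0_spec (k : ℕ) : (k : ℝ) ^ 7 * (1 / 2) ^ (k - k / 2) ≤ C0 :=
  (Classical.choose_spec exists_C0).2 k

section
variable {F : Type} [Field F] [Fintype F]

lemma wt_proper {k : ℕ} (hk : 1 ≤ k) : ∑ d ∈ k.properDivisors, wt F k d ≤ C0 / k ^ 6 := by
  have h1 : ∀ d ∈ k.properDivisors, wt F k d ≤ (1 / 2) ^ (k - k / 2) := by
    intro d hd
    obtain ⟨⟨c, hc⟩, hlt⟩ := Nat.mem_properDivisors.1 hd
    have hd1 : 1 ≤ d := by
      rcases Nat.eq_zero_or_pos d with h | h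
      · subst h; simp at hc; omega
      · exact h
    have hd2 : d ≤ k / 2 := by
      rw [Nat.le_div_iff_mul_le (by norm_num)]
      have : 2 ≤ c := by
        by_contra hcc
        interval_cases c <;> omega
      nlinarith
    refine (wt_le hd1 hlt.le).trans ?_
    exact pow_le_pow_of_le_one (by norm_num) (by norm_num) (by omega)
  have hk0 : (0 : ℝ) < k := by exact_mod_cast hk
  calc _ ≤ ∑ d ∈ k.properDivisors, ((1 : ℝ) / 2) ^ (k - k / 2) := Finset.sum_le_sum h1
    _ = k.properDivisors.card * ((1 : ℝ) / 2) ^ (k - k / 2) := by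
      rw [Finset.sum_const, nsmul_eq_mul]
    _ ≤ k * ((1 : ℝ) / 2) ^ (k - k / 2) := by
      gcongr
      exact_mod_cast (Finset.card_filter_le _ _).trans (by simp)
    _ ≤ C0 / k ^ 6 := by
      rw [le_div_iff₀ (by positivity)]
      have := C0_spec k
      nlinarith [C0_spec k]

/-- A weighted average over the divisors of `k` differs little from the value at `k`. -/
lemma wt_avg {V : Type*} [NormedAddCommGroup V] [NormedSpace ℝ V] {k : ℕ} (hk : 1 ≤ k)
    (φ : ℕ → V) {b : ℝ} (hb0 : 0 ≤ b) (hb : ∀ d ∈ k.properDivisors, ‖φ d - φ k‖ ≤ b) :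
    ‖∑ d ∈ k.divisors, wt F k d • φ d - φ k‖ ≤ b * (C0 / k ^ 6) := by
  have h1 : φ k = ∑ d ∈ k.divisors, wt F k d • φ k := by
    rw [← Finset.sum_smul, wt_sum hk, one_smul]
  have h2 : ∑ d ∈ k.divisors, wt F k d • φ d - φ k
      = ∑ d ∈ k.properDivisors, wt F k d • (φ d - φ k) := by
    conv_lhs => rw [h1]
    rw [← Finset.sum_sub_distrib, ← Nat.insert_self_properDivisors (by omega : k ≠ 0),
      Finset.sum_insert Nat.self_notMem_properDivisors]
    simp only [smul_sub, sub_self, zero_add]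
  rw [h2]
  calc _ ≤ ∑ d ∈ k.properDivisors, wt F k d * b := by
        refine norm_sum_le_of_le _ fun d hd => ?_
        rw [norm_smul, Real.norm_of_nonneg (wt_nonneg k d)]
        exact mul_le_mul_of_nonneg_left (hb d hd) (wt_nonneg k d)
    _ = b * ∑ d ∈ k.properDivisors, wt F k d := by rw [← Finset.sum_mul, mul_comm]
    _ ≤ _ := mul_le_mul_of_nonneg_left (wt_proper hk) hb0

/-! ### Variance bound for Lipschitz statistics -/

lemma sum_harmonic (n : ℕ) :
    ∑ j ∈ Finset.range n, (harmonic j : ℝ) = n * harmonic n - n := by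
  induction n with
  | zero => simp
  | succ n ih =>
    rw [Finset.sum_range_succ, ih, harmonic_succ]
    push_cast
    field_simp
    ring

lemma sum_Icc_sub {V : Type*} [AddCommMonoid V] (n : ℕ) (u : ℕ → V) :
    ∑ k ∈ Finset.Icc 1 n, u (n - k) = ∑ j ∈ Finset.range n, u j := by
  refine Finset.sum_bij' (fun k _ => n - k) (fun j _ => n - j) ?_ ?_ ?_ ?_ ?_ <;>
    · intro a ha
      first
        | rfl
        | (simp only [Finset.mem_Icc, Finset.mem_range] at *; omega)

/-- If every term of a sequence is within `β` of the mean of its predecessors, then its running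
variances are at most `β ^ 2`. -/
lemma running_variance (u : ℕ → ℝ) (β : ℝ)
    (h : ∀ n, 1 ≤ n → |u n - (∑ j ∈ Finset.range n, u j) / n| ≤ β) (n : ℕ) :
    ∑ j ∈ Finset.range n, (u j - (∑ j ∈ Finset.range n, u j) / n) ^ 2 ≤ n * β ^ 2 := by
  have hmin : ∀ (n : ℕ) (c : ℝ), 1 ≤ n →
      ∑ j ∈ Finset.range n, (u j - (∑ j ∈ Finset.range n, u j) / n) ^ 2
        ≤ ∑ j ∈ Finset.range n, (u j - c) ^ 2 := by
    intro n c hn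
    have hn' : (0 : ℝ) < n := by exact_mod_cast hn
    set m := (∑ j ∈ Finset.range n, u j) / n with hm
    have hm' : ∑ j ∈ Finset.range n, u j = n * m := by rw [hm]; field_simp
    have h1 : ∀ c : ℝ, ∑ j ∈ Finset.range n, (u j - c) ^ 2
        = ∑ j ∈ Finset.range n, u j ^ 2 - 2 * c * (n * m) + n * c ^ 2 := by
      intro c
      rw [← hm', Finset.mul_sum, ← Finset.sum_sub_distrib]
      have : (n : ℝ) * c ^ 2 = ∑ j ∈ Finset.range n, c ^ 2 := by simp
      rw [this, ← Finset.sum_add_distrib]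
      exact Finset.sum_congr rfl fun _ _ => by ring
    rw [h1, h1]
    nlinarith [mul_nonneg hn'.le (sq_nonneg (m - c))]
  induction n with
  | zero => simp
  | succ n ih =>
    rcases Nat.eq_zero_or_pos n with rfl | hn
    · simp [sq_nonneg]
    · refine (hmin (n + 1) ((∑ j ∈ Finset.range n, u j) / n) (by omega)).trans ?_
      rw [Finset.sum_range_succ]
      have h1 := sq_le_sq' (abs_le.1 (h n hn)).1 (abs_le.1 (h n hn)).2
      push_cast
      nlinarith

lemma Ex_sq_sub (n : ℕ) (U : Multiset ℕ → ℝ) (c : ℝ) :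
    Ex F n (fun A => (U A - c) ^ 2)
      = Ex F n (fun A => (U A - Ex F n U) ^ 2) + (Ex F n U - c) ^ 2 := by
  have h : ∀ c : ℝ, Ex F n (fun A => (U A - c) ^ 2)
      = Ex F n (fun A => U A ^ 2) - 2 * c * Ex F n U + c ^ 2 := by
    intro c
    have : (fun A => (U A - c) ^ 2) = fun A => (U A ^ 2 - (2 * c) * U A) + c ^ 2 := by
      funext A; ring
    rw [this, Ex_add, Ex_sub, Ex_mul_left, Ex_const]
  rw [h, h]; ring

/-- If adding `j` parts of size `d` changes `U` by at most `j * g d`, then the variance of `U`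
under the uniform measure in degree `n` is at most `4 κ` times the `n`-th harmonic number, where
`κ` bounds the mean squares of the increments. This plays the role of an Efron–Stein inequality:
the variance is accumulated along the chain of successive removals. -/
lemma var_bound (g : ℕ → ℝ) (κ : ℝ) (hκ0 : 0 < κ)
    (hκ : ∀ n : ℕ, ∑ k ∈ Finset.Icc 1 n, ∑ d ∈ k.divisors,
      wt F k d * (((k / d : ℕ) : ℝ) * g d) ^ 2 ≤ κ * n) (n : ℕ) :
    ∀ U : Multiset ℕ → ℝ,
      (∀ A j d, |U (A + Multiset.replicate j d) - U A| ≤ j * g d) →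
      Ex F n (fun A => (U A - Ex F n U) ^ 2) ≤ 4 * κ * harmonic n := by
  induction n using Nat.strong_induction_on with
  | _ n IH =>
  intro U hU
  rcases Nat.eq_zero_or_pos n with rfl | hn
  · simp [Ex_eq_zero_deg]
  have hn' : (0 : ℝ) < n := by exact_mod_cast hn
  set u : ℕ → ℝ := fun j => Ex F j U with hu
  -- the mean in degree `m` is within `√κ` of the average of the lower means
  have hdev : ∀ m, 1 ≤ m → |u m - (∑ j ∈ Finset.range m, u j) / m| ≤ √κ := by
    intro m hm
    have hm' : (0 : ℝ) < m := by exact_mod_cast hm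
    have hs : 0 < √κ := Real.sqrt_pos.2 hκ0
    have h1 : (m : ℝ) * u m - ∑ j ∈ Finset.range m, u j = ∑ k ∈ Finset.Icc 1 m,
        ∑ d ∈ k.divisors, wt F k d *
          (Ex F (m - k) (fun A => U (A + Multiset.replicate (k / d) d)) - u (m - k)) := by
      have h2 := Ex_rec (F := F) m U
      simp only [smul_eq_mul] at h2
      rw [hu]
      simp only
      rw [h2, ← sum_Icc_sub m (fun j => Ex F j U), ← Finset.sum_sub_distrib]
      refine Finset.sum_congr rfl fun k hk => ?_
      have h3 : Ex F (m - k) U = ∑ d ∈ k.divisors, wt F k d * Ex F (m - k) U := by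
        rw [← Finset.sum_mul, wt_sum (Finset.mem_Icc.1 hk).1, one_mul]
      rw [h3, ← Finset.sum_sub_distrib, ← h3]
      exact Finset.sum_congr rfl fun d _ => by ring
    have h4 : |(m : ℝ) * u m - ∑ j ∈ Finset.range m, u j| ≤ ∑ k ∈ Finset.Icc 1 m,
        ∑ d ∈ k.divisors, wt F k d *
          ((√κ)⁻¹ * (((k / d : ℕ) : ℝ) * g d) ^ 2 / 2 + √κ / 2) := by
      rw [h1]
      refine (Finset.abs_sum_le_sum_abs _ _).trans (Finset.sum_le_sum fun k _ => ?_)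
      refine (Finset.abs_sum_le_sum_abs _ _).trans (Finset.sum_le_sum fun d _ => ?_)
      rw [abs_mul, abs_of_nonneg (wt_nonneg k d)]
      refine mul_le_mul_of_nonneg_left ?_ (wt_nonneg k d)
      refine (abs_Ex_sub_le (m - k) (fun A => hU A (k / d) d)).trans ?_
      set y := ((k / d : ℕ) : ℝ) * g d
      have : (√κ)⁻¹ * y ^ 2 / 2 + √κ / 2 - y = (√κ)⁻¹ * (y - √κ) ^ 2 / 2 := by
        field_simp; ring
      have h5 : 0 ≤ (√κ)⁻¹ * (y - √κ) ^ 2 / 2 := by positivity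
      linarith
    have h6 : ∑ k ∈ Finset.Icc 1 m, ∑ d ∈ k.divisors, wt F k d *
          ((√κ)⁻¹ * (((k / d : ℕ) : ℝ) * g d) ^ 2 / 2 + √κ / 2) ≤ m * √κ := by
      have h7 : ∀ k ∈ Finset.Icc 1 m, ∑ d ∈ k.divisors, wt F k d *
          ((√κ)⁻¹ * (((k / d : ℕ) : ℝ) * g d) ^ 2 / 2 + √κ / 2) = (√κ)⁻¹ / 2 *
            (∑ d ∈ k.divisors, wt F k d * (((k / d : ℕ) : ℝ) * g d) ^ 2) + √κ / 2 := by
        intro k hk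
        have : √κ / 2 = ∑ d ∈ k.divisors, wt F k d * (√κ / 2) := by
          rw [← Finset.sum_mul, wt_sum (Finset.mem_Icc.1 hk).1, one_mul]
        rw [this, Finset.mul_sum, ← Finset.sum_add_distrib, ← this]
        exact Finset.sum_congr rfl fun d _ => by ring
      rw [Finset.sum_congr rfl h7, Finset.sum_add_distrib, ← Finset.mul_sum, Finset.sum_const,
        Nat.card_Icc, nsmul_eq_mul]
      have h8 := mul_le_mul_of_nonneg_left (hκ m) (show 0 ≤ (√κ)⁻¹ / 2 by positivity)
      have h9 : (√κ)⁻¹ / 2 * (κ * m) = m * √κ / 2 := by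
        have : κ = √κ * √κ := (Real.mul_self_sqrt hκ0.le).symm
        nth_rewrite 2 [this]
        field_simp
      have h10 : ((m + 1 - 1 : ℕ) : ℝ) = m := by simp
      rw [h10]
      linarith
    have h11 : u m - (∑ j ∈ Finset.range m, u j) / m
        = (m * u m - ∑ j ∈ Finset.range m, u j) / m := by field_simp
    rw [h11, abs_div, abs_of_pos hm', div_le_iff₀ hm']
    linarith [h4.trans h6]
  have hrun := running_variance u (√κ) hdev n
  rw [Real.sq_sqrt hκ0.le] at hrun
  set m := (∑ j ∈ Finset.range n, u j) / n with hm
  have h1 := Ex_sq_sub (F := F) n U m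
  have h2 : Ex F n (fun A => (U A - Ex F n U) ^ 2) ≤ Ex F n (fun A => (U A - m) ^ 2) := by
    rw [h1]; nlinarith [sq_nonneg (Ex F n U - m)]
  refine h2.trans ?_
  have h3 := Ex_rec (F := F) n (fun A => (U A - m) ^ 2)
  simp only [smul_eq_mul] at h3
  have h4 : ∀ k ∈ Finset.Icc 1 n, ∑ d ∈ k.divisors,
      wt F k d * Ex F (n - k) (fun A => (U (A + Multiset.replicate (k / d) d) - m) ^ 2)
      ≤ 4 * κ * harmonic (n - k) + 2 * (u (n - k) - m) ^ 2 +
        2 * ∑ d ∈ k.divisors, wt F k d * (((k / d : ℕ) : ℝ) * g d) ^ 2 := by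
    intro k hk
    have hk' := Finset.mem_Icc.1 hk
    have h5 : 4 * κ * harmonic (n - k) + 2 * (u (n - k) - m) ^ 2
        = ∑ d ∈ k.divisors, wt F k d * (4 * κ * harmonic (n - k) + 2 * (u (n - k) - m) ^ 2) := by
      rw [← Finset.sum_mul, wt_sum hk'.1, one_mul]
    rw [h5, Finset.mul_sum, ← Finset.sum_add_distrib]
    refine Finset.sum_le_sum fun d _ => ?_
    have h6 : Ex F (n - k) (fun A => (U (A + Multiset.replicate (k / d) d) - m) ^ 2)
        ≤ 4 * κ * harmonic (n - k) + 2 * (u (n - k) - m) ^ 2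
          + 2 * (((k / d : ℕ) : ℝ) * g d) ^ 2 := by
      rw [Ex_sq_sub (n - k) (fun A => U (A + Multiset.replicate (k / d) d)) m]
      have h7 := IH (n - k) (by omega) (fun A => U (A + Multiset.replicate (k / d) d)) (by
        intro A j d'
        have := hU (A + Multiset.replicate (k / d) d) j d'
        rwa [add_right_comm] at this)
      have h8 := abs_Ex_sub_le (F := F) (n - k) (fun A => hU A (k / d) d)
      set z := Ex F (n - k) (fun A => U (A + Multiset.replicate (k / d) d))
      have h9 := sq_le_sq' (abs_le.1 h8).1 (abs_le.1 h8).2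
      change (z - u (n - k)) ^ 2 ≤ _ at h9
      nlinarith [sq_nonneg ((z - u (n - k)) - (u (n - k) - m))]
    have := mul_le_mul_of_nonneg_left h6 (wt_nonneg (F := F) k d)
    linarith
  have h5 := Finset.sum_le_sum h4
  rw [← h3, Finset.sum_add_distrib, Finset.sum_add_distrib, ← Finset.mul_sum, ← Finset.mul_sum,
    ← Finset.mul_sum, sum_Icc_sub n (fun j => (harmonic j : ℝ)),
    sum_Icc_sub n (fun j => (u j - m) ^ 2), sum_harmonic] at h5
  have h6 := hκ n
  have h7 : (n : ℝ) * Ex F n (fun A => (U A - m) ^ 2) ≤ n * (4 * κ * harmonic n) := by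
    nlinarith
  exact le_of_mul_le_mul_left h7 hn'

end
end ETS

/-! ### The discrepancy between the product and the lcm of the degrees -/

namespace ETS

open ArithmeticFunction

/-- The number of parts of `A` that are divisible by `m`. -/
def Dm (m : ℕ) (A : Multiset ℕ) : ℕ := A.countP (m ∣ ·)

/-- The logarithm of the product of the parts of `A`. -/
noncomputable def logP (A : Multiset ℕ) : ℝ := (A.map (fun k : ℕ => Real.log k)).sum

/-- The logarithm of the least common multiple of the parts of `A`. -/
noncomputable def logO (A : Multiset ℕ) : ℝ := Real.log ((A.toFinset.lcm id : ℕ) : ℝ)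

/-- The part of `logP - logO` that comes from prime powers `m ∈ s`. -/
noncomputable def UU (s : Finset ℕ) (A : Multiset ℕ) : ℝ :=
  ∑ m ∈ s, vonMangoldt m * ((Dm m A - 1 : ℕ) : ℝ)

lemma log_eq_sum {k n : ℕ} (hk : 0 < k) (hkn : k ≤ n) :
    Real.log k = ∑ m ∈ Finset.Icc 1 n, if m ∣ k then vonMangoldt m else 0 := by
  rw [← vonMangoldt_sum, ← Finset.sum_filter]
  refine Finset.sum_congr ?_ fun _ _ => rfl
  ext m
  simp only [Nat.mem_divisors, Finset.mem_filter, Finset.mem_Icc]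
  constructor
  · rintro ⟨h1, h2⟩
    exact ⟨⟨Nat.pos_of_dvd_of_pos h1 hk, (Nat.le_of_dvd hk h1).trans hkn⟩, h1⟩
  · rintro ⟨-, h⟩
    exact ⟨h, hk.ne'⟩

lemma logP_eq {n : ℕ} (A : Multiset ℕ) (h0 : ∀ k ∈ A, 0 < k) (hn : ∀ k ∈ A, k ≤ n) :
    logP A = ∑ m ∈ Finset.Icc 1 n, vonMangoldt m * (Dm m A : ℝ) := by
  induction A using Multiset.induction_on with
  | empty => simp [logP, Dm]
  | cons a A ih =>
    have h1 := ih (fun k hk => h0 k (Multiset.mem_cons_of_mem hk))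
      (fun k hk => hn k (Multiset.mem_cons_of_mem hk))
    have h2 := log_eq_sum (h0 a (Multiset.mem_cons_self a A)) (hn a (Multiset.mem_cons_self a A))
    unfold logP at h1 ⊢
    rw [Multiset.map_cons, Multiset.sum_cons, h1, h2, ← Finset.sum_add_distrib]
    refine Finset.sum_congr rfl fun m _ => ?_
    unfold Dm
    rw [Multiset.countP_cons]
    split_ifs <;> push_cast <;> ring

lemma primePow_dvd_lcm {p a x y : ℕ} (hp : p.Prime) (h : p ^ a ∣ Nat.lcm x y) :
    p ^ a ∣ x ∨ p ^ a ∣ y := by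
  rcases Nat.eq_zero_or_pos x with rfl | hx
  · left; simp
  rcases Nat.eq_zero_or_pos y with rfl | hy
  · right; simp
  rw [hp.pow_dvd_iff_le_factorization hx.ne', hp.pow_dvd_iff_le_factorization hy.ne']
  rw [hp.pow_dvd_iff_le_factorization (Nat.lcm_ne_zero hx.ne' hy.ne'),
    Nat.factorization_lcm hx.ne' hy.ne'] at h
  simpa using h

lemma isPrimePow_dvd_lcm {m : ℕ} (hm : IsPrimePow m) (s : Finset ℕ) :
    m ∣ s.lcm id ↔ ∃ k ∈ s, m ∣ k := by
  constructor
  · intro h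
    obtain ⟨p, a, hp, ha, rfl⟩ := (isPrimePow_nat_iff m).1 hm
    induction s using Finset.induction_on with
    | empty =>
      simp only [Finset.lcm_empty, Nat.dvd_one] at h
      exact absurd h (Nat.one_lt_pow ha.ne' hp.one_lt).ne'
    | insert x s hx ih =>
      rw [Finset.lcm_insert] at h
      rcases primePow_dvd_lcm hp h with h | h
      · exact ⟨x, Finset.mem_insert_self _ _, h⟩
      · obtain ⟨k, hk, hk'⟩ := ih h
        exact ⟨k, Finset.mem_insert_of_mem hk, hk'⟩
  · rintro ⟨k, hk, h⟩
    exact h.trans (Finset.dvd_lcm hk)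

lemma logO_eq {n : ℕ} (A : Multiset ℕ) (h0 : ∀ k ∈ A, 0 < k) (hn : ∀ k ∈ A, k ≤ n) :
    logO A = ∑ m ∈ Finset.Icc 1 n, vonMangoldt m * (if Dm m A = 0 then 0 else 1) := by
  have hl : A.toFinset.lcm id ≠ 0 := by
    rw [Ne, Finset.lcm_eq_zero_iff]
    simp only [not_exists, not_and]
    intro x hx
    exact (h0 x (by simpa using hx)).ne'
  have hD : ∀ m, Dm m A = 0 ↔ ¬ ∃ k ∈ A.toFinset, m ∣ k := by
    intro m
    unfold Dm
    rw [Multiset.countP_eq_zero]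
    simp
  unfold logO
  rw [← vonMangoldt_sum]
  have h1 : ∀ m ∈ Finset.Icc 1 n, vonMangoldt m * (if Dm m A = 0 then (0 : ℝ) else 1)
      = if m ∣ A.toFinset.lcm id then vonMangoldt m else 0 := by
    intro m _
    by_cases hm : IsPrimePow m
    · have hiff := isPrimePow_dvd_lcm hm A.toFinset
      by_cases h : ∃ k ∈ A.toFinset, m ∣ k
      · rw [if_neg (fun h' => (hD m).1 h' h), if_pos (hiff.2 h), mul_one]
      · rw [if_pos ((hD m).2 h), if_neg (fun h' => h (hiff.1 h')), mul_zero]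
    · rw [vonMangoldt_eq_zero_iff.2 hm]; simp
  rw [Finset.sum_congr rfl h1, ← Finset.sum_filter]
  symm
  refine Finset.sum_subset ?_ ?_
  · intro m hm
    rw [Finset.mem_filter] at hm
    exact Nat.mem_divisors.2 ⟨hm.2, hl⟩
  · intro m hm hm'
    by_contra hne
    have hpp : IsPrimePow m := by
      by_contra h; exact hne (vonMangoldt_eq_zero_iff.2 h)
    have hdvd := (Nat.mem_divisors.1 hm).1
    obtain ⟨k, hk, hmk⟩ := (isPrimePow_dvd_lcm hpp _).1 hdvd
    have hk' := Multiset.mem_toFinset.1 hk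
    refine hm' (Finset.mem_filter.2 ⟨Finset.mem_Icc.2 ⟨hpp.pos, ?_⟩, hdvd⟩)
    exact (Nat.le_of_dvd (h0 k hk') hmk).trans (hn k hk')

lemma logP_sub_logO {n : ℕ} (A : Multiset ℕ) (h0 : ∀ k ∈ A, 0 < k) (hn : A.sum = n) :
    logP A - logO A = UU (Finset.Icc 1 n) A := by
  have hn' : ∀ k ∈ A, k ≤ n := fun k hk => hn ▸ Multiset.le_sum_of_mem hk
  rw [logP_eq A h0 hn', logO_eq A h0 hn', ← Finset.sum_sub_distrib]
  refine Finset.sum_congr rfl fun m _ => ?_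
  rw [← mul_sub]
  congr 1
  split_ifs with h
  · simp [h]
  · rw [Nat.cast_sub (by omega)]; simp

lemma Dm_add (m : ℕ) (A : Multiset ℕ) (j d : ℕ) :
    Dm m (A + Multiset.replicate j d) = Dm m A + if m ∣ d then j else 0 := by
  unfold Dm
  rw [Multiset.countP_add]
  congr 1
  induction j with
  | zero => simp
  | succ j ih =>
    rw [Multiset.replicate_succ, Multiset.countP_cons, ih]
    split_ifs <;> rfl

/-- The contribution of the prime powers `m ∈ s` to `log d`. -/
noncomputable def gY (s : Finset ℕ) (d : ℕ) : ℝ := ∑ m ∈ s, if m ∣ d then vonMangoldt m else 0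

lemma gY_nonneg (s : Finset ℕ) (d : ℕ) : 0 ≤ gY s d :=
  Finset.sum_nonneg fun m _ => by split_ifs <;> [exact vonMangoldt_nonneg; exact le_rfl]

lemma gY_le_log (s : Finset ℕ) {d : ℕ} (hd : 0 < d) : gY s d ≤ Real.log d := by
  unfold gY
  rw [← vonMangoldt_sum, ← Finset.sum_filter]
  refine Finset.sum_le_sum_of_subset_of_nonneg ?_ fun _ _ _ => vonMangoldt_nonneg
  intro m hm
  exact Nat.mem_divisors.2 ⟨(Finset.mem_filter.1 hm).2, hd.ne'⟩

lemma UU_lip (s : Finset ℕ) (A : Multiset ℕ) (j d : ℕ) :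
    |UU s (A + Multiset.replicate j d) - UU s A| ≤ j * gY s d := by
  unfold UU gY
  rw [← Finset.sum_sub_distrib, Finset.mul_sum]
  refine (Finset.abs_sum_le_sum_abs _ _).trans (Finset.sum_le_sum fun m _ => ?_)
  rw [← mul_sub, abs_mul, abs_of_nonneg vonMangoldt_nonneg, Dm_add]
  have h0 : 0 ≤ vonMangoldt m := vonMangoldt_nonneg
  split_ifs with h
  · rw [mul_comm (j : ℝ)]
    refine mul_le_mul_of_nonneg_left ?_ h0
    have h1 : Dm m A - 1 ≤ Dm m A + j - 1 := by omega
    have h2 : Dm m A + j - 1 ≤ (Dm m A - 1) + j := by omega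
    have h1' : ((Dm m A - 1 : ℕ) : ℝ) ≤ ((Dm m A + j - 1 : ℕ) : ℝ) := by exact_mod_cast h1
    have h2' : ((Dm m A + j - 1 : ℕ) : ℝ) ≤ ((Dm m A - 1 : ℕ) : ℝ) + j := by exact_mod_cast h2
    rw [abs_le]; constructor <;> linarith
  · simp

lemma card_mult (n m : ℕ) : ((Finset.Icc 1 n).filter (fun k => m ∣ k)).card = n / m := by
  have := Nat.Ioc_filter_dvd_card_eq_div n m
  rw [← this]
  rfl

lemma card_mult_le (n m : ℕ) :
    (((Finset.Icc 1 n).filter (fun k => m ∣ k)).card : ℝ) ≤ (n : ℝ) / m := by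
  rw [card_mult]; exact Nat.cast_div_le

lemma sum_vonMangoldt_div {Y : ℕ} (hY : 1 ≤ Y) :
    ∑ m ∈ Finset.Icc 1 Y, vonMangoldt m / m ≤ 2 * Real.log Y := by
  have hY' : (0 : ℝ) < Y := by exact_mod_cast hY
  have h1 : ∑ k ∈ Finset.Icc 1 Y, Real.log k = ∑ m ∈ Finset.Icc 1 Y,
      vonMangoldt m * ((Y / m : ℕ) : ℝ) := by
    have : ∀ k ∈ Finset.Icc 1 Y, Real.log k
        = ∑ m ∈ Finset.Icc 1 Y, if m ∣ k then vonMangoldt m else 0 := by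
      intro k hk
      exact log_eq_sum (Finset.mem_Icc.1 hk).1 (Finset.mem_Icc.1 hk).2
    rw [Finset.sum_congr rfl this, Finset.sum_comm]
    refine Finset.sum_congr rfl fun m _ => ?_
    rw [← Finset.sum_filter, Finset.sum_const, card_mult, nsmul_eq_mul, mul_comm]
  have h2 : ∑ k ∈ Finset.Icc 1 Y, Real.log k ≤ Y * Real.log Y := by
    calc _ ≤ ∑ k ∈ Finset.Icc 1 Y, Real.log Y := by
          refine Finset.sum_le_sum fun k hk => ?_
          have := Finset.mem_Icc.1 hk
          have h3 : (0 : ℝ) < k := by exact_mod_cast this.1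
          exact Real.log_le_log h3 (by exact_mod_cast this.2)
      _ = _ := by rw [Finset.sum_const, Nat.card_Icc, nsmul_eq_mul]; simp
  have h3 : (Y : ℝ) / 2 * ∑ m ∈ Finset.Icc 1 Y, vonMangoldt m / m
      ≤ ∑ m ∈ Finset.Icc 1 Y, vonMangoldt m * ((Y / m : ℕ) : ℝ) := by
    rw [Finset.mul_sum]
    refine Finset.sum_le_sum fun m hm => ?_
    have hm' := Finset.mem_Icc.1 hm
    have hm0 : (0 : ℝ) < m := by exact_mod_cast hm'.1
    have h4 : Y ≤ 2 * (m * (Y / m)) := by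
      have h5 := Nat.div_add_mod Y m
      have h6 := Nat.mod_lt Y hm'.1
      have h7 : 1 ≤ Y / m := Nat.div_pos hm'.2 hm'.1
      have h8 : m ≤ m * (Y / m) := Nat.le_mul_of_pos_right _ h7
      omega
    have h4' : (Y : ℝ) ≤ 2 * (m * ((Y / m : ℕ) : ℝ)) := by exact_mod_cast h4
    have h9 : (Y : ℝ) / 2 / m ≤ ((Y / m : ℕ) : ℝ) := by
      rw [div_le_iff₀ hm0]; linarith
    calc (Y : ℝ) / 2 * (vonMangoldt m / m) = vonMangoldt m * ((Y : ℝ) / 2 / m) := by ring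
      _ ≤ _ := mul_le_mul_of_nonneg_left h9 vonMangoldt_nonneg
  have h4 : (Y : ℝ) / 2 * ∑ m ∈ Finset.Icc 1 Y, vonMangoldt m / m ≤ Y / 2 * (2 * Real.log Y) := by
    linarith
  exact le_of_mul_le_mul_left h4 (by positivity)

/-- Two prime powers are coprime unless one divides the other. -/
lemma pair_bound {m m' : ℕ} :
    vonMangoldt m * vonMangoldt m' / (Nat.lcm m m' : ℝ) ≤
      vonMangoldt m / m * (vonMangoldt m' / m')
      + vonMangoldt m / m * (if m' ∣ m then vonMangoldt m' else 0)
      + vonMangoldt m' / m' * (if m ∣ m' then vonMangoldt m else 0) := by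
  have hΛ : ∀ m, 0 ≤ vonMangoldt m := fun m => vonMangoldt_nonneg
  have hi : ∀ a b, 0 ≤ if a ∣ b then vonMangoldt a else 0 := fun a b => by
    split_ifs <;> [exact hΛ a; exact le_rfl]
  have n1 : 0 ≤ vonMangoldt m / m * (vonMangoldt m' / m') :=
    mul_nonneg (div_nonneg (hΛ _) (Nat.cast_nonneg _)) (div_nonneg (hΛ _) (Nat.cast_nonneg _))
  have n2 : 0 ≤ vonMangoldt m / m * (if m' ∣ m then vonMangoldt m' else 0) :=
    mul_nonneg (div_nonneg (hΛ _) (Nat.cast_nonneg _)) (hi _ _)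
  have n3 : 0 ≤ vonMangoldt m' / m' * (if m ∣ m' then vonMangoldt m else 0) :=
    mul_nonneg (div_nonneg (hΛ _) (Nat.cast_nonneg _)) (hi _ _)
  by_cases hm : IsPrimePow m
  swap
  · rw [vonMangoldt_eq_zero_iff.2 hm]; simp
  by_cases hm' : IsPrimePow m'
  swap
  · rw [vonMangoldt_eq_zero_iff.2 hm']; simp
  by_cases h1 : m' ∣ m
  · rw [Nat.lcm_eq_left h1]
    rw [if_pos h1] at n2 ⊢
    have : vonMangoldt m * vonMangoldt m' / (m : ℝ) = vonMangoldt m / m * vonMangoldt m' := by ring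
    linarith
  by_cases h2 : m ∣ m'
  · rw [Nat.lcm_eq_right h2]
    rw [if_pos h2] at n3 ⊢
    have : vonMangoldt m * vonMangoldt m' / (m' : ℝ) = vonMangoldt m' / m' * vonMangoldt m := by
      ring
    linarith
  have hco : Nat.Coprime m m' := by
    obtain ⟨p, a, hp, ha, rfl⟩ := (isPrimePow_nat_iff m).1 hm
    obtain ⟨q, b, hq, hb, rfl⟩ := (isPrimePow_nat_iff m').1 hm'
    refine Nat.Coprime.pow _ _ ((Nat.coprime_primes hp hq).2 ?_)
    rintro rfl
    rcases le_total a b with h | h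
    · exact h2 (pow_dvd_pow _ h)
    · exact h1 (pow_dvd_pow _ h)
  rw [hco.lcm_eq_mul]
  push_cast
  have : vonMangoldt m * vonMangoldt m' / ((m : ℝ) * m')
      = vonMangoldt m / m * (vonMangoldt m' / m') := by
    rw [div_mul_div_comm]
  linarith

lemma sum_gY_sq {Y : ℕ} (hY : 1 ≤ Y) (n : ℕ) :
    ∑ k ∈ Finset.Icc 1 n, gY (Finset.Icc 1 Y) k ^ 2 ≤ n * (8 * Real.log Y ^ 2) := by
  have hlog : 0 ≤ Real.log Y := Real.log_natCast_nonneg Y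
  have hS := sum_vonMangoldt_div hY
  set S := ∑ m ∈ Finset.Icc 1 Y, vonMangoldt m / m with hSdef
  have hS0 : 0 ≤ S :=
    Finset.sum_nonneg fun m _ => div_nonneg vonMangoldt_nonneg (Nat.cast_nonneg _)
  have h1 : ∑ k ∈ Finset.Icc 1 n, gY (Finset.Icc 1 Y) k ^ 2
      ≤ ∑ m ∈ Finset.Icc 1 Y, ∑ m' ∈ Finset.Icc 1 Y,
        n * (vonMangoldt m * vonMangoldt m' / (Nat.lcm m m' : ℝ)) := by
    have : ∀ k ∈ Finset.Icc 1 n, gY (Finset.Icc 1 Y) k ^ 2 = ∑ m ∈ Finset.Icc 1 Y,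
        ∑ m' ∈ Finset.Icc 1 Y,
          if Nat.lcm m m' ∣ k then vonMangoldt m * vonMangoldt m' else 0 := by
      intro k _
      unfold gY
      rw [sq, Finset.sum_mul_sum]
      refine Finset.sum_congr rfl fun m _ => Finset.sum_congr rfl fun m' _ => ?_
      by_cases h : m ∣ k <;> by_cases h' : m' ∣ k <;> simp [Nat.lcm_dvd_iff, h, h']
    rw [Finset.sum_congr rfl this, Finset.sum_comm]
    refine Finset.sum_le_sum fun m _ => ?_
    rw [Finset.sum_comm]
    refine Finset.sum_le_sum fun m' _ => ?_
    rw [← Finset.sum_filter, Finset.sum_const, nsmul_eq_mul]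
    calc _ ≤ (n : ℝ) / (Nat.lcm m m' : ℕ) * (vonMangoldt m * vonMangoldt m') :=
          mul_le_mul_of_nonneg_right (card_mult_le n _)
            (mul_nonneg vonMangoldt_nonneg vonMangoldt_nonneg)
      _ = _ := by ring
  refine h1.trans ?_
  simp_rw [← Finset.mul_sum]
  refine mul_le_mul_of_nonneg_left ?_ (Nat.cast_nonneg n)
  have hg : ∀ m ∈ Finset.Icc 1 Y, vonMangoldt m / m * gY (Finset.Icc 1 Y) m
      ≤ vonMangoldt m / m * Real.log Y := by
    intro m hm
    have hm' := Finset.mem_Icc.1 hm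
    refine mul_le_mul_of_nonneg_left ?_ (div_nonneg vonMangoldt_nonneg (Nat.cast_nonneg _))
    refine (gY_le_log _ hm'.1).trans ?_
    exact Real.log_le_log (by exact_mod_cast hm'.1) (by exact_mod_cast hm'.2)
  have hg' := Finset.sum_le_sum hg
  rw [← Finset.sum_mul, ← hSdef] at hg'
  calc _ ≤ ∑ m ∈ Finset.Icc 1 Y, ∑ m' ∈ Finset.Icc 1 Y,
        (vonMangoldt m / m * (vonMangoldt m' / m')
      + vonMangoldt m / m * (if m' ∣ m then vonMangoldt m' else 0)
      + vonMangoldt m' / m' * (if m ∣ m' then vonMangoldt m else 0)) :=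
        Finset.sum_le_sum fun m _ => Finset.sum_le_sum fun m' _ => pair_bound
    _ = S * S + ∑ m ∈ Finset.Icc 1 Y, vonMangoldt m / m * gY (Finset.Icc 1 Y) m
        + ∑ m ∈ Finset.Icc 1 Y, vonMangoldt m / m * gY (Finset.Icc 1 Y) m := by
      simp_rw [Finset.sum_add_distrib]
      congr 1
      · congr 1
        · rw [hSdef, Finset.sum_mul_sum]
        · exact Finset.sum_congr rfl fun m _ => by rw [gY, Finset.mul_sum]
      · rw [Finset.sum_comm]
        exact Finset.sum_congr rfl fun m _ => by rw [gY, Finset.mul_sum]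
    _ ≤ 8 * Real.log Y ^ 2 := by nlinarith

end ETS

namespace ETS

open ArithmeticFunction

section
variable {F : Type} [Field F] [Fintype F]

lemma wt_upper {k : ℕ} (hk : 1 ≤ k) (φ : ℕ → ℝ) {b : ℝ} (hb0 : 0 ≤ b) (h0 : 0 ≤ φ k)
    (hb : ∀ d ∈ k.properDivisors, φ d ≤ b) :
    ∑ d ∈ k.divisors, wt F k d * φ d ≤ φ k + b * (C0 / k ^ 6) := by
  rw [← Nat.insert_self_properDivisors (by omega), Finset.sum_insert Nat.self_notMem_properDivisors]
  have h1 : wt F k k ≤ 1 := by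
    rw [← wt_sum (F := F) hk]
    exact Finset.single_le_sum (f := fun x => wt F k x) (fun x _ => wt_nonneg k x)
      (Nat.mem_divisors_self k (by omega))
  have h2 : ∑ d ∈ k.properDivisors, wt F k d * φ d ≤ b * (C0 / k ^ 6) := by
    calc _ ≤ ∑ d ∈ k.properDivisors, wt F k d * b :=
          Finset.sum_le_sum fun d hd => mul_le_mul_of_nonneg_left (hb d hd) (wt_nonneg k d)
      _ = b * ∑ d ∈ k.properDivisors, wt F k d := by rw [← Finset.sum_mul, mul_comm]
      _ ≤ _ := mul_le_mul_of_nonneg_left (wt_proper hk) hb0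
  have h3 := mul_le_mul_of_nonneg_right h1 h0
  linarith

lemma div_mul_log_le {k d : ℕ} (hd : d ∈ k.divisors) : ((k / d : ℕ) : ℝ) * Real.log d ≤ k := by
  have hd' := Nat.mem_divisors.1 hd
  have hd0 : 0 < d := Nat.pos_of_mem_divisors hd
  have h1 : Real.log d ≤ d := (Real.log_le_self (Nat.cast_nonneg d))
  calc ((k / d : ℕ) : ℝ) * Real.log d ≤ ((k / d : ℕ) : ℝ) * d :=
        mul_le_mul_of_nonneg_left h1 (Nat.cast_nonneg _)
    _ = k := by exact_mod_cast Nat.div_mul_cancel hd'.1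

lemma var_U {Y : ℕ} (hY : 1 ≤ Y) (n : ℕ) :
    Ex F n (fun A => (UU (Finset.Icc 1 Y) A - Ex F n (UU (Finset.Icc 1 Y))) ^ 2)
      ≤ 4 * (8 * Real.log Y ^ 2 + C0) * harmonic n := by
  have hC := one_le_C0
  refine var_bound (gY (Finset.Icc 1 Y)) _ (by positivity) ?_ n _ (UU_lip _)
  intro n
  have h1 : ∀ k ∈ Finset.Icc 1 n, ∑ d ∈ k.divisors,
      wt F k d * (((k / d : ℕ) : ℝ) * gY (Finset.Icc 1 Y) d) ^ 2
        ≤ gY (Finset.Icc 1 Y) k ^ 2 + C0 := by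
    intro k hk
    have hk1 := (Finset.mem_Icc.1 hk).1
    have hk0 : (1 : ℝ) ≤ k := by exact_mod_cast hk1
    have := wt_upper (F := F) hk1 (fun d => (((k / d : ℕ) : ℝ) * gY (Finset.Icc 1 Y) d) ^ 2)
      (b := (k : ℝ) ^ 2) (by positivity) (by positivity) ?_
    · refine this.trans ?_
      simp only [Nat.div_self hk1, Nat.cast_one, one_mul]
      have h2 : (k : ℝ) ^ 2 * (C0 / k ^ 6) ≤ C0 := by
        rw [mul_div_assoc', div_le_iff₀ (by positivity)]
        have : (k : ℝ) ^ 2 ≤ k ^ 6 := pow_le_pow_right₀ hk0 (by norm_num)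
        nlinarith
      linarith
    · intro d hd
      have hd' := Nat.properDivisors_subset_divisors hd
      refine pow_le_pow_left₀ (mul_nonneg (Nat.cast_nonneg _) (gY_nonneg _ _)) ?_ 2
      exact (mul_le_mul_of_nonneg_left (gY_le_log _ (Nat.pos_of_mem_divisors hd'))
        (Nat.cast_nonneg _)).trans (div_mul_log_le hd')
  refine (Finset.sum_le_sum h1).trans ?_
  rw [Finset.sum_add_distrib, Finset.sum_const, Nat.card_Icc, nsmul_eq_mul]
  have := sum_gY_sq hY n
  simp only [Nat.add_sub_cancel]
  linarith

/-- Comparison with the recursion solved by the harmonic numbers. -/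
lemma averaging (u : ℕ → ℝ) (β : ℝ) (N : ℕ)
    (h : ∀ n, 1 ≤ n → n ≤ N → n * u n ≤ ∑ j ∈ Finset.range n, u j + β * n) :
    ∀ n ≤ N, u n ≤ u 0 + β * harmonic n := by
  intro n
  induction n using Nat.strong_induction_on with
  | _ n ih =>
    intro hn
    rcases Nat.eq_zero_or_pos n with rfl | hn0
    · simp
    have h1 : ∑ j ∈ Finset.range n, u j ≤ ∑ j ∈ Finset.range n, (u 0 + β * (harmonic j : ℝ)) :=
      Finset.sum_le_sum fun j hj => ih j (Finset.mem_range.1 hj)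
        ((Finset.mem_range.1 hj).le.trans hn)
    rw [Finset.sum_add_distrib, ← Finset.mul_sum, sum_harmonic, Finset.sum_const,
      Finset.card_range, nsmul_eq_mul] at h1
    have h2 := h n hn0 hn
    have h3 : (0 : ℝ) < n := by exact_mod_cast hn0
    refine le_of_mul_le_mul_left ?_ h3
    linarith

lemma harmonic_mono_cast {a b : ℕ} (h : a ≤ b) : (harmonic a : ℝ) ≤ harmonic b := by
  have : harmonic a ≤ harmonic b := by
    unfold harmonic
    exact Finset.sum_le_sum_of_subset_of_nonneg (Finset.range_mono h) fun _ _ _ => by positivity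
  exact_mod_cast this

lemma one_le_harmonic {n : ℕ} (h : 1 ≤ n) : (1 : ℝ) ≤ harmonic n := by
  have := harmonic_mono_cast h
  simpa [harmonic_succ] using this

/-- The weighted size of the jumps of `Dm m`. -/
lemma jump_bound (m : ℕ) {k : ℕ} (hk : 1 ≤ k) (φ : ℕ → ℝ) (h0 : ∀ j, 0 ≤ φ j)
    (h1 : ∀ j ≤ k, φ j ≤ (k : ℝ) ^ 2) :
    ∑ d ∈ k.divisors, wt F k d * (if m ∣ d then φ (k / d) else 0)
      ≤ if m ∣ k then φ 1 + C0 / k ^ 4 else 0 := by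
  have hk0 : (1 : ℝ) ≤ k := by exact_mod_cast hk
  split_ifs with h
  · have := wt_upper (F := F) hk (fun d => if m ∣ d then φ (k / d) else 0)
      (b := (k : ℝ) ^ 2) (by positivity) (by split_ifs; exact h0 _) ?_
    · refine this.trans ?_
      simp only [Nat.div_self hk, if_pos h]
      have : (k : ℝ) ^ 2 * (C0 / k ^ 6) = C0 / k ^ 4 := by
        field_simp
      linarith
    · intro d _
      split_ifs
      · exact h1 _ (Nat.div_le_self _ _)
      · positivity
  · refine le_of_eq (Finset.sum_eq_zero fun d hd => ?_)
    rw [if_neg, mul_zero]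
    exact fun h' => h (h'.trans (Nat.mem_divisors.1 hd).1)

lemma sum_mult_le {n m : ℕ} {β : ℝ} (hβ : 0 ≤ β) :
    ∑ k ∈ Finset.Icc 1 n, (if m ∣ k then β else 0) ≤ β / m * n := by
  rw [← Finset.sum_filter, Finset.sum_const, nsmul_eq_mul]
  calc _ ≤ (n : ℝ) / m * β := mul_le_mul_of_nonneg_right (card_mult_le n m) hβ
    _ = _ := by ring

lemma Ex_Dm (m n : ℕ) :
    Ex F n (fun A => (Dm m A : ℝ)) ≤ (1 + C0) / m * harmonic n := by
  have hC := one_le_C0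
  have key := averaging (fun n => Ex F n (fun A => (Dm m A : ℝ))) ((1 + C0) / m) n ?_ n le_rfl
  · simpa [Ex_eq_zero_deg, Dm] using key
  intro n hn _
  have hrec := Ex_rec (F := F) n (fun A => (Dm m A : ℝ))
  simp only [smul_eq_mul] at hrec
  rw [hrec, ← sum_Icc_sub n (fun j => Ex F j (fun A => (Dm m A : ℝ)))]
  have h1 : ∀ k ∈ Finset.Icc 1 n, ∑ d ∈ k.divisors, wt F k d *
      Ex F (n - k) (fun A => (Dm m (A + Multiset.replicate (k / d) d) : ℝ))
      ≤ Ex F (n - k) (fun A => (Dm m A : ℝ)) + if m ∣ k then 1 + C0 else 0 := by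
    intro k hk
    have hk1 := (Finset.mem_Icc.1 hk).1
    have hk0 : (1 : ℝ) ≤ k := by exact_mod_cast hk1
    have h2 : ∀ d ∈ k.divisors, wt F k d *
        Ex F (n - k) (fun A => (Dm m (A + Multiset.replicate (k / d) d) : ℝ))
        = wt F k d * Ex F (n - k) (fun A => (Dm m A : ℝ))
          + wt F k d * (if m ∣ d then ((k / d : ℕ) : ℝ) else 0) := by
      intro d _
      rw [← mul_add]
      congr 1
      simp_rw [Dm_add]
      push_cast
      rw [Ex_add, Ex_const]
    rw [Finset.sum_congr rfl h2, Finset.sum_add_distrib, ← Finset.sum_mul, wt_sum hk1, one_mul]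
    have h3 := jump_bound (F := F) m hk1 (fun j => (j : ℝ)) (fun j => Nat.cast_nonneg j) (by
      intro j hj
      have : (j : ℝ) ≤ k := by exact_mod_cast hj
      nlinarith)
    have h4 : (if m ∣ k then ((1 : ℕ) : ℝ) + C0 / k ^ 4 else 0) ≤ if m ∣ k then 1 + C0 else 0 := by
      split_ifs
      · have : C0 / (k : ℝ) ^ 4 ≤ C0 := div_le_self (by linarith) (one_le_pow₀ hk0)
        simpa using this
      · exact le_rfl
    linarith
  refine (Finset.sum_le_sum h1).trans ?_
  rw [Finset.sum_add_distrib]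
  have := sum_mult_le (n := n) (m := m) (β := 1 + C0) (by linarith)
  linarith

lemma Ex_Dm_two (m N : ℕ) (hm : 1 ≤ m) (hN : 1 ≤ N) :
    Ex F N (fun A => (Dm m A : ℝ) * (Dm m A - 1))
      ≤ 3 * (1 + C0) ^ 2 * (harmonic N : ℝ) ^ 2 / m ^ 2 := by
  have hC := one_le_C0
  have hH := one_le_harmonic hN
  have hm0 : (1 : ℝ) ≤ m := by exact_mod_cast hm
  set β : ℝ := 2 * (1 + C0) * ((1 + C0) / m * harmonic N) + C0 / m with hβ
  have hβ0 : 0 ≤ β := by positivity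
  have key := averaging (fun n => Ex F n (fun A => (Dm m A : ℝ) * (Dm m A - 1)))
    (β / m) N ?_ N le_rfl
  · simp only [Ex_eq_zero_deg, Dm, Multiset.countP_zero, Nat.cast_zero, zero_mul, zero_add] at key
    refine key.trans ?_
    have e : β / m * harmonic N
        = (2 * (1 + C0) ^ 2 * (harmonic N : ℝ) ^ 2 + C0 * harmonic N) / m ^ 2 := by
      rw [hβ]; field_simp
    rw [e]
    refine div_le_div_of_nonneg_right ?_ (by positivity)
    have : C0 * (harmonic N : ℝ) ≤ (1 + C0) ^ 2 * (harmonic N : ℝ) ^ 2 :=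
      mul_le_mul (by nlinarith) (by nlinarith) (by linarith) (by positivity)
    linarith
  intro n hn hnN
  have hrec := Ex_rec (F := F) n (fun A => (Dm m A : ℝ) * (Dm m A - 1))
  simp only [smul_eq_mul] at hrec
  rw [hrec, ← sum_Icc_sub n (fun j => Ex F j (fun A => (Dm m A : ℝ) * (Dm m A - 1)))]
  have h1 : ∀ k ∈ Finset.Icc 1 n, ∑ d ∈ k.divisors, wt F k d *
      Ex F (n - k) (fun A => (Dm m (A + Multiset.replicate (k / d) d) : ℝ) *
        (Dm m (A + Multiset.replicate (k / d) d) - 1))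
      ≤ Ex F (n - k) (fun A => (Dm m A : ℝ) * (Dm m A - 1)) + if m ∣ k then β else 0 := by
    intro k hk
    have hk1 := (Finset.mem_Icc.1 hk).1
    have hk0 : (1 : ℝ) ≤ k := by exact_mod_cast hk1
    set e := Ex F (n - k) (fun A => (Dm m A : ℝ)) with he
    have heb : e ≤ (1 + C0) / m * harmonic N :=
      (Ex_Dm m (n - k)).trans (mul_le_mul_of_nonneg_left
        (harmonic_mono_cast (by omega)) (by positivity))
    have he0 : 0 ≤ e := by
      rw [he, ← Ex_const (F := F) (n - k) (0 : ℝ)]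
      exact Ex_mono _ fun A _ _ => Nat.cast_nonneg _
    have h2 : ∀ d ∈ k.divisors, wt F k d *
        Ex F (n - k) (fun A => (Dm m (A + Multiset.replicate (k / d) d) : ℝ) *
          (Dm m (A + Multiset.replicate (k / d) d) - 1))
        = wt F k d * Ex F (n - k) (fun A => (Dm m A : ℝ) * (Dm m A - 1))
          + (2 * e) * (wt F k d * (if m ∣ d then ((k / d : ℕ) : ℝ) else 0))
          + wt F k d * (if m ∣ d then ((k / d : ℕ) : ℝ) * (((k / d : ℕ) : ℝ) - 1) else 0) := by
      intro d _
      set x : ℝ := if m ∣ d then ((k / d : ℕ) : ℝ) else 0 with hx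
      have hx2 : (if m ∣ d then ((k / d : ℕ) : ℝ) * (((k / d : ℕ) : ℝ) - 1) else 0)
          = x * (x - 1) := by
        rw [hx]; split_ifs <;> simp
      have h3 : (fun A => (Dm m (A + Multiset.replicate (k / d) d) : ℝ) *
          (Dm m (A + Multiset.replicate (k / d) d) - 1))
          = fun A => ((Dm m A : ℝ) * (Dm m A - 1) + (2 * x) * (Dm m A : ℝ)) + x * (x - 1) := by
        funext A
        rw [Dm_add]
        push_cast
        rw [← hx]; ring
      rw [h3, Ex_add, Ex_add, Ex_const, Ex_mul_left, hx2, ← he]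
      ring
    rw [Finset.sum_congr rfl h2, Finset.sum_add_distrib, Finset.sum_add_distrib,
      ← Finset.sum_mul, wt_sum hk1, one_mul, ← Finset.mul_sum]
    have h3 := jump_bound (F := F) m hk1 (fun j => (j : ℝ)) (fun j => Nat.cast_nonneg j) (by
      intro j hj
      have : (j : ℝ) ≤ k := by exact_mod_cast hj
      nlinarith)
    have h4 := jump_bound (F := F) m hk1 (fun j => (j : ℝ) * ((j : ℝ) - 1)) (by
        intro j
        rcases Nat.eq_zero_or_pos j with rfl | hj
        · simp
        · have : (1 : ℝ) ≤ j := by exact_mod_cast hj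
          exact mul_nonneg (by linarith) (by linarith)) (by
      intro j hj
      have : (j : ℝ) ≤ k := by exact_mod_cast hj
      have h0 : (0 : ℝ) ≤ j := Nat.cast_nonneg j
      nlinarith)
    have h5 := mul_le_mul_of_nonneg_left h3 (by linarith : 0 ≤ 2 * e)
    have h6 : (2 * e) * (if m ∣ k then ((1 : ℕ) : ℝ) + C0 / k ^ 4 else 0) +
        (if m ∣ k then ((1 : ℕ) : ℝ) * (((1 : ℕ) : ℝ) - 1) + C0 / k ^ 4 else 0)
        ≤ if m ∣ k then β else 0 := by
      split_ifs with hmk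
      · have a1 : C0 / (k : ℝ) ^ 4 ≤ C0 := div_le_self (by linarith) (one_le_pow₀ hk0)
        have a2 : C0 / (k : ℝ) ^ 4 ≤ C0 / m := by
          refine div_le_div_of_nonneg_left (by linarith) (by linarith) ?_
          have : (m : ℝ) ≤ k := by exact_mod_cast Nat.le_of_dvd (by omega) hmk
          have : (k : ℝ) ≤ k ^ 4 := le_self_pow₀ hk0 (by norm_num)
          linarith
        have a3 : (2 * e) * (((1 : ℕ) : ℝ) + C0 / k ^ 4) ≤
            2 * (1 + C0) * ((1 + C0) / m * harmonic N) := by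
          push_cast
          have a4 : (2 * e) * (1 + C0 / k ^ 4) ≤ 2 * e * (1 + C0) :=
            mul_le_mul_of_nonneg_left (by linarith) (by linarith)
          have a5 : 2 * (1 + C0) * e ≤ 2 * (1 + C0) * ((1 + C0) / m * harmonic N) :=
            mul_le_mul_of_nonneg_left heb (by linarith)
          linarith
        push_cast at a3 ⊢
        linarith
      · simp
    linarith
  refine (Finset.sum_le_sum h1).trans ?_
  rw [Finset.sum_add_distrib]
  have := sum_mult_le (n := n) (m := m) hβ0
  linarith

lemma log_div_sq_le {m : ℕ} (hm : 2 ≤ m) :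
    Real.log m / m ^ 2 ≤ 4 * (1 / √((m - 1 : ℕ) : ℝ) - 1 / √(m : ℝ)) := by
  obtain ⟨k, rfl⟩ : ∃ k, m = k + 1 := ⟨m - 1, by omega⟩
  have hk : 1 ≤ k := by omega
  have hk0 : (1 : ℝ) ≤ k := by exact_mod_cast hk
  simp only [Nat.add_sub_cancel]
  push_cast
  set a := √(k : ℝ) with ha
  set b := √((k : ℝ) + 1) with hb
  have ha0 : 0 < a := Real.sqrt_pos.2 (by linarith)
  have hb0 : 0 < b := Real.sqrt_pos.2 (by linarith)
  have ha2 : a ^ 2 = k := Real.sq_sqrt (by linarith)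
  have hb2 : b ^ 2 = k + 1 := Real.sq_sqrt (by linarith)
  have hab : a ≤ b := Real.sqrt_le_sqrt (by linarith)
  have hlog : Real.log ((k : ℝ) + 1) ≤ 2 * b := by
    have : Real.log b ≤ b := Real.log_le_self hb0.le
    rw [← hb2, Real.log_pow]; push_cast; linarith
  calc Real.log ((k : ℝ) + 1) / ((k : ℝ) + 1) ^ 2 ≤ 2 * b / ((k : ℝ) + 1) ^ 2 :=
        div_le_div_of_nonneg_right hlog (by positivity)
    _ = 2 / b ^ 3 := by rw [← hb2]; field_simp
    _ ≤ 4 * (1 / a - 1 / b) := by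
      have h1 : 1 / a - 1 / b = (b - a) / (a * b) := by field_simp
      have h2 : (b - a) * (b + a) = 1 := by nlinarith
      have h3 : 1 / (2 * b) ≤ b - a := by
        rw [div_le_iff₀ (by positivity)]
        nlinarith
      rw [h1]
      have h4 : 2 / b ^ 3 = 4 * (1 / (2 * b) / (b * b)) := by field_simp; ring
      rw [h4]
      refine mul_le_mul_of_nonneg_left ?_ (by norm_num)
      exact div_le_div₀ (by linarith) h3 (by positivity)
        (mul_le_mul_of_nonneg_right hab hb0.le)

lemma sum_log_div_sq {Y n : ℕ} (hY : 1 ≤ Y) :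
    ∑ m ∈ Finset.Ioc Y n, Real.log m / m ^ 2 ≤ 4 / √(Y : ℝ) := by
  rcases le_total n Y with h | h
  · rw [Finset.Ioc_eq_empty (by omega)]; simp; positivity
  have : ∑ m ∈ Finset.Ioc Y n, Real.log m / m ^ 2 ≤ 4 * (1 / √(Y : ℝ) - 1 / √(n : ℝ)) := by
    induction n, h using Nat.le_induction with
    | base => simp
    | succ n hn ih =>
      rw [← Finset.insert_Ioc_right_eq_Ioc_add_one (by omega), Finset.sum_insert (by simp)]
      have := log_div_sq_le (m := n + 1) (by omega)
      simp only [Nat.add_sub_cancel] at this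
      linarith
  have h2 : 0 ≤ 1 / √(n : ℝ) := by positivity
  calc _ ≤ _ := this
    _ ≤ 4 * (1 / √(Y : ℝ)) := by linarith
    _ = _ := by ring

lemma UU_nonneg (s : Finset ℕ) (A : Multiset ℕ) : 0 ≤ UU s A :=
  Finset.sum_nonneg fun _ _ => mul_nonneg vonMangoldt_nonneg (Nat.cast_nonneg _)

lemma Ex_V {Y n : ℕ} (hY : 1 ≤ Y) (hn : 1 ≤ n) :
    Ex F n (UU (Finset.Ioc Y n)) ≤ 12 * (1 + C0) ^ 2 * (harmonic n : ℝ) ^ 2 / √(Y : ℝ) := by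
  have hC := one_le_C0
  have h1 : Ex F n (UU (Finset.Ioc Y n))
      = ∑ m ∈ Finset.Ioc Y n, vonMangoldt m * Ex F n (fun A => ((Dm m A - 1 : ℕ) : ℝ)) := by
    unfold UU
    rw [Ex_sum]
    exact Finset.sum_congr rfl fun m _ => Ex_mul_left _ _ _
  rw [h1]
  have h2 : ∀ m ∈ Finset.Ioc Y n, vonMangoldt m * Ex F n (fun A => ((Dm m A - 1 : ℕ) : ℝ))
      ≤ 3 * (1 + C0) ^ 2 * (harmonic n : ℝ) ^ 2 * (Real.log m / m ^ 2) := by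
    intro m hm
    have hm1 := Finset.mem_Ioc.1 hm
    have h3 : Ex F n (fun A => ((Dm m A - 1 : ℕ) : ℝ))
        ≤ 3 * (1 + C0) ^ 2 * (harmonic n : ℝ) ^ 2 / m ^ 2 := by
      refine le_trans (Ex_mono n fun A _ _ => ?_) (Ex_Dm_two m n (by omega) hn)
      rcases Nat.eq_zero_or_pos (Dm m A) with h | h
      · simp [h]
      · have : (1 : ℝ) ≤ Dm m A := by exact_mod_cast h
        rw [Nat.cast_sub h, Nat.cast_one]
        nlinarith
    calc _ ≤ Real.log m * (3 * (1 + C0) ^ 2 * (harmonic n : ℝ) ^ 2 / m ^ 2) :=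
          mul_le_mul vonMangoldt_le_log h3 (by
            rw [← Ex_const (F := F) n (0 : ℝ)]
            exact Ex_mono _ fun A _ _ => Nat.cast_nonneg _) (Real.log_natCast_nonneg m)
      _ = _ := by ring
  refine (Finset.sum_le_sum h2).trans ?_
  rw [← Finset.mul_sum]
  calc _ ≤ 3 * (1 + C0) ^ 2 * (harmonic n : ℝ) ^ 2 * (4 / √(Y : ℝ)) :=
        mul_le_mul_of_nonneg_left (sum_log_div_sq hY) (by positivity)
    _ = _ := by ring

end

end ETS

/-! ### A recursive sequence compared with its exponential approximation -/

namespace ETS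

/-- The data of the recursion satisfied by the characteristic functions: `M` is the sequence of
characteristic functions at a frequency of modulus `r`, driven by coefficients `1 + δ k`. -/
structure CharSys (C1 r : ℝ) (δ M : ℕ → ℂ) : Prop where
  one_le : 1 ≤ C1
  nonneg : 0 ≤ r
  zero : M 0 = 1
  recur : ∀ n : ℕ, (n : ℂ) * M n = ∑ k ∈ Finset.Icc 1 n, (1 + δ k) * M (n - k)
  bound : ∀ k : ℕ, 1 ≤ k → ‖δ k‖ ≤ r * (Real.log k + C1)
  diff : ∀ k n : ℕ, 1 ≤ k → k ≤ n → ‖δ k - δ n‖ ≤ r * (Real.log n - Real.log k + 2 * C1 / k)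

/-- The exponent of the approximation `exp (WW δ n)` of `M n`. -/
noncomputable def WW (δ : ℕ → ℂ) (n : ℕ) : ℂ := ∑ k ∈ Finset.Icc 1 n, δ k / k

lemma WW_succ (δ : ℕ → ℂ) (n : ℕ) : WW δ (n + 1) = WW δ n + δ (n + 1) / ((n + 1 : ℕ) : ℂ) := by
  unfold WW
  rw [Finset.sum_Icc_succ_top (by omega)]

lemma inv_succ_le_log (n : ℕ) (hn : 1 ≤ n) :
    1 / ((n : ℝ) + 1) ≤ Real.log ((n : ℝ) + 1) - Real.log n := by
  have h0 : (0 : ℝ) < n := by exact_mod_cast hn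
  rw [← Real.log_div (by positivity) h0.ne']
  have := Real.one_sub_inv_le_log_of_pos (x := ((n : ℝ) + 1) / n) (by positivity)
  refine le_trans (le_of_eq ?_) this
  field_simp
  ring

/-- The recursion in terms of the increments of `M`, summed by parts. -/
lemma CharSys.step {C1 r : ℝ} {δ M : ℕ → ℂ} (H : CharSys C1 r δ M) (n : ℕ) :
    ((n + 1 : ℕ) : ℂ) * (M (n + 1) - M n) = δ (n + 1) * M n
      + ∑ j ∈ Finset.range n, (δ (n - j) - δ (n + 1)) * (M (j + 1) - M j) := by
  have hrec : ∀ n : ℕ, (n : ℂ) * M n = ∑ j ∈ Finset.range n, (1 + δ (n - j)) * M j := by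
    intro n
    rw [H.recur, ← sum_Icc_sub n (fun j => (1 + δ (n - j)) * M j)]
    refine Finset.sum_congr rfl fun k hk => ?_
    have := Finset.mem_Icc.1 hk
    rw [show n - (n - k) = k by omega]
  have h1 := hrec (n + 1)
  have h2 := hrec n
  rw [Finset.sum_range_succ', H.zero] at h1
  simp only [Nat.add_sub_add_right, Nat.sub_zero] at h1
  have h3 : ∑ j ∈ Finset.range n, (M (j + 1) - M j) = M n - 1 := by
    rw [Finset.sum_range_sub, H.zero]
  simp only [sub_mul, Finset.sum_sub_distrib]
  simp only [mul_sub, Finset.sum_sub_distrib, ← Finset.mul_sum] at *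
  have h4 : ∑ j ∈ Finset.range n, (1 + δ (n - j)) * M (j + 1)
      = ∑ j ∈ Finset.range n, M (j + 1) + ∑ j ∈ Finset.range n, δ (n - j) * M (j + 1) := by
    rw [← Finset.sum_add_distrib]; exact Finset.sum_congr rfl fun _ _ => by ring
  have h5 : ∑ j ∈ Finset.range n, (1 + δ (n - j)) * M j
      = ∑ j ∈ Finset.range n, M j + ∑ j ∈ Finset.range n, δ (n - j) * M j := by
    rw [← Finset.sum_add_distrib]; exact Finset.sum_congr rfl fun _ _ => by ring
  rw [h4] at h1
  rw [h5] at h2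
  push_cast at *
  linear_combination h1 - h2 + (1 + δ (n + 1)) * h3

lemma log_ratio_le {a b : ℝ} (ha : 0 ≤ a) (hb : 0 < b) :
    Real.log (a + b) - Real.log b ≤ a / √((a + b) * b) := by
  rw [← Real.log_div (by linarith) hb.ne']
  have hx : (a + b) / b = (√((a + b) / b)) ^ 2 := by
    rw [Real.sq_sqrt (by positivity)]
  have hone : 1 ≤ √((a + b) / b) := by
    rw [Real.one_le_sqrt, le_div_iff₀ hb]; linarith
  set y := √((a + b) / b) with hy
  have hsq : √((a + b) * b) = b * y := by
    rw [hy, show (a + b) * b = b ^ 2 * ((a + b) / b) by field_simp,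
      Real.sqrt_mul (by positivity), Real.sqrt_sq hb.le]
  have hya : a = b * (y ^ 2 - 1) := by rw [← hx]; field_simp; ring
  rw [hsq, hx, Real.log_pow]
  have h1 : b * (y ^ 2 - 1) / (b * y) = y - y⁻¹ := by field_simp
  rw [show a / (b * y) = y - y⁻¹ by rw [← h1, ← hya]]
  -- `2 log y ≤ y - 1 / y` for `y ≥ 1`
  have h2 : 2 * Real.log y ≤ y - y⁻¹ := by
    have h3 := Real.sinh_log (x := y) (by linarith)
    have h4 := Real.self_le_sinh_iff.2 (Real.log_nonneg hone)
    linarith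
  exact_mod_cast h2

lemma sum_inv_sqrt (n : ℕ) : ∑ j ∈ Finset.range n, 1 / √((j : ℝ) + 1) ≤ 2 * √(n : ℝ) := by
  induction n with
  | zero => simp
  | succ n ih =>
    rw [Finset.sum_range_succ]
    push_cast
    have ha2 : √(n : ℝ) ^ 2 = n := Real.sq_sqrt (by positivity)
    have hb2 : √((n : ℝ) + 1) ^ 2 = n + 1 := Real.sq_sqrt (by positivity)
    have ha0 : 0 ≤ √(n : ℝ) := by positivity
    have hb0 : 0 < √((n : ℝ) + 1) := by positivity
    have : 1 / √((n : ℝ) + 1) ≤ 2 * √((n : ℝ) + 1) - 2 * √(n : ℝ) := by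
      rw [div_le_iff₀ hb0]
      nlinarith [sq_nonneg (√((n : ℝ) + 1) - √(n : ℝ))]
    linarith

lemma inv_sqrt_mul_le {a b : ℝ} (ha : 0 < a) (hb : 0 < b) :
    1 / √(a * b) ≤ (1 / √a + 1 / √b) / √(a + b) := by
  rw [Real.sqrt_mul ha.le, le_div_iff₀ (by positivity)]
  have h : √(a + b) ≤ √a + √b := by
    rw [Real.sqrt_le_left (by positivity)]
    nlinarith [Real.sq_sqrt ha.le, Real.sq_sqrt hb.le, Real.sqrt_nonneg a, Real.sqrt_nonneg b,
      mul_nonneg (Real.sqrt_nonneg a) (Real.sqrt_nonneg b)]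
  have e : 1 / √a + 1 / √b = 1 / (√a * √b) * (√a + √b) := by
    have := Real.sqrt_pos.2 ha
    have := Real.sqrt_pos.2 hb
    field_simp
    ring
  rw [e]
  exact mul_le_mul_of_nonneg_left h (by positivity)

lemma sum_beta (n : ℕ) :
    ∑ j ∈ Finset.range n, 1 / √(((j : ℝ) + 1) * ((n - j : ℕ) : ℝ)) ≤ 4 := by
  have h1 : ∀ j ∈ Finset.range n, 1 / √(((j : ℝ) + 1) * ((n - j : ℕ) : ℝ))
      ≤ (1 / √((j : ℝ) + 1) + 1 / √((n - j : ℕ) : ℝ)) * (1 / √((n : ℝ) + 1)) := by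
    intro j hj
    have hj' := Finset.mem_range.1 hj
    have h2 : (0 : ℝ) < ((n - j : ℕ) : ℝ) := by exact_mod_cast (by omega : 0 < n - j)
    have := inv_sqrt_mul_le (a := (j : ℝ) + 1) (b := ((n - j : ℕ) : ℝ)) (by positivity) h2
    rw [Nat.cast_sub hj'.le] at *
    rw [show (j : ℝ) + 1 + (n - j) = n + 1 by ring] at this
    rw [mul_one_div]; exact this
  refine (Finset.sum_le_sum h1).trans ?_
  rw [← Finset.sum_mul, Finset.sum_add_distrib]
  have h2 : ∑ j ∈ Finset.range n, 1 / √((n - j : ℕ) : ℝ)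
      = ∑ j ∈ Finset.range n, 1 / √((j : ℝ) + 1) := by
    rw [← Finset.sum_range_reflect]
    refine Finset.sum_congr rfl fun j hj => ?_
    have hj' := Finset.mem_range.1 hj
    rw [show n - (n - 1 - j) = j + 1 by omega]
    push_cast; rfl
  rw [h2, mul_one_div, div_le_iff₀ (by positivity)]
  have h3 := sum_inv_sqrt n
  have h4 : √(n : ℝ) ≤ √((n : ℝ) + 1) := Real.sqrt_le_sqrt (by linarith)
  linarith

lemma one_add_mul_exp_neg {z : ℂ} (hz : ‖z‖ ≤ 1) :
    ‖(1 + z) * Complex.exp (-z) - 1‖ ≤ 3 * ‖z‖ ^ 2 := by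
  have h1 := Complex.norm_exp_sub_one_sub_id_le (x := -z) (by simpa using hz)
  have e : (1 + z) * Complex.exp (-z) - 1
      = (Complex.exp (-z) - 1 - (-z)) + z * (Complex.exp (-z) - 1) := by ring
  have h2 := Complex.norm_exp_sub_one_le (x := -z) (by simpa using hz)
  rw [norm_neg] at h1 h2
  rw [e]
  refine (norm_add_le _ _).trans ?_
  rw [norm_mul]
  nlinarith [norm_nonneg z]

lemma sum_inv_Ioc {j n : ℕ} (hj : 1 ≤ j) (hjn : j ≤ n) :
    ∑ k ∈ Finset.Ioc j n, 1 / (k : ℝ) ≤ Real.log n - Real.log j := by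
  induction n, hjn using Nat.le_induction with
  | base => simp
  | succ n hn ih =>
    rw [← Finset.insert_Ioc_right_eq_Ioc_add_one (by omega), Finset.sum_insert (by simp)]
    have := inv_succ_le_log n (by omega)
    push_cast
    linarith

lemma sum_inv_le (n : ℕ) (hn : 1 ≤ n) : ∑ k ∈ Finset.Icc 1 n, 1 / (k : ℝ) ≤ 1 + Real.log n := by
  induction n, hn using Nat.le_induction with
  | base => simp
  | succ n hn ih =>
    rw [Finset.sum_Icc_succ_top (by omega)]
    have := inv_succ_le_log n hn
    push_cast
    linarith

lemma sum_inv_sq_le (n : ℕ) : ∑ k ∈ Finset.Icc 1 n, 1 / (k : ℝ) ^ 2 ≤ 2 := by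
  rcases Nat.eq_zero_or_pos n with rfl | hn
  · simp
  have : ∑ k ∈ Finset.Icc 1 n, 1 / (k : ℝ) ^ 2 ≤ 2 - 1 / (n : ℝ) := by
    induction n, hn using Nat.le_induction with
    | base => norm_num
    | succ n hn ih =>
      rw [Finset.sum_Icc_succ_top (by omega)]
      have h0 : (0 : ℝ) < n := by exact_mod_cast hn
      have : 1 / ((n + 1 : ℕ) : ℝ) ^ 2 ≤ 1 / (n : ℝ) - 1 / ((n + 1 : ℕ) : ℝ) := by
        push_cast
        rw [div_sub_div _ _ h0.ne' (by positivity), div_le_div_iff₀ (by positivity) (by positivity)]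
        nlinarith
      linarith
  have h2 : 0 ≤ 1 / (n : ℝ) := by positivity
  linarith

lemma WW_ratio {δ : ℕ → ℂ} {D : ℝ} {N : ℕ} (hD : D ≤ 1 / 2)
    (hδ : ∀ k, 1 ≤ k → k ≤ N → ‖δ k‖ ≤ D) {j n : ℕ} (hj : 1 ≤ j) (hjn : j ≤ n) (hn : n ≤ N) :
    ‖Complex.exp (WW δ j - WW δ n)‖ ≤ √(n : ℝ) / √(j : ℝ) := by
  have hj0 : (0 : ℝ) < j := by exact_mod_cast hj
  have hn0 : (0 : ℝ) < n := by exact_mod_cast (by omega : 0 < n)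
  have h1 : WW δ n - WW δ j = ∑ k ∈ Finset.Ioc j n, δ k / k := by
    clear hn hn0
    induction n, hjn using Nat.le_induction with
    | base => simp
    | succ n hn ih =>
      rw [← Finset.insert_Ioc_right_eq_Ioc_add_one (by omega), Finset.sum_insert (by simp), ← ih,
        WW_succ]
      ring
  have h2 : ‖WW δ j - WW δ n‖ ≤ 1 / 2 * (Real.log n - Real.log j) := by
    rw [norm_sub_rev, h1]
    calc _ ≤ ∑ k ∈ Finset.Ioc j n, ‖δ k / k‖ := norm_sum_le _ _
      _ ≤ ∑ k ∈ Finset.Ioc j n, 1 / 2 * (1 / (k : ℝ)) := by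
        refine Finset.sum_le_sum fun k hk => ?_
        have hk' := Finset.mem_Ioc.1 hk
        rw [norm_div, Complex.norm_natCast, div_eq_mul_one_div]
        exact mul_le_mul_of_nonneg_right
          ((hδ k (by omega) (by omega)).trans hD) (by positivity)
      _ ≤ _ := by
        rw [← Finset.mul_sum]
        exact mul_le_mul_of_nonneg_left (sum_inv_Ioc hj hjn) (by norm_num)
  rw [Complex.norm_exp, ← Real.sqrt_div hn0.le]
  refine (Real.exp_le_exp.2 ((Complex.re_le_norm _).trans h2)).trans (le_of_eq ?_)
  rw [Real.sqrt_eq_rpow, Real.rpow_def_of_pos (by positivity), Real.log_div hn0.ne' hj0.ne']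
  ring_nf

/-- The constant in the relative error of the exponential approximation. -/
noncomputable def Kc (C1 : ℝ) : ℝ := 32 * (1 + 3 * C1)

lemma CharSys.sum_err_le {C1 r : ℝ} {δ M : ℕ → ℂ} (H : CharSys C1 r δ M) {N : ℕ} {D : ℝ}
    (hDdef : D = r * (Real.log N + C1)) :
    ∀ n ≤ N, ∑ k ∈ Finset.Icc 1 n,
      (6 * D ^ 2 * (1 / (k : ℝ) ^ 2) + Kc C1 * r * D * (1 / (k : ℝ))) ≤ (12 + Kc C1) * D ^ 2 := by
  have hC1 := H.one_le
  have hr := H.nonneg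
  have hK : 128 ≤ Kc C1 := by unfold Kc; linarith
  have hlogN : 0 ≤ Real.log N := Real.log_natCast_nonneg N
  have hrD : r ≤ D := by rw [hDdef]; nlinarith
  have hD0 : 0 ≤ D := hr.trans hrD
  intro n hn
  rcases Nat.eq_zero_or_pos n with rfl | hn0
  · simp; nlinarith [sq_nonneg D]
  rw [Finset.sum_add_distrib, ← Finset.mul_sum, ← Finset.mul_sum]
  have h1 := sum_inv_sq_le n
  have h2 := sum_inv_le n hn0
  have h3 : Real.log n ≤ Real.log N :=
    Real.log_le_log (by exact_mod_cast hn0) (by exact_mod_cast hn)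
  have h4 : r * ∑ k ∈ Finset.Icc 1 n, 1 / (k : ℝ) ≤ D := by
    rw [hDdef]; exact mul_le_mul_of_nonneg_left (by linarith) hr
  have h5 := mul_le_mul_of_nonneg_left h4 (by positivity : 0 ≤ Kc C1 * D)
  have h6 := mul_le_mul_of_nonneg_left h1 (by positivity : 0 ≤ 6 * D ^ 2)
  nlinarith

set_option maxHeartbeats 1000000 in
/-- As long as `r * (log N + C1)` is small, `M n` is `exp (WW δ n)` up to a relative error of
quadratic order. The increments of `M` are controlled in the same induction. -/
lemma CharSys.main {C1 r : ℝ} {δ M : ℕ → ℂ} (H : CharSys C1 r δ M) {N : ℕ} {D : ℝ}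
    (hDdef : D = r * (Real.log N + C1)) (hD : D * (12 + Kc C1) ≤ 1) :
    ∀ n ≤ N, ‖M n * Complex.exp (-WW δ n) - 1‖
        ≤ ∑ k ∈ Finset.Icc 1 n, (6 * D ^ 2 * (1 / (k : ℝ) ^ 2) + Kc C1 * r * D * (1 / (k : ℝ))) ∧
      (1 ≤ n → ‖M n - M (n - 1)‖ ≤ 8 * D / n * ‖Complex.exp (WW δ n)‖) := by
  have hC1 := H.one_le
  have hr := H.nonneg
  have hK : 128 ≤ Kc C1 := by unfold Kc; linarith
  have hlogN : 0 ≤ Real.log N := Real.log_natCast_nonneg N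
  have hrD : r ≤ D := by rw [hDdef]; nlinarith
  have hD0 : 0 ≤ D := hr.trans hrD
  have hDhalf : D ≤ 1 / 2 := by nlinarith
  have hKD : Kc C1 * D ≤ 1 := by nlinarith
  have hδ : ∀ k, 1 ≤ k → k ≤ N → ‖δ k‖ ≤ D := by
    intro k hk hkN
    refine (H.bound k hk).trans ?_
    rw [hDdef]
    have : Real.log k ≤ Real.log N :=
      Real.log_le_log (by exact_mod_cast hk) (by exact_mod_cast hkN)
    exact mul_le_mul_of_nonneg_left (by linarith) hr
  have hS := H.sum_err_le hDdef
  intro n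
  induction n using Nat.strong_induction_on with
  | _ n ih =>
    intro hnN
    rcases Nat.eq_zero_or_pos n with rfl | hn0
    · simp [WW, H.zero]
    obtain ⟨n, rfl⟩ : ∃ k, n = k + 1 := ⟨n - 1, by omega⟩
    have hn1 : (0 : ℝ) < ((n + 1 : ℕ) : ℝ) := by positivity
    have hn1c : ((n + 1 : ℕ) : ℂ) ≠ 0 := by exact_mod_cast hn1.ne'
    -- the remainder in the one-step recursion
    set ρ : ℂ := (∑ j ∈ Finset.range n, (δ (n - j) - δ (n + 1)) * (M (j + 1) - M j))
      / ((n + 1 : ℕ) : ℂ) with hρdef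
    set z : ℂ := δ (n + 1) / ((n + 1 : ℕ) : ℂ) with hz
    have hstep : M (n + 1) - M n = z * M n + ρ := by
      have := H.step n
      rw [hz, hρdef]
      field_simp
      push_cast at *
      linear_combination this
    have hρ : ‖ρ‖ ≤ Kc C1 * r * D * (1 / ((n + 1 : ℕ) : ℝ)) * ‖Complex.exp (WW δ (n + 1))‖ := by
      have h1 : ∀ j ∈ Finset.range n, ‖(δ (n - j) - δ (n + 1)) * (M (j + 1) - M j)‖
          ≤ 8 * r * D * (1 + 3 * C1) * ‖Complex.exp (WW δ (n + 1))‖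
            * (1 / √(((j : ℝ) + 1) * ((n - j : ℕ) : ℝ))) := by
        intro j hj
        have hj' := Finset.mem_range.1 hj
        have ha0 : (1 : ℝ) ≤ (j : ℝ) + 1 := by linarith [(Nat.cast_nonneg j : (0 : ℝ) ≤ j)]
        have hb0 : (1 : ℝ) ≤ ((n - j : ℕ) : ℝ) := by exact_mod_cast (by omega : 1 ≤ n - j)
        have hab : ((n + 1 : ℕ) : ℝ) = ((j : ℝ) + 1) + ((n - j : ℕ) : ℝ) := by
          rw [Nat.cast_sub hj'.le]; push_cast; ring
        have hdiff := H.diff (n - j) (n + 1) (by omega) (by omega)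
        have hh := (ih (j + 1) (by omega) (by omega)).2 (by omega)
        simp only [Nat.add_sub_cancel] at hh
        have hE := WW_ratio hDhalf hδ (j := j + 1) (n := n + 1) (by omega) (by omega) hnN
        rw [Complex.exp_sub, norm_div, div_le_iff₀ (by simp)] at hE
        have hlr := log_ratio_le (a := (j : ℝ) + 1) (b := ((n - j : ℕ) : ℝ)) (by linarith)
          (by linarith)
        rw [← hab] at hlr
        have hcast : ((j + 1 : ℕ) : ℝ) = (j : ℝ) + 1 := by push_cast; ring
        rw [hcast] at hh hE
        set a : ℝ := (j : ℝ) + 1 with ha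
        set b : ℝ := ((n - j : ℕ) : ℝ) with hb
        set m : ℝ := ((n + 1 : ℕ) : ℝ) with hm
        set e := ‖Complex.exp (WW δ (n + 1))‖ with he
        have he0 : 0 ≤ e := norm_nonneg _
        have hsa : 0 < √a := Real.sqrt_pos.2 (by linarith)
        have hsb : 0 < √b := Real.sqrt_pos.2 (by linarith)
        have hsm : 0 < √m := Real.sqrt_pos.2 (by linarith)
        have hsa2 : √a ^ 2 = a := Real.sq_sqrt (by linarith)
        have hsb2 : √b ^ 2 = b := Real.sq_sqrt (by linarith)
        rw [norm_mul]
        have hM : ‖M (j + 1) - M j‖ ≤ 8 * D / a * (√m / √a * e) :=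
          hh.trans (mul_le_mul_of_nonneg_left hE (by positivity))
        have hδd : ‖δ (n - j) - δ (n + 1)‖ ≤ r * (a / (√m * √b) + 2 * C1 / b) := by
          refine hdiff.trans (mul_le_mul_of_nonneg_left ?_ hr)
          rw [Real.sqrt_mul (by linarith)] at hlr
          linarith
        refine (mul_le_mul hδd hM (norm_nonneg _) (by positivity)).trans ?_
        have hmab : √m ≤ 3 / 2 * (a * √b) := by
          rw [Real.sqrt_le_left (by positivity), mul_pow, mul_pow, hsb2, hab]
          nlinarith [mul_nonneg (sub_nonneg.2 ha0) (sub_nonneg.2 hb0),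
            mul_nonneg (mul_nonneg (sub_nonneg.2 ha0) (by linarith : 0 ≤ a))
              (by linarith : 0 ≤ b)]
        have e1 : r * (a / (√m * √b) + 2 * C1 / b) * (8 * D / a * (√m / √a * e))
            = 8 * r * D * e * (1 / (√a * √b)) * (1 + 2 * C1 * (√m / (a * √b))) := by
          rw [show 2 * C1 / b = 2 * C1 / √b ^ 2 by rw [hsb2]]
          field_simp
        rw [e1, Real.sqrt_mul (by linarith)]
        have h7 : √m / (a * √b) ≤ 3 / 2 := by rw [div_le_iff₀ (by positivity)]; exact hmab
        have h8 : 1 + 2 * C1 * (√m / (a * √b)) ≤ 1 + 3 * C1 := by nlinarith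
        calc _ ≤ 8 * r * D * e * (1 / (√a * √b)) * (1 + 3 * C1) :=
              mul_le_mul_of_nonneg_left h8 (by positivity)
          _ = _ := by ring
      rw [hρdef, norm_div, Complex.norm_natCast, div_le_iff₀ hn1]
      refine (norm_sum_le _ _).trans ((Finset.sum_le_sum h1).trans ?_)
      rw [← Finset.mul_sum]
      refine (mul_le_mul_of_nonneg_left (sum_beta n) (by positivity)).trans (le_of_eq ?_)
      unfold Kc
      field_simp
      ring
    have hR := (ih n (by omega) (by omega)).1
    have hR1 : ‖M n * Complex.exp (-WW δ n)‖ ≤ 2 := by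
      have h1 := hS n (by omega)
      have h2 : (12 + Kc C1) * D ^ 2 ≤ 1 := by nlinarith
      have h3 := norm_sub_norm_le (M n * Complex.exp (-WW δ n)) 1
      rw [norm_one] at h3
      linarith
    have hzn : ‖z‖ ≤ D * (1 / ((n + 1 : ℕ) : ℝ)) := by
      rw [hz, norm_div, Complex.norm_natCast, div_eq_mul_one_div]
      exact mul_le_mul_of_nonneg_right (hδ _ (by omega) hnN) (by positivity)
    have hz1 : ‖z‖ ≤ 1 / 2 := by
      refine hzn.trans ?_
      have : 1 / ((n + 1 : ℕ) : ℝ) ≤ 1 := by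
        rw [div_le_one hn1]; exact_mod_cast (by omega : 1 ≤ n + 1)
      have h0 : 0 ≤ 1 / ((n + 1 : ℕ) : ℝ) := by positivity
      nlinarith
    have hWs : WW δ (n + 1) = WW δ n + z := WW_succ δ n
    constructor
    · rw [Finset.sum_Icc_succ_top (by omega)]
      have e1 : M (n + 1) * Complex.exp (-WW δ (n + 1)) - 1
          = (M n * Complex.exp (-WW δ n) - 1)
            + M n * Complex.exp (-WW δ n) * ((1 + z) * Complex.exp (-z) - 1)
            + ρ * Complex.exp (-WW δ (n + 1)) := by
        have : M (n + 1) = M n * (1 + z) + ρ := by linear_combination hstep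
        rw [this, hWs, neg_add, Complex.exp_add]
        ring
      rw [e1]
      have h1 : ‖M n * Complex.exp (-WW δ n) * ((1 + z) * Complex.exp (-z) - 1)‖
          ≤ 6 * D ^ 2 * (1 / ((n + 1 : ℕ) : ℝ) ^ 2) := by
        rw [norm_mul]
        have h2 := one_add_mul_exp_neg (z := z) (by linarith)
        have h3 : ‖z‖ ^ 2 ≤ D ^ 2 * (1 / ((n + 1 : ℕ) : ℝ) ^ 2) := by
          refine (pow_le_pow_left₀ (norm_nonneg _) hzn 2).trans (le_of_eq ?_)
          rw [mul_pow, div_pow, one_pow]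
        calc _ ≤ 2 * (3 * ‖z‖ ^ 2) :=
              mul_le_mul hR1 h2 (norm_nonneg _) (by norm_num)
          _ ≤ _ := by linarith
      have h2 : ‖ρ * Complex.exp (-WW δ (n + 1))‖ ≤ Kc C1 * r * D * (1 / ((n + 1 : ℕ) : ℝ)) := by
        rw [norm_mul]
        calc _ ≤ Kc C1 * r * D * (1 / ((n + 1 : ℕ) : ℝ)) * ‖Complex.exp (WW δ (n + 1))‖
              * ‖Complex.exp (-WW δ (n + 1))‖ := mul_le_mul_of_nonneg_right hρ (norm_nonneg _)
          _ = _ := by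
            rw [mul_assoc, ← norm_mul, ← Complex.exp_add, add_neg_cancel, Complex.exp_zero,
              norm_one, mul_one]
      refine (norm_add_le _ _).trans ?_
      have := norm_add_le (M n * Complex.exp (-WW δ n) - 1)
        (M n * Complex.exp (-WW δ n) * ((1 + z) * Complex.exp (-z) - 1))
      linarith
    · intro _
      rw [Nat.add_sub_cancel, hstep]
      set e := ‖Complex.exp (WW δ (n + 1))‖ with he
      have he0 : 0 ≤ e := norm_nonneg _
      have h1 : ‖z * M n‖ ≤ D * (1 / ((n + 1 : ℕ) : ℝ)) * (2 * 2 * e) := by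
        have e2 : M n = (M n * Complex.exp (-WW δ n)) * Complex.exp (-z)
            * Complex.exp (WW δ (n + 1)) := by
          rw [hWs, mul_assoc, ← Complex.exp_add, mul_assoc, ← Complex.exp_add]
          simp
        have h3 : ‖Complex.exp (-z)‖ ≤ 2 := by
          have := Complex.norm_exp_sub_one_le (x := -z) (by rw [norm_neg]; linarith)
          have h4 := norm_sub_norm_le (Complex.exp (-z)) 1
          rw [norm_neg] at this
          rw [norm_one] at h4
          linarith
        rw [norm_mul]
        refine mul_le_mul hzn ?_ (norm_nonneg _) (by positivity)
        rw [e2, norm_mul, norm_mul]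
        exact mul_le_mul_of_nonneg_right
          (mul_le_mul hR1 h3 (norm_nonneg _) (by norm_num)) he0
      have h2 : Kc C1 * r * D * (1 / ((n + 1 : ℕ) : ℝ)) * e
          ≤ 1 * D * (1 / ((n + 1 : ℕ) : ℝ)) * e := by
        have : Kc C1 * r ≤ 1 := (mul_le_mul_of_nonneg_left hrD (by linarith)).trans hKD
        gcongr
      refine (norm_add_le _ _).trans ?_
      have h3 : 0 ≤ D * (1 / ((n + 1 : ℕ) : ℝ)) * e := by positivity
      have e3 : 8 * D / ((n + 1 : ℕ) : ℝ) * e = 8 * (D * (1 / ((n + 1 : ℕ) : ℝ)) * e) := by ring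
      rw [e3]
      linarith

lemma CharSys.approx {C1 r : ℝ} {δ M : ℕ → ℂ} (H : CharSys C1 r δ M) {n : ℕ} {D : ℝ}
    (hDdef : D = r * (Real.log n + C1)) (hD : D * (12 + Kc C1) ≤ 1) :
    ‖M n - Complex.exp (WW δ n)‖ ≤ (12 + Kc C1) * D ^ 2 * ‖Complex.exp (WW δ n)‖ := by
  have h := (H.main hDdef hD n le_rfl).1.trans (H.sum_err_le hDdef n le_rfl)
  have e : M n - Complex.exp (WW δ n)
      = (M n * Complex.exp (-WW δ n) - 1) * Complex.exp (WW δ n) := by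
    rw [sub_mul, mul_assoc, ← Complex.exp_add]; simp
  rw [e, norm_mul]
  exact mul_le_mul_of_nonneg_right h (norm_nonneg _)

/-- If the averages of `‖M j‖` over `j < m` are at most `A`, then all later terms are. -/
lemma later_le {M : ℕ → ℂ} (hM : ∀ n : ℕ, (n : ℝ) * ‖M n‖ ≤ ∑ j ∈ Finset.range n, ‖M j‖)
    {m : ℕ} (hm : 1 ≤ m) {A : ℝ} (hA : ∑ j ∈ Finset.range m, ‖M j‖ ≤ A * m) :
    ∀ n, m ≤ n → ‖M n‖ ≤ A := by
  have key : ∀ n, m ≤ n → ∑ j ∈ Finset.range n, ‖M j‖ ≤ A * n := by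
    intro n hn
    induction n, hn using Nat.le_induction with
    | base => exact hA
    | succ n hn ih =>
      have hn0 : (0 : ℝ) < n := by exact_mod_cast (by omega : 0 < n)
      have : ‖M n‖ ≤ A := by
        have := (hM n).trans ih
        nlinarith
      rw [Finset.sum_range_succ]; push_cast; linarith
  intro n hn
  have hn0 : (0 : ℝ) < n := by exact_mod_cast (by omega : 0 < n)
  have := (hM n).trans (key n hn)
  nlinarith

end ETS

/-! ### The characteristic function of the log-product of the degrees -/

namespace ETS

section
variable {F : Type} [Field F] [Fintype F]

/-- The characteristic function of `logP` on monic polynomials of degree `n`. -/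
noncomputable def Mf (F : Type) [Field F] [Fintype F] (s : ℝ) (n : ℕ) : ℂ :=
  Ex F n (fun A => Complex.exp (((s * logP A : ℝ) : ℂ) * Complex.I))

/-- The contribution `(k / d) log d` to `logP` of a `k / d`-fold factor of degree `d`. -/
noncomputable def xx (k d : ℕ) : ℝ := ((k / d : ℕ) : ℝ) * Real.log d

/-- The coefficients of the recursion for `Mf`, minus `1`. -/
noncomputable def dl (F : Type) [Field F] [Fintype F] (s : ℝ) (k : ℕ) : ℂ :=
  ∑ d ∈ k.divisors, wt F k d • Complex.exp (((s * xx k d : ℝ) : ℂ) * Complex.I) - 1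

/-- The moments of the jump sizes. -/
noncomputable def cm (F : Type) [Field F] [Fintype F] (r k : ℕ) : ℝ :=
  ∑ d ∈ k.divisors, wt F k d * xx k d ^ r

lemma xx_nonneg (k d : ℕ) : 0 ≤ xx k d :=
  mul_nonneg (Nat.cast_nonneg _) (Real.log_natCast_nonneg d)

lemma xx_le {k d : ℕ} (hd : d ∈ k.divisors) : xx k d ≤ k := div_mul_log_le hd

lemma xx_self {k : ℕ} (hk : 1 ≤ k) : xx k k = Real.log k := by
  unfold xx; rw [Nat.div_self hk]; simp

lemma logP_add (A : Multiset ℕ) (j d : ℕ) :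
    logP (A + Multiset.replicate j d) = logP A + j * Real.log d := by
  unfold logP
  rw [Multiset.map_add, Multiset.sum_add, Multiset.map_replicate, Multiset.sum_replicate,
    nsmul_eq_mul]

lemma Mf_rec (s : ℝ) (n : ℕ) :
    (n : ℂ) * Mf F s n = ∑ k ∈ Finset.Icc 1 n, (1 + dl F s k) * Mf F s (n - k) := by
  have h := Ex_rec (F := F) n (fun A => Complex.exp (((s * logP A : ℝ) : ℂ) * Complex.I))
  have e : (n : ℂ) * Mf F s n = (n : ℝ) • Mf F s n := by
    rw [Complex.real_smul]; push_cast; rfl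
  rw [e]
  unfold Mf at *
  rw [h]
  refine Finset.sum_congr rfl fun k _ => ?_
  unfold dl
  rw [add_sub_cancel, Finset.sum_mul]
  refine Finset.sum_congr rfl fun d _ => ?_
  rw [smul_mul_assoc, ← Ex_mul_left_complex]
  congr 2
  funext A
  rw [logP_add, ← Complex.exp_add]
  congr 1
  unfold xx
  push_cast
  ring

lemma norm_exp_I (x : ℝ) : ‖Complex.exp ((x : ℂ) * Complex.I)‖ = 1 := Complex.norm_exp_ofReal_mul_I x

lemma norm_exp_sub_exp (x y : ℝ) :
    ‖Complex.exp ((x : ℂ) * Complex.I) - Complex.exp ((y : ℂ) * Complex.I)‖ ≤ |x - y| := by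
  have e : Complex.exp ((x : ℂ) * Complex.I) - Complex.exp ((y : ℂ) * Complex.I)
      = Complex.exp ((y : ℂ) * Complex.I) * (Complex.exp (Complex.I * ((x - y : ℝ) : ℂ)) - 1) := by
    rw [mul_sub, ← Complex.exp_add, mul_one]
    congr 2
    push_cast; ring
  rw [e, norm_mul, norm_exp_I, one_mul]
  exact Real.norm_exp_I_mul_ofReal_sub_one_le

lemma norm_one_add_dl {s : ℝ} {k : ℕ} (hk : 1 ≤ k) : ‖1 + dl F s k‖ ≤ 1 := by
  unfold dl
  rw [add_sub_cancel, ← wt_sum (F := F) hk]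
  refine (norm_sum_le _ _).trans (Finset.sum_le_sum fun d _ => ?_)
  rw [norm_smul, norm_exp_I, mul_one, Real.norm_of_nonneg (wt_nonneg k d)]

lemma dl_approx {s : ℝ} {k : ℕ} (hk : 1 ≤ k) :
    ‖dl F s k - (Complex.exp (((s * Real.log k : ℝ) : ℂ) * Complex.I) - 1)‖
      ≤ |s| * (2 * C0 / k) := by
  have hC := one_le_C0
  have hk0 : (1 : ℝ) ≤ k := by exact_mod_cast hk
  have h := wt_avg (F := F) hk (fun d => Complex.exp (((s * xx k d : ℝ) : ℂ) * Complex.I))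
    (b := |s| * (2 * k)) (by positivity) ?_
  · rw [xx_self hk] at h
    unfold dl
    rw [sub_sub_sub_cancel_right]
    refine h.trans ?_
    rw [mul_assoc]
    refine mul_le_mul_of_nonneg_left ?_ (abs_nonneg s)
    rw [mul_div_assoc', div_le_div_iff₀ (by positivity) (by positivity)]
    have h2 : (k : ℝ) ^ 2 ≤ k ^ 6 := pow_le_pow_right₀ hk0 (by norm_num)
    nlinarith
  · intro d hd
    have hd' := Nat.properDivisors_subset_divisors hd
    refine (norm_exp_sub_exp _ _).trans ?_
    rw [← mul_sub, abs_mul]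
    refine mul_le_mul_of_nonneg_left ?_ (abs_nonneg s)
    have h1 := xx_nonneg k d
    have h2 := xx_le hd'
    have h3 := xx_nonneg k k
    have h4 := xx_le (Nat.mem_divisors_self k (by omega))
    rw [abs_le]; constructor <;> linarith

lemma charSys (s : ℝ) : CharSys (2 * C0) |s| (dl F s) (Mf F s) where
  one_le := by linarith [one_le_C0]
  nonneg := abs_nonneg s
  zero := by unfold Mf; rw [Ex_eq_zero_deg]; simp [logP]
  recur := Mf_rec s
  bound := by
    intro k hk
    have hC := one_le_C0
    have hk0 : (1 : ℝ) ≤ k := by exact_mod_cast hk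
    have h1 := dl_approx (F := F) (s := s) hk
    have h2 := norm_exp_sub_exp (s * Real.log k) 0
    simp only [Complex.ofReal_zero, zero_mul, Complex.exp_zero, sub_zero] at h2
    rw [abs_mul, abs_of_nonneg (Real.log_natCast_nonneg k)] at h2
    have h3 : |s| * (2 * C0 / k) ≤ |s| * (2 * C0) :=
      mul_le_mul_of_nonneg_left (div_le_self (by linarith) hk0) (abs_nonneg s)
    have h4 := norm_le_norm_sub_add (dl F s k)
      (Complex.exp (((s * Real.log k : ℝ) : ℂ) * Complex.I) - 1)
    linarith
  diff := by
    intro k n hk hkn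
    have hC := one_le_C0
    have hk0 : (1 : ℝ) ≤ k := by exact_mod_cast hk
    have hn0 : (k : ℝ) ≤ n := by exact_mod_cast hkn
    have h1 := dl_approx (F := F) (s := s) hk
    have h1' := dl_approx (F := F) (s := s) (hk.trans hkn)
    have h2 := norm_exp_sub_exp (s * Real.log k) (s * Real.log n)
    have hlog : Real.log k ≤ Real.log n := Real.log_le_log (by linarith) hn0
    rw [← mul_sub, abs_mul, abs_sub_comm, abs_of_nonneg (sub_nonneg.2 hlog)] at h2
    have h3 : |s| * (2 * C0 / n) ≤ |s| * (2 * C0 / k) :=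
      mul_le_mul_of_nonneg_left (div_le_div_of_nonneg_left (by linarith) (by linarith) hn0)
        (abs_nonneg s)
    set ek := Complex.exp (((s * Real.log k : ℝ) : ℂ) * Complex.I)
    set en := Complex.exp (((s * Real.log n : ℝ) : ℂ) * Complex.I)
    have e : dl F s k - dl F s n
        = (dl F s k - (ek - 1)) - (dl F s n - (en - 1)) + (ek - en) := by ring
    rw [e]
    have h5 := norm_add_le ((dl F s k - (ek - 1)) - (dl F s n - (en - 1))) (ek - en)
    have h6 := norm_sub_le (dl F s k - (ek - 1)) (dl F s n - (en - 1))
    have e2 : |s| * (Real.log n - Real.log k + 2 * (2 * C0) / k)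
        = |s| * (Real.log n - Real.log k) + |s| * (2 * C0 / k) + |s| * (2 * C0 / k) := by ring
    rw [e2]
    linarith

lemma Mf_avg (s : ℝ) (n : ℕ) :
    (n : ℝ) * ‖Mf F s n‖ ≤ ∑ j ∈ Finset.range n, ‖Mf F s j‖ := by
  have h := congrArg norm (Mf_rec (F := F) s n)
  rw [norm_mul, Complex.norm_natCast] at h
  rw [h, ← sum_Icc_sub n (fun j => ‖Mf F s j‖)]
  refine (norm_sum_le _ _).trans (Finset.sum_le_sum fun k hk => ?_)
  rw [norm_mul]
  exact mul_le_of_le_one_left (norm_nonneg _) (norm_one_add_dl (Finset.mem_Icc.1 hk).1)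

lemma norm_Mf_le (s : ℝ) (n : ℕ) : ‖Mf F s n‖ ≤ 1 := by
  unfold Mf
  refine (norm_Ex_le n _).trans ?_
  simp_rw [norm_exp_I]
  rw [Ex_const]

lemma cm_approx {r k : ℕ} (hr : r ≤ 4) (hk : 1 ≤ k) :
    |cm F r k - Real.log k ^ r| ≤ C0 / k ^ 2 := by
  have hC := one_le_C0
  have hk0 : (1 : ℝ) ≤ k := by exact_mod_cast hk
  have h := wt_avg (F := F) hk (fun d => xx k d ^ r) (b := (k : ℝ) ^ r) (by positivity) ?_
  · rw [xx_self hk, Real.norm_eq_abs] at h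
    refine h.trans ?_
    rw [mul_div_assoc', div_le_div_iff₀ (by positivity) (by positivity)]
    have h2 : (k : ℝ) ^ r * k ^ 2 ≤ k ^ 6 := by
      rw [← pow_add]; exact pow_le_pow_right₀ hk0 (by omega)
    nlinarith
  · intro d hd
    have hd' := Nat.properDivisors_subset_divisors hd
    have h1 := pow_nonneg (xx_nonneg k d) r
    have h2 := pow_le_pow_left₀ (xx_nonneg k d) (xx_le hd') r
    have h3 := pow_nonneg (xx_nonneg k k) r
    have h4 := pow_le_pow_left₀ (xx_nonneg k k) (xx_le (Nat.mem_divisors_self k (by omega))) r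
    rw [Real.norm_eq_abs, abs_le]; constructor <;> linarith

/-- The mean is the first-order part of the exponent `WW`, so centering removes it exactly. -/
lemma mean_logP (n : ℕ) : Ex F n logP = ∑ k ∈ Finset.Icc 1 n, cm F 1 k / k := by
  have hrec : ∀ n : ℕ, (n : ℝ) * Ex F n logP
      = ∑ j ∈ Finset.range n, Ex F j logP + ∑ k ∈ Finset.Icc 1 n, cm F 1 k := by
    intro n
    have h := Ex_rec (F := F) n logP
    simp only [smul_eq_mul] at h
    rw [h, ← sum_Icc_sub n (fun j => Ex F j logP), ← Finset.sum_add_distrib]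
    refine Finset.sum_congr rfl fun k hk => ?_
    unfold cm
    nth_rewrite 1 [← one_mul (Ex F (n - k) logP)]
    rw [← wt_sum (F := F) (Finset.mem_Icc.1 hk).1, Finset.sum_mul, ← Finset.sum_add_distrib]
    refine Finset.sum_congr rfl fun d _ => ?_
    simp_rw [logP_add]
    rw [Ex_add, Ex_const, pow_one, mul_add]
    rfl
  induction n with
  | zero => rw [Ex_eq_zero_deg]; simp [logP]
  | succ n ih =>
    have h1 := hrec (n + 1)
    have h2 := hrec n
    rw [Finset.sum_range_succ, Finset.sum_Icc_succ_top (by omega)] at h1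
    rw [Finset.sum_Icc_succ_top (by omega), ← ih]
    have h0 : ((n + 1 : ℕ) : ℝ) ≠ 0 := by positivity
    refine mul_left_cancel₀ h0 ?_
    rw [mul_add, mul_div_cancel₀ _ h0]
    push_cast at *
    linarith

end

end ETS

/-! ### Expansion of the exponent and decay of the characteristic function -/

namespace ETS

lemma pow_diff_bounds {a b : ℝ} (ha : 0 ≤ a) (hab : a ≤ b) (r : ℕ) :
    (r + 1) * a ^ r * (b - a) ≤ b ^ (r + 1) - a ^ (r + 1) ∧
      b ^ (r + 1) - a ^ (r + 1) ≤ (r + 1) * b ^ r * (b - a) := by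
  induction r with
  | zero => simp
  | succ r ih =>
    have hb : 0 ≤ b := ha.trans hab
    have hd : 0 ≤ b - a := sub_nonneg.2 hab
    have e : b ^ (r + 1 + 1) - a ^ (r + 1 + 1)
        = b * (b ^ (r + 1) - a ^ (r + 1)) + a ^ (r + 1) * (b - a) := by ring
    have hpow : a ^ (r + 1) ≤ b ^ (r + 1) := pow_le_pow_left₀ ha hab _
    have hx : 0 ≤ b ^ (r + 1) - a ^ (r + 1) := sub_nonneg.2 hpow
    rw [e]
    push_cast
    constructor
    · have h1 := mul_le_mul_of_nonneg_right hab hx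
      have h2 := mul_le_mul_of_nonneg_left ih.1 ha
      have e2 : ((r : ℝ) + 1 + 1) * a ^ (r + 1) * (b - a)
          = a * ((r + 1) * a ^ r * (b - a)) + a ^ (r + 1) * (b - a) := by ring
      rw [e2]; linarith
    · have h1 := mul_le_mul_of_nonneg_left ih.2 hb
      have h2 := mul_le_mul_of_nonneg_right hpow hd
      have e2 : ((r : ℝ) + 1 + 1) * b ^ (r + 1) * (b - a)
          = b * ((r + 1) * b ^ r * (b - a)) + b ^ (r + 1) * (b - a) := by ring
      rw [e2]; linarith

lemma sum_log_pow (r : ℕ) (hr : 1 ≤ r) {n : ℕ} (hn : 1 ≤ n) :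
    |∑ k ∈ Finset.Icc 1 n, Real.log k ^ r / k - Real.log n ^ (r + 1) / (r + 1)|
      ≤ 2 * Real.log n ^ r := by
  have key : ∀ m, 1 ≤ m → m ≤ n →
      |∑ k ∈ Finset.Icc 1 m, Real.log k ^ r / k - Real.log m ^ (r + 1) / (r + 1)|
        ≤ Real.log n ^ r * (1 - 1 / m) + Real.log m ^ r := by
    intro m hm
    induction m, hm using Nat.le_induction with
    | base => intro _; simp [zero_pow (by omega : r ≠ 0)]
    | succ m hm ih =>
      intro hmn
      have ih' := ih (by omega)
      have hm0 : (1 : ℝ) ≤ m := by exact_mod_cast hm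
      rw [Finset.sum_Icc_succ_top (by omega)]
      have hlow := inv_succ_le_log m hm
      have hup : Real.log ((m : ℝ) + 1) - Real.log m ≤ 1 / m := by
        rw [← Real.log_div (by positivity) (by positivity)]
        refine (Real.log_le_sub_one_of_pos (by positivity)).trans (le_of_eq ?_)
        field_simp; ring
      have ha0 : 0 ≤ Real.log m := Real.log_natCast_nonneg m
      have hbn : Real.log ((m : ℝ) + 1) ≤ Real.log n :=
        Real.log_le_log (by positivity) (by exact_mod_cast hmn)
      push_cast
      set a := Real.log m with ha
      set b := Real.log ((m : ℝ) + 1) with hb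
      have hpos : 0 < 1 / ((m : ℝ) + 1) := by positivity
      have hab : a ≤ b := by linarith
      obtain ⟨h1, h2⟩ := pow_diff_bounds ha0 hab r
      have hr0 : (0 : ℝ) < (r : ℝ) + 1 := by positivity
      have har : 0 ≤ a ^ r := pow_nonneg ha0 r
      have habr : a ^ r ≤ b ^ r := pow_le_pow_left₀ ha0 hab r
      have hbnr : b ^ r ≤ Real.log n ^ r := pow_le_pow_left₀ (ha0.trans hab) hbn r
      have h1' : a ^ r * (1 / ((m : ℝ) + 1)) ≤ (b ^ (r + 1) - a ^ (r + 1)) / (r + 1) := by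
        rw [le_div_iff₀ hr0]
        have := mul_le_mul_of_nonneg_left hlow har
        nlinarith
      have h2' : (b ^ (r + 1) - a ^ (r + 1)) / (r + 1) ≤ b ^ r * (1 / m) := by
        rw [div_le_iff₀ hr0]
        have := mul_le_mul_of_nonneg_left hup (har.trans habr)
        nlinarith
      have hpos1 : 1 / ((m : ℝ) + 1) ≤ 1 := by
        rw [div_le_one (by positivity)]; linarith
      have hdd : 0 ≤ 1 / (m : ℝ) - 1 / ((m : ℝ) + 1) := by
        rw [sub_nonneg]
        exact one_div_le_one_div_of_le (by linarith) (by linarith)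
      have h3 : b ^ r * (1 / (m : ℝ) - 1 / ((m : ℝ) + 1))
          ≤ Real.log n ^ r * (1 / (m : ℝ) - 1 / ((m : ℝ) + 1)) :=
        mul_le_mul_of_nonneg_right hbnr hdd
      have h4 : (b ^ r - a ^ r) * (1 / ((m : ℝ) + 1)) ≤ b ^ r - a ^ r :=
        mul_le_of_le_one_right (sub_nonneg.2 habr) hpos1
      have h5 : 0 ≤ (b ^ r - a ^ r) * (1 / ((m : ℝ) + 1)) :=
        mul_nonneg (sub_nonneg.2 habr) hpos.le
      have h6 : 0 ≤ b ^ r * (1 / (m : ℝ) - 1 / ((m : ℝ) + 1)) :=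
        mul_nonneg (har.trans habr) hdd
      rw [abs_le] at ih' ⊢
      have e1 : b ^ (r + 1) / ((r : ℝ) + 1)
          = a ^ (r + 1) / ((r : ℝ) + 1) + (b ^ (r + 1) - a ^ (r + 1)) / (r + 1) := by ring
      have e2 : b ^ r / ((m : ℝ) + 1) = b ^ r * (1 / ((m : ℝ) + 1)) := by ring
      rw [e1, e2]
      constructor <;> nlinarith
  have := key n hn le_rfl
  have h0 : 0 ≤ Real.log n ^ r := pow_nonneg (Real.log_natCast_nonneg n) r
  have h1 : 0 ≤ 1 / (n : ℝ) := by positivity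
  nlinarith

lemma taylor4 (x : ℝ) :
    ‖Complex.exp ((x : ℂ) * Complex.I) - 1
      - ((x : ℂ) * Complex.I - (x : ℂ) ^ 2 / 2 - (x : ℂ) ^ 3 / 6 * Complex.I)‖ ≤ 4 * x ^ 4 := by
  rcases le_total |x| 1 with h | h
  · have hb := Complex.exp_bound (x := (x : ℂ) * Complex.I) (by simpa using h) (n := 4) (by norm_num)
    have e : Complex.exp ((x : ℂ) * Complex.I) - ∑ m ∈ Finset.range 4, ((x : ℂ) * Complex.I) ^ m / (m.factorial : ℂ)
        = Complex.exp ((x : ℂ) * Complex.I) - 1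
      - ((x : ℂ) * Complex.I - (x : ℂ) ^ 2 / 2 - (x : ℂ) ^ 3 / 6 * Complex.I) := by
      simp only [Finset.sum_range_succ, Finset.sum_range_zero, Nat.factorial]
      have h2 : Complex.I ^ 2 = -1 := Complex.I_sq
      have h3 : Complex.I ^ 3 = -Complex.I := Complex.I_pow_three
      simp only [mul_pow, h2, h3]
      push_cast
      ring
    rw [e] at hb
    refine hb.trans ?_
    have : ‖(x : ℂ) * Complex.I‖ ^ 4 = x ^ 4 := by
      rw [norm_mul, Complex.norm_I, mul_one, Complex.norm_real, Real.norm_eq_abs]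
      rw [show |x| ^ 4 = (|x| ^ 2) ^ 2 by ring, sq_abs]; ring
    rw [this]
    have h4 : 0 ≤ x ^ 4 := by positivity
    norm_num [Nat.factorial]
    nlinarith
  · have h1 : ‖Complex.exp ((x : ℂ) * Complex.I) - 1‖ ≤ 2 := by
      refine (norm_sub_le _ _).trans ?_
      rw [norm_exp_I, norm_one]; norm_num
    have h2 : ‖(x : ℂ) * Complex.I - (x : ℂ) ^ 2 / 2 - (x : ℂ) ^ 3 / 6 * Complex.I‖
        ≤ |x| + |x| ^ 2 / 2 + |x| ^ 3 / 6 := by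
      refine (norm_sub_le _ _).trans (add_le_add ((norm_sub_le _ _).trans (add_le_add ?_ ?_)) ?_)
      · simp
      · simp
      · simp
    refine (norm_sub_le _ _).trans ?_
    have e : x ^ 4 = |x| ^ 4 := by rw [show |x| ^ 4 = (|x| ^ 2) ^ 2 by ring, sq_abs]; ring
    rw [e]
    have a1 : |x| ≤ |x| ^ 4 := le_self_pow₀ h (by norm_num)
    have a2 : |x| ^ 2 ≤ |x| ^ 4 := pow_le_pow_right₀ h (by norm_num)
    have a3 : |x| ^ 3 ≤ |x| ^ 4 := pow_le_pow_right₀ h (by norm_num)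
    linarith

section
variable {F : Type} [Field F] [Fintype F]

/-- Harmonic-weighted sums of the jump moments: the cumulant sums. -/
noncomputable def VV (F : Type) [Field F] [Fintype F] (r n : ℕ) : ℝ :=
  ∑ k ∈ Finset.Icc 1 n, cm F r k / k

lemma VV_approx {r n : ℕ} (hr1 : 1 ≤ r) (hr : r ≤ 4) (hn : 1 ≤ n) (hL : 1 ≤ Real.log n) :
    |VV F r n - Real.log n ^ (r + 1) / (r + 1)| ≤ (2 + 2 * C0) * Real.log n ^ r := by
  have hC := one_le_C0
  have h1 : |VV F r n - ∑ k ∈ Finset.Icc 1 n, Real.log k ^ r / k| ≤ 2 * C0 := by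
    unfold VV
    rw [← Finset.sum_sub_distrib]
    refine (Finset.abs_sum_le_sum_abs _ _).trans ?_
    calc _ ≤ ∑ k ∈ Finset.Icc 1 n, C0 * (1 / (k : ℝ) ^ 2) := by
          refine Finset.sum_le_sum fun k hk => ?_
          have hk1 := (Finset.mem_Icc.1 hk).1
          have hk0 : (1 : ℝ) ≤ k := by exact_mod_cast hk1
          rw [← sub_div, abs_div, abs_of_nonneg (by linarith : (0 : ℝ) ≤ k)]
          refine (div_le_self (abs_nonneg _) hk0).trans ((cm_approx hr hk1).trans (le_of_eq ?_))
          ring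
      _ ≤ _ := by
        rw [← Finset.mul_sum]
        nlinarith [sum_inv_sq_le n]
  have h2 := sum_log_pow r hr1 hn
  have h3 : 1 ≤ Real.log n ^ r := one_le_pow₀ hL
  rw [abs_le] at *
  constructor <;> nlinarith

lemma dl_taylor (s : ℝ) {k : ℕ} (hk : 1 ≤ k) :
    ‖dl F s k - ((s : ℂ) * (cm F 1 k) * Complex.I - (s : ℂ) ^ 2 / 2 * (cm F 2 k)
      - (s : ℂ) ^ 3 / 6 * (cm F 3 k) * Complex.I)‖ ≤ 4 * s ^ 4 * cm F 4 k := by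
  have e : dl F s k - ((s : ℂ) * (cm F 1 k) * Complex.I - (s : ℂ) ^ 2 / 2 * (cm F 2 k)
      - (s : ℂ) ^ 3 / 6 * (cm F 3 k) * Complex.I)
      = ∑ d ∈ k.divisors, wt F k d • (Complex.exp (((s * xx k d : ℝ) : ℂ) * Complex.I) - 1
        - (((s * xx k d : ℝ) : ℂ) * Complex.I - ((s * xx k d : ℝ) : ℂ) ^ 2 / 2
          - ((s * xx k d : ℝ) : ℂ) ^ 3 / 6 * Complex.I)) := by
    unfold dl cm
    have h1 : (1 : ℂ) = ∑ d ∈ k.divisors, (wt F k d : ℂ) := by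
      rw [← Complex.ofReal_sum, wt_sum hk]; simp
    simp only [Complex.real_smul]
    push_cast
    nth_rewrite 1 [h1]
    simp only [Finset.mul_sum, Finset.sum_mul, ← Finset.sum_sub_distrib]
    refine Finset.sum_congr rfl fun d _ => ?_
    ring
  rw [e]
  refine (norm_sum_le _ _).trans ?_
  unfold cm
  rw [Finset.mul_sum]
  refine Finset.sum_le_sum fun d _ => ?_
  rw [norm_smul, Real.norm_of_nonneg (wt_nonneg k d)]
  refine (mul_le_mul_of_nonneg_left (taylor4 _) (wt_nonneg k d)).trans (le_of_eq ?_)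
  ring

lemma WW_taylor (s : ℝ) (n : ℕ) :
    ‖WW (dl F s) n - ((s : ℂ) * (Ex F n logP : ℝ) * Complex.I - (s : ℂ) ^ 2 / 2 * (VV F 2 n)
      - (s : ℂ) ^ 3 / 6 * (VV F 3 n) * Complex.I)‖ ≤ 4 * s ^ 4 * VV F 4 n := by
  rw [mean_logP]
  have e : WW (dl F s) n - ((s : ℂ) * (∑ k ∈ Finset.Icc 1 n, cm F 1 k / k : ℝ) * Complex.I
      - (s : ℂ) ^ 2 / 2 * (VV F 2 n) - (s : ℂ) ^ 3 / 6 * (VV F 3 n) * Complex.I)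
      = ∑ k ∈ Finset.Icc 1 n, (dl F s k - ((s : ℂ) * (cm F 1 k) * Complex.I
        - (s : ℂ) ^ 2 / 2 * (cm F 2 k) - (s : ℂ) ^ 3 / 6 * (cm F 3 k) * Complex.I)) / k := by
    unfold WW VV
    push_cast
    simp only [Finset.mul_sum, Finset.sum_mul, ← Finset.sum_sub_distrib]
    refine Finset.sum_congr rfl fun d _ => ?_
    ring
  rw [e]
  refine (norm_sum_le _ _).trans ?_
  unfold VV
  rw [Finset.mul_sum]
  refine Finset.sum_le_sum fun k hk => ?_
  rw [norm_div, Complex.norm_natCast, mul_div_assoc']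
  exact div_le_div_of_nonneg_right (dl_taylor s (Finset.mem_Icc.1 hk).1) (Nat.cast_nonneg k)

/-- Absolute constant in the expansion of the exponent. -/
noncomputable def CE : ℝ := 14 + 12 * C0

lemma WW_expansion {s : ℝ} {n : ℕ} (hn : 1 ≤ n) (hL : 1 ≤ Real.log n)
    (hs : |s| * Real.log n ≤ 1) :
    ‖WW (dl F s) n - ((s : ℂ) * (Ex F n logP : ℝ) * Complex.I
      - ((s ^ 2 * Real.log n ^ 3 / 6 : ℝ) : ℂ)
      - ((s ^ 3 * Real.log n ^ 4 / 24 : ℝ) : ℂ) * Complex.I)‖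
      ≤ CE * (s ^ 2 * Real.log n ^ 2 + s ^ 4 * Real.log n ^ 5) := by
  have hC := one_le_C0
  set L := Real.log n with hLdef
  have h1 := WW_taylor (F := F) s n
  have v2 := VV_approx (F := F) (r := 2) (by norm_num) (by norm_num) hn hL
  have v3 := VV_approx (F := F) (r := 3) (by norm_num) (by norm_num) hn hL
  have v4 := VV_approx (F := F) (r := 4) (by norm_num) (by norm_num) hn hL
  rw [← hLdef] at v2 v3 v4
  push_cast at v2 v3 v4
  norm_num at v2 v3 v4
  set x2 := VV F 2 n - L ^ 3 / 3 with hx2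
  set x3 := VV F 3 n - L ^ 4 / 4 with hx3
  have e : WW (dl F s) n - ((s : ℂ) * (Ex F n logP : ℝ) * Complex.I
      - ((s ^ 2 * L ^ 3 / 6 : ℝ) : ℂ) - ((s ^ 3 * L ^ 4 / 24 : ℝ) : ℂ) * Complex.I)
      = (WW (dl F s) n - ((s : ℂ) * (Ex F n logP : ℝ) * Complex.I - (s : ℂ) ^ 2 / 2 * (VV F 2 n)
      - (s : ℂ) ^ 3 / 6 * (VV F 3 n) * Complex.I))
        - ((s ^ 2 / 2 * x2 : ℝ) : ℂ) - ((s ^ 3 / 6 * x3 : ℝ) : ℂ) * Complex.I := by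
    rw [hx2, hx3]; push_cast; ring
  rw [e]
  have h4 : VV F 4 n ≤ (3 + 2 * C0) * L ^ 5 := by
    have := (abs_le.1 v4).2
    have hp : L ^ 4 ≤ L ^ 5 := pow_le_pow_right₀ hL (by norm_num)
    have hp0 : 0 ≤ L ^ 4 := by positivity
    nlinarith
  have h5 : 4 * s ^ 4 * VV F 4 n ≤ 4 * s ^ 4 * ((3 + 2 * C0) * L ^ 5) :=
    mul_le_mul_of_nonneg_left h4 (by positivity)
  have h2 : ‖((s ^ 2 / 2 * x2 : ℝ) : ℂ)‖ ≤ s ^ 2 / 2 * ((2 + 2 * C0) * L ^ 2) := by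
    rw [Complex.norm_real, Real.norm_eq_abs, abs_mul, abs_of_nonneg (by positivity)]
    exact mul_le_mul_of_nonneg_left v2 (by positivity)
  have h3 : ‖((s ^ 3 / 6 * x3 : ℝ) : ℂ) * Complex.I‖ ≤ s ^ 2 / 6 * ((2 + 2 * C0) * L ^ 2) := by
    rw [norm_mul, Complex.norm_I, mul_one, Complex.norm_real, Real.norm_eq_abs, abs_mul, abs_div,
      abs_pow]
    norm_num
    calc |s| ^ 3 / 6 * |x3| ≤ |s| ^ 3 / 6 * ((2 + 2 * C0) * L ^ 3) :=
          mul_le_mul_of_nonneg_left v3 (by positivity)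
      _ = |s| ^ 2 / 6 * ((2 + 2 * C0) * L ^ 2) * (|s| * L) := by ring
      _ ≤ |s| ^ 2 / 6 * ((2 + 2 * C0) * L ^ 2) * 1 :=
          mul_le_mul_of_nonneg_left hs (by positivity)
      _ = _ := by rw [sq_abs, mul_one]
  refine (norm_sub_le _ _).trans ?_
  have h6 := norm_sub_le (WW (dl F s) n - ((s : ℂ) * (Ex F n logP : ℝ) * Complex.I
    - (s : ℂ) ^ 2 / 2 * (VV F 2 n) - (s : ℂ) ^ 3 / 6 * (VV F 3 n) * Complex.I))
    ((s ^ 2 / 2 * x2 : ℝ) : ℂ)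
  have p1 : 0 ≤ s ^ 2 * L ^ 2 := by positivity
  have p2 : 0 ≤ s ^ 4 * L ^ 5 := by positivity
  have p3 : 0 ≤ C0 * (s ^ 2 * L ^ 2) := by positivity
  have p4 : 0 ≤ C0 * (s ^ 4 * L ^ 5) := by positivity
  unfold CE
  nlinarith

/-- Absolute constant in the relative error of the exponential approximation. -/
noncomputable def K1 : ℝ := 12 + Kc (2 * C0)

/-- The exponential approximation of `Mf F s n` is used when `|s| log n ≤ ee`. -/
noncomputable def ee : ℝ := 1 / (24 * CE * K1)

/-- A lower bound on `log n` for the asymptotic estimates. -/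
noncomputable def L0 : ℝ := 24 * CE

lemma CE_ge : 26 ≤ CE := by unfold CE; linarith [one_le_C0]

lemma K1_ge : 236 ≤ K1 := by unfold K1 Kc; linarith [one_le_C0]

lemma ee_pos : 0 < ee := by
  have := CE_ge; have := K1_ge; unfold ee; positivity

lemma ee_bounds : ee ≤ 1 / 100 ∧ CE * ee ^ 2 ≤ 1 / 24 ∧ 2 * ee * K1 ≤ 1 := by
  have h1 := CE_ge
  have h2 := K1_ge
  have h3 := ee_pos
  have e : ee * (24 * CE * K1) = 1 := by unfold ee; field_simp
  have h5 : 24 * 26 * 236 ≤ 24 * CE * K1 := by nlinarith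
  have h4 : ee ≤ 1 / 100 := by nlinarith
  refine ⟨h4, ?_, ?_⟩
  · have : CE * ee * 24 ≤ 1 := by
      have : 0 ≤ CE * ee * 24 := by positivity
      nlinarith
    have : 0 ≤ CE * ee := by positivity
    nlinarith
  · have : 0 ≤ K1 * ee := by positivity
    nlinarith

lemma Mf_approx {s : ℝ} {n : ℕ} (hL : L0 ≤ Real.log n) (hs : |s| * Real.log n ≤ ee) :
    ‖Mf F s n - Complex.exp (WW (dl F s) n)‖
      ≤ 4 * K1 * (s ^ 2 * Real.log n ^ 2) * ‖Complex.exp (WW (dl F s) n)‖ := by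
  have h1 := CE_ge
  have hK := K1_ge
  have hC := one_le_C0
  have hL1 : 2 * C0 ≤ Real.log n := by unfold L0 CE at hL; linarith
  have hD2 : |s| * (Real.log n + 2 * C0) ≤ 2 * (|s| * Real.log n) := by
    nlinarith [abs_nonneg s]
  have hD0 : 0 ≤ |s| * (Real.log n + 2 * C0) :=
    mul_nonneg (abs_nonneg s) (by linarith)
  have h := (charSys (F := F) s).approx (n := n) rfl (by
    change |s| * (Real.log n + 2 * C0) * K1 ≤ 1
    have := ee_bounds.2.2
    nlinarith)
  refine h.trans (mul_le_mul_of_nonneg_right ?_ (norm_nonneg _))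
  change K1 * _ ≤ _
  have h2 := pow_le_pow_left₀ hD0 hD2 2
  have e : (2 * (|s| * Real.log n)) ^ 2 = 4 * (s ^ 2 * Real.log n ^ 2) := by
    rw [mul_pow, mul_pow, sq_abs]; ring
  rw [e] at h2
  nlinarith

lemma norm_exp_WW {s : ℝ} {n : ℕ} (hL : L0 ≤ Real.log n) (hs : |s| * Real.log n ≤ ee) :
    ‖Complex.exp (WW (dl F s) n)‖ ≤ Real.exp (-(s ^ 2 * Real.log n ^ 3 / 12)) := by
  have h1 := CE_ge
  have hee := ee_bounds
  have hLp : 624 ≤ Real.log n := by unfold L0 at hL; linarith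
  have hn : 1 ≤ n := by
    rcases Nat.eq_zero_or_pos n with rfl | h
    · simp at hLp; linarith
    · exact h
  have h := WW_expansion (F := F) hn (by linarith) (hs.trans (by linarith [hee.1]))
  rw [Complex.norm_exp]
  refine Real.exp_le_exp.2 ?_
  have h2 := (Complex.re_le_norm _).trans h
  simp only [Complex.sub_re, Complex.mul_re, Complex.ofReal_re, Complex.ofReal_im, Complex.I_re,
    Complex.I_im, Complex.mul_im] at h2
  set L := Real.log n with hLdef
  have hL3 : CE * (s ^ 2 * L ^ 2) ≤ s ^ 2 * L ^ 3 / 24 := by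
    have : CE ≤ L / 24 := by unfold L0 at hL; linarith
    have h0 : 0 ≤ s ^ 2 * L ^ 2 := by positivity
    nlinarith
  have hL5 : CE * (s ^ 4 * L ^ 5) ≤ s ^ 2 * L ^ 3 / 24 := by
    have h3 : (|s| * L) ^ 2 ≤ ee ^ 2 :=
      pow_le_pow_left₀ (mul_nonneg (abs_nonneg s) (by linarith)) hs 2
    rw [mul_pow, sq_abs] at h3
    have h4 : CE * (s ^ 2 * L ^ 2) ≤ 1 / 24 :=
      (mul_le_mul_of_nonneg_left h3 (by linarith)).trans hee.2.1
    have h0 : 0 ≤ s ^ 2 * L ^ 3 := by positivity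
    nlinarith
  simp at h2
  nlinarith

lemma Mf_gauss {s : ℝ} {n : ℕ} (hL : L0 ≤ Real.log n) (hs : |s| * Real.log n ≤ ee) :
    ‖Mf F s n‖ ≤ 2 * Real.exp (-(s ^ 2 * Real.log n ^ 3 / 12)) := by
  have h1 := Mf_approx (F := F) hL hs
  have h2 := norm_exp_WW (F := F) hL hs
  have hK := K1_ge
  have hCE := CE_ge
  have hee := ee_bounds
  have he := ee_pos
  have h3 : 4 * K1 * (s ^ 2 * Real.log n ^ 2) ≤ 1 := by
    have h3 : (|s| * Real.log n) ^ 2 ≤ ee ^ 2 :=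
      pow_le_pow_left₀ (mul_nonneg (abs_nonneg s) (Real.log_natCast_nonneg n)) hs 2
    rw [mul_pow, sq_abs] at h3
    have : K1 * ee ^ 2 ≤ 1 / 200 := by nlinarith
    nlinarith
  have h4 := norm_le_norm_sub_add (Mf F s n) (Complex.exp (WW (dl F s) n))
  have h5 := mul_le_mul_of_nonneg_right h3 (norm_nonneg (Complex.exp (WW (dl F s) n)))
  linarith

/-- Decay of the characteristic function at frequencies `s` that are too large for the
exponential approximation in degree `N`: the approximation is used in the smaller degrees near
`exp (ee / |s|)` and the averaged bound is transported to degree `N`. -/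
lemma Mf_large {s ℓ : ℝ} {N : ℕ} (hℓ : |s| * ℓ = ee) (hℓ0 : 2 * L0 ≤ ℓ) (hN : ℓ ≤ Real.log N) :
    ‖Mf F s N‖ ≤ 6 * Real.exp (-(ee ^ 2 * ℓ / 96)) := by
  have hCE := CE_ge
  have hL0 : 624 ≤ L0 := by unfold L0; linarith
  have hee := ee_bounds
  have he := ee_pos
  have hN0 : (0 : ℝ) < N := by
    rcases Nat.eq_zero_or_pos N with rfl | h
    · simp at hN; linarith
    · exact_mod_cast h
  set m := ⌊Real.exp ℓ⌋₊ with hm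
  have hexp : 625 ≤ Real.exp ℓ := by linarith [Real.add_one_le_exp ℓ]
  have hmle : (m : ℝ) ≤ Real.exp ℓ := Nat.floor_le (Real.exp_pos _).le
  have hmge : Real.exp ℓ / 2 ≤ m := by
    have := Nat.lt_floor_add_one (Real.exp ℓ)
    rw [← hm] at this
    linarith
  have hm1 : 1 ≤ m := by
    have : (0 : ℝ) < m := by linarith
    exact_mod_cast this
  have hmN : m ≤ N := by
    have : Real.exp ℓ ≤ N := by
      rw [← Real.exp_log hN0]; exact Real.exp_le_exp.2 hN
    exact_mod_cast hmle.trans this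
  refine later_le (Mf_avg (F := F) s) hm1 ?_ N hmN
  set q := Real.exp (-(ee ^ 2 * ℓ / 96)) with hq
  have hq0 : 0 < q := Real.exp_pos _
  have h1 : ∀ j ∈ Finset.range m, ‖Mf F s j‖
      ≤ (if j < ⌈Real.exp (ℓ / 2)⌉₊ then 1 else 0) + 2 * q := by
    intro j hj
    have hj' := Finset.mem_range.1 hj
    split_ifs with hlt
    · linarith [norm_Mf_le (F := F) s j]
    · have hj1 : Real.exp (ℓ / 2) ≤ j := (Nat.ceil_le.1 (not_lt.1 hlt))
      have hj0 : (0 : ℝ) < j := (Real.exp_pos _).trans_le hj1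
      have hlj : ℓ / 2 ≤ Real.log j := (Real.le_log_iff_exp_le hj0).2 hj1
      have hlj2 : Real.log j ≤ ℓ := by
        rw [Real.log_le_iff_le_exp hj0]
        exact (by exact_mod_cast hj'.le : (j : ℝ) ≤ m).trans hmle
      have hg := Mf_gauss (F := F) (s := s) (n := j) (by linarith)
        (hℓ ▸ mul_le_mul_of_nonneg_left hlj2 (abs_nonneg s))
      rw [zero_add]
      refine hg.trans (mul_le_mul_of_nonneg_left (Real.exp_le_exp.2 (neg_le_neg ?_)) (by norm_num))
      have hcube : (ℓ / 2) ^ 3 ≤ Real.log j ^ 3 := pow_le_pow_left₀ (by linarith) hlj 3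
      have e : ee ^ 2 * ℓ / 96 = s ^ 2 * (ℓ / 2) ^ 3 / 12 := by
        rw [← hℓ, mul_pow, sq_abs]; ring
      rw [e]
      have := mul_le_mul_of_nonneg_left hcube (sq_nonneg s)
      linarith
  refine (Finset.sum_le_sum h1).trans ?_
  rw [Finset.sum_add_distrib, Finset.sum_const, Finset.card_range, nsmul_eq_mul]
  have h2 : ∑ j ∈ Finset.range m, (if j < ⌈Real.exp (ℓ / 2)⌉₊ then (1 : ℝ) else 0)
      ≤ 2 * Real.exp (ℓ / 2) := by
    rw [← Finset.sum_filter, Finset.sum_const, nsmul_eq_mul, mul_one]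
    have hc : ((Finset.range m).filter (fun j => j < ⌈Real.exp (ℓ / 2)⌉₊)).card
        ≤ ⌈Real.exp (ℓ / 2)⌉₊ := by
      refine (Finset.card_le_card (t := Finset.range ⌈Real.exp (ℓ / 2)⌉₊) ?_).trans
        (by rw [Finset.card_range])
      intro j hj
      exact Finset.mem_range.2 (Finset.mem_filter.1 hj).2
    have hc' : (((Finset.range m).filter (fun j => j < ⌈Real.exp (ℓ / 2)⌉₊)).card : ℝ)
        ≤ ⌈Real.exp (ℓ / 2)⌉₊ := by exact_mod_cast hc
    have := Nat.ceil_lt_add_one (Real.exp_pos (ℓ / 2)).le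
    have h3 : 1 ≤ Real.exp (ℓ / 2) := Real.one_le_exp (by linarith)
    linarith
  have h3 : Real.exp (ℓ / 2) ≤ 2 * m * q := by
    have e : Real.exp (ℓ / 2) = Real.exp ℓ * Real.exp (-(ℓ / 2)) := by
      rw [← Real.exp_add]; ring_nf
    have hle : Real.exp (-(ℓ / 2)) ≤ q := by
      refine Real.exp_le_exp.2 (neg_le_neg ?_)
      have : ee ^ 2 ≤ 1 := by nlinarith [hee.1]
      nlinarith
    rw [e]
    exact mul_le_mul (by linarith) hle (Real.exp_pos _).le (by positivity)
  nlinarith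

end

end ETS

/-! ### The smoothing inequality -/

namespace ETS

open MeasureTheory Complex Filter Topology

lemma integrable_pow_gauss {b : ℝ} (hb : 0 < b) (k : ℕ) :
    Integrable (fun t : ℝ => t ^ k * Real.exp (-b * t ^ 2)) := by
  have h := integrable_rpow_mul_exp_neg_mul_sq hb (s := (k : ℝ))
    (lt_of_lt_of_le (by norm_num) (Nat.cast_nonneg k))
  simpa only [Real.rpow_natCast] using h

/-- The kernel `exp (-b t² - i t u)`. -/
noncomputable def gk (b u t : ℝ) : ℂ := cexp (-(b : ℂ) * t ^ 2 - I * u * t)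

lemma gk_eq (b u t : ℝ) :
    gk b u t = ((Real.exp (-b * t ^ 2) : ℝ) : ℂ) * cexp (((-(u * t) : ℝ) : ℂ) * I) := by
  unfold gk
  rw [Complex.ofReal_exp, ← Complex.exp_add]
  congr 1
  push_cast; ring

lemma norm_gk (b u t : ℝ) : ‖gk b u t‖ = Real.exp (-b * t ^ 2) := by
  rw [gk_eq, norm_mul, norm_exp_I, mul_one, Complex.norm_real, Real.norm_eq_abs, Real.abs_exp]

lemma continuous_gk (b u : ℝ) : Continuous (gk b u) := by
  unfold gk; fun_prop

lemma integrable_gk {b : ℝ} (hb : 0 < b) (u : ℝ) (k : ℕ) :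
    Integrable (fun t : ℝ => (t : ℂ) ^ k * gk b u t) := by
  refine Integrable.mono' (integrable_pow_gauss hb k).norm ?_ (ae_of_all _ fun t => ?_)
  · exact (Continuous.mul (by fun_prop) (continuous_gk b u)).aestronglyMeasurable
  · simp [norm_gk, Complex.norm_real]

lemma integral_gk {b : ℝ} (hb : 0 < b) (u : ℝ) :
    ∫ t : ℝ, gk b u t = ((√(Real.pi / b) * Real.exp (-u ^ 2 / (4 * b)) : ℝ) : ℂ) := by
  have h := fourierIntegral_gaussian (b := (b : ℂ)) (by simpa using hb) (-(u : ℂ))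
  have e : (fun t : ℝ => gk b u t)
      = fun t : ℝ => cexp (I * (-(u : ℂ)) * t) * cexp (-(b : ℂ) * t ^ 2) := by
    funext t
    unfold gk
    rw [← Complex.exp_add]; congr 1; ring
  rw [e, h]
  push_cast
  congr 1
  · rw [Real.sqrt_eq_rpow, Complex.ofReal_cpow (by positivity)]
    push_cast; rfl
  · congr 1; ring

lemma hasDerivAt_gk (b u t : ℝ) :
    HasDerivAt (gk b u) ((-2 * b * t - I * u) * gk b u t) t := by
  unfold gk
  have h1 : HasDerivAt (fun t : ℝ => -(b : ℂ) * (t : ℂ) ^ 2 - I * u * t)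
      (-2 * b * t - I * u) t := by
    have h0 : HasDerivAt (fun t : ℝ => (t : ℂ)) 1 t := Complex.ofRealCLM.hasDerivAt
    have h2 := ((h0.pow 2).const_mul (-(b : ℂ))).sub (h0.const_mul (I * u))
    refine HasDerivAt.congr_deriv h2 ?_
    push_cast; ring
  refine HasDerivAt.congr_deriv h1.cexp ?_
  ring

/-- Integration by parts for the moments of the kernel with `b = 1/2`. -/
lemma gk_moment_rec (u : ℝ) (k : ℕ) :
    ∫ t : ℝ, (t : ℂ) ^ (k + 1) * gk (1 / 2) u t
      = k * (∫ t : ℝ, (t : ℂ) ^ (k - 1) * gk (1 / 2) u t)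
        - I * u * ∫ t : ℝ, (t : ℂ) ^ k * gk (1 / 2) u t := by
  have hb : (0 : ℝ) < 1 / 2 := by norm_num
  have hd : ∀ t : ℝ, HasDerivAt (fun t : ℝ => (t : ℂ) ^ k * gk (1 / 2) u t)
      (k * ((t : ℂ) ^ (k - 1) * gk (1 / 2) u t)
        - I * u * ((t : ℂ) ^ k * gk (1 / 2) u t)
        - (t : ℂ) ^ (k + 1) * gk (1 / 2) u t) t := by
    intro t
    have h0 : HasDerivAt (fun t : ℝ => (t : ℂ)) 1 t := Complex.ofRealCLM.hasDerivAt
    refine HasDerivAt.congr_deriv ((h0.pow k).mul (hasDerivAt_gk (1 / 2) u t)) ?_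
    simp only [Pi.pow_apply]
    push_cast; ring
  have i1 := (integrable_gk hb u (k - 1)).const_mul (k : ℂ)
  have i2 := (integrable_gk hb u k).const_mul (I * u)
  have i3 := integrable_gk hb u (k + 1)
  have h := integral_eq_zero_of_hasDerivAt_of_integrable hd ((i1.sub i2).sub i3)
    (integrable_gk hb u k)
  have e : ∫ t : ℝ, (k * ((t : ℂ) ^ (k - 1) * gk (1 / 2) u t)
        - I * u * ((t : ℂ) ^ k * gk (1 / 2) u t)
        - (t : ℂ) ^ (k + 1) * gk (1 / 2) u t)
      = k * (∫ t : ℝ, (t : ℂ) ^ (k - 1) * gk (1 / 2) u t)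
        - I * u * (∫ t : ℝ, (t : ℂ) ^ k * gk (1 / 2) u t)
        - ∫ t : ℝ, (t : ℂ) ^ (k + 1) * gk (1 / 2) u t := by
    rw [← MeasureTheory.integral_const_mul, ← MeasureTheory.integral_const_mul,
      ← MeasureTheory.integral_sub i1 i2]
    exact MeasureTheory.integral_sub (i1.sub i2) i3
  rw [e] at h
  linear_combination -h

lemma gk_half (u : ℝ) :
    ∫ t : ℝ, gk (1 / 2) u t = ((√(2 * Real.pi) * Real.exp (-u ^ 2 / 2) : ℝ) : ℂ) := by
  rw [integral_gk (by norm_num)]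
  rw [show Real.pi / (1 / 2) = 2 * Real.pi by ring, show (4 : ℝ) * (1 / 2) = 2 by norm_num]

lemma gk_three (u : ℝ) :
    ∫ t : ℝ, (t : ℂ) ^ 3 * gk (1 / 2) u t
      = I * ((u ^ 3 - 3 * u : ℝ) : ℂ) * ∫ t : ℝ, gk (1 / 2) u t := by
  have h1 := gk_moment_rec u 0
  have h2 := gk_moment_rec u 1
  have h3 := gk_moment_rec u 2
  simp only [zero_add, pow_zero, one_mul, pow_one, Nat.cast_zero, zero_mul, Nat.sub_self,
    Nat.cast_one, Nat.cast_ofNat, Nat.reduceAdd, Nat.reduceSub, zero_sub] at h1 h2 h3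
  rw [h3, h2, h1]
  push_cast
  linear_combination (-I * (u : ℂ) ^ 3 * ∫ t : ℝ, gk (1 / 2) u t) * Complex.I_sq

lemma integrable_normal : Integrable (fun u : ℝ => Real.exp (-u ^ 2 / 2)) := by
  have h := integrable_exp_neg_mul_sq (b := 1 / 2) (by norm_num)
  convert h using 3
  ring

lemma integral_normal : ∫ u : ℝ, Real.exp (-u ^ 2 / 2) = √(2 * Real.pi) := by
  have h := integral_gaussian (1 / 2)
  rw [show Real.pi / (1 / 2) = 2 * Real.pi by ring] at h
  rw [← h]
  congr 1; funext x; congr 1; ring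

lemma sqrt_two_pi_pos : 0 < √(2 * Real.pi) := Real.sqrt_pos.2 (by positivity)

lemma one_le_sqrt_two_pi : 1 ≤ √(2 * Real.pi) := by
  rw [Real.one_le_sqrt]; nlinarith [Real.pi_gt_three]

lemma hasDerivAt_Phi (x : ℝ) :
    HasDerivAt stdNormalCDF ((√(2 * Real.pi))⁻¹ * Real.exp (-x ^ 2 / 2)) x := by
  have e : stdNormalCDF = fun y => (√(2 * Real.pi))⁻¹ *
      ((∫ u in Set.Iic 0, Real.exp (-u ^ 2 / 2)) + ∫ u in (0 : ℝ)..y, Real.exp (-u ^ 2 / 2)) := by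
    funext y
    unfold stdNormalCDF
    rw [← intervalIntegral.integral_Iic_sub_Iic integrable_normal.integrableOn
      integrable_normal.integrableOn]
    ring
  rw [e]
  refine HasDerivAt.const_mul _ (HasDerivAt.const_add _ ?_)
  have hc : Continuous (fun u : ℝ => Real.exp (-u ^ 2 / 2)) := by fun_prop
  exact intervalIntegral.integral_hasDerivAt_right (hc.intervalIntegrable _ _)
    (hc.stronglyMeasurableAtFilter _ _) hc.continuousAt

lemma Phi_nonneg (x : ℝ) : 0 ≤ stdNormalCDF x :=
  mul_nonneg (inv_nonneg.2 sqrt_two_pi_pos.le)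
    (integral_nonneg fun _ => (Real.exp_pos _).le)

lemma Phi_compl (x : ℝ) :
    1 - stdNormalCDF x = (√(2 * Real.pi))⁻¹ * ∫ u in Set.Ioi x, Real.exp (-u ^ 2 / 2) := by
  have h := integral_add_compl (measurableSet_Iic (a := x)) integrable_normal
  rw [Set.compl_Iic, integral_normal] at h
  unfold stdNormalCDF
  rw [eq_sub_of_add_eq' h, mul_sub, inv_mul_cancel₀ sqrt_two_pi_pos.ne']

lemma Phi_le_one (x : ℝ) : stdNormalCDF x ≤ 1 := by
  have h := Phi_compl x
  have : 0 ≤ 1 - stdNormalCDF x := by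
    rw [h]
    exact mul_nonneg (inv_nonneg.2 sqrt_two_pi_pos.le)
      (integral_nonneg fun _ => (Real.exp_pos _).le)
  linarith

lemma Phi_mono : Monotone stdNormalCDF := by
  refine monotone_of_deriv_nonneg (fun x => (hasDerivAt_Phi x).differentiableAt) fun x => ?_
  rw [(hasDerivAt_Phi x).deriv]
  have := sqrt_two_pi_pos
  positivity

/-- Crude Gaussian tail bound, common to both tails. -/
lemma tail_aux {s : Set ℝ} (hs : MeasurableSet s) {u : ℝ} (h : ∀ v ∈ s, u ^ 2 ≤ v ^ 2) :
    (√(2 * Real.pi))⁻¹ * ∫ v in s, Real.exp (-v ^ 2 / 2) ≤ 2 * Real.exp (-(u ^ 2) / 4) := by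
  have i4 : Integrable (fun v : ℝ => Real.exp (-(1 / 4) * v ^ 2)) :=
    integrable_exp_neg_mul_sq (by norm_num)
  have hq : ∫ v : ℝ, Real.exp (-(1 / 4) * v ^ 2) = √2 * √(2 * Real.pi) := by
    rw [integral_gaussian, ← Real.sqrt_mul (by norm_num)]
    congr 1; ring
  have h2 : √2 ≤ 2 := by
    rw [Real.sqrt_le_left (by norm_num)]; norm_num
  have h1 : ∫ v in s, Real.exp (-v ^ 2 / 2)
      ≤ ∫ v in s, Real.exp (-(u ^ 2) / 4) * Real.exp (-(1 / 4) * v ^ 2) := by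
    refine setIntegral_mono_on integrable_normal.integrableOn
      (i4.const_mul _).integrableOn hs fun v hv => ?_
    rw [← Real.exp_add]
    refine Real.exp_le_exp.2 ?_
    have := h v hv
    linarith
  have h3 : ∫ v in s, Real.exp (-(u ^ 2) / 4) * Real.exp (-(1 / 4) * v ^ 2)
      ≤ Real.exp (-(u ^ 2) / 4) * (√2 * √(2 * Real.pi)) := by
    rw [← hq, ← MeasureTheory.integral_const_mul]
    exact setIntegral_le_integral (i4.const_mul _) (ae_of_all _ fun v => by positivity)
  have hp := sqrt_two_pi_pos
  rw [inv_mul_le_iff₀ hp]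
  have he := Real.exp_pos (-(u ^ 2) / 4)
  calc _ ≤ _ := h1.trans h3
    _ ≤ Real.exp (-(u ^ 2) / 4) * (2 * √(2 * Real.pi)) := by gcongr
    _ = _ := by ring

lemma Phi_neg_le {u : ℝ} (hu : 0 ≤ u) : stdNormalCDF (-u) ≤ 2 * Real.exp (-(u ^ 2) / 4) :=
  tail_aux measurableSet_Iic fun v hv => by
    have : v ≤ -u := hv
    nlinarith

lemma Phi_ge {u : ℝ} (hu : 0 ≤ u) : 1 - 2 * Real.exp (-(u ^ 2) / 4) ≤ stdNormalCDF u := by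
  have h := Phi_compl u
  have h2 := tail_aux (u := u) measurableSet_Ioi fun v (hv : u < v) => by nlinarith
  linarith

/-- The two-term expansion `Φ(x) + c (1 - x²) e^{-x²/2}`. -/
noncomputable def Gf (c x : ℝ) : ℝ :=
  stdNormalCDF x + c * ((1 - x ^ 2) * Real.exp (-x ^ 2 / 2))

lemma hasDerivAt_Gf (c x : ℝ) :
    HasDerivAt (Gf c) ((√(2 * Real.pi))⁻¹ * Real.exp (-x ^ 2 / 2)
      + c * ((x ^ 3 - 3 * x) * Real.exp (-x ^ 2 / 2))) x := by
  unfold Gf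
  refine (hasDerivAt_Phi x).add (HasDerivAt.const_mul c ?_)
  have h1 : HasDerivAt (fun x : ℝ => 1 - x ^ 2) (-(2 * x)) x := by
    simpa using ((hasDerivAt_id x).pow 2).const_sub 1
  have h2 : HasDerivAt (fun x : ℝ => -x ^ 2 / 2) (-x) x := by
    have := (((hasDerivAt_id x).pow 2).neg).div_const 2
    refine HasDerivAt.congr_deriv this ?_
    simp
    ring
  refine HasDerivAt.congr_deriv (h1.mul h2.exp) ?_
  ring

lemma exp_neg_half_sq_mul (x : ℝ) :
    Real.exp (-x ^ 2 / 2) * (1 + x ^ 2 / 2 + x ^ 4 / 8) ≤ 1 := by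
  have h := Real.quadratic_le_exp_of_nonneg (x := x ^ 2 / 2) (by positivity)
  have e : Real.exp (-x ^ 2 / 2) * Real.exp (x ^ 2 / 2) = 1 := by
    rw [← Real.exp_add]; simp; ring
  rw [← e]
  refine mul_le_mul_of_nonneg_left ?_ (Real.exp_pos _).le
  nlinarith

lemma Gf_lipschitz {c : ℝ} (hc : |c| ≤ 1) (x y : ℝ) : |Gf c x - Gf c y| ≤ 9 * |x - y| := by
  have h := Convex.norm_image_sub_le_of_norm_hasDerivWithin_le (f := Gf c) (C := 9)
    (fun x _ => (hasDerivAt_Gf c x).hasDerivWithinAt) (s := Set.univ) ?_ convex_univ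
    (Set.mem_univ y) (Set.mem_univ x)
  · simpa [Real.norm_eq_abs] using h
  · intro x _
    have he := Real.exp_pos (-x ^ 2 / 2)
    have hi : (√(2 * Real.pi))⁻¹ ≤ 1 := inv_le_one_of_one_le₀ one_le_sqrt_two_pi
    have hi0 : 0 ≤ (√(2 * Real.pi))⁻¹ := inv_nonneg.2 sqrt_two_pi_pos.le
    have hE := exp_neg_half_sq_mul x
    have he1 : Real.exp (-x ^ 2 / 2) ≤ 1 := Real.exp_le_one_iff.2 (by nlinarith [sq_nonneg x])
    have hx : |x ^ 3 - 3 * x| ≤ 8 * (1 + x ^ 2 / 2 + x ^ 4 / 8) := by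
      rw [abs_le]; constructor <;>
        nlinarith [sq_nonneg (x ^ 2 - 1), sq_nonneg (x ^ 2 + x), sq_nonneg (x ^ 2 - x),
          sq_nonneg (x + 1), sq_nonneg (x - 1), sq_nonneg x]
    rw [Real.norm_eq_abs]
    refine (abs_add_le _ _).trans ?_
    have t1 : |(√(2 * Real.pi))⁻¹ * Real.exp (-x ^ 2 / 2)| ≤ 1 := by
      rw [abs_of_nonneg (by positivity)]
      exact mul_le_one₀ hi he.le he1
    have t2 : |c * ((x ^ 3 - 3 * x) * Real.exp (-x ^ 2 / 2))| ≤ 8 := by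
      rw [abs_mul, abs_mul, Real.abs_exp]
      calc |c| * (|x ^ 3 - 3 * x| * Real.exp (-x ^ 2 / 2))
          ≤ 1 * (8 * (1 + x ^ 2 / 2 + x ^ 4 / 8) * Real.exp (-x ^ 2 / 2)) := by gcongr
        _ ≤ 8 := by linarith
    linarith

end ETS

namespace ETS

open MeasureTheory Complex Filter Topology

/-- The Fourier transform of the signed measure with distribution function `Gf c`. -/
noncomputable def gf (c t : ℝ) : ℂ :=
  ((Real.exp (-t ^ 2 / 2) : ℝ) : ℂ) * (1 - ((c * √(2 * Real.pi) * t ^ 3 : ℝ) : ℂ) * I)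

section smoothing

variable {ι : Type*} [Fintype ι] (p x : ι → ℝ) (c η : ℝ)

/-- Difference of the smoothed empirical transform and the target transform. -/
noncomputable def hd (t : ℝ) : ℂ :=
  (∑ i, (p i : ℂ) * cexp (((t * x i : ℝ) : ℂ) * I)) * ((Real.exp (-η ^ 2 * t ^ 2 / 2) : ℝ) : ℂ)
    - gf c t

/-- Difference of the smoothed empirical distribution function and the target. -/
noncomputable def Dd (y : ℝ) : ℝ :=
  (∑ i, p i * stdNormalCDF ((y - x i) / η)) - Gf c y

/-- The derivative of `Dd`. -/
noncomputable def Dd' (y : ℝ) : ℝ :=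
  (∑ i, p i * ((√(2 * Real.pi))⁻¹ * Real.exp (-((y - x i) / η) ^ 2 / 2) * η⁻¹))
    - ((√(2 * Real.pi))⁻¹ * Real.exp (-y ^ 2 / 2)
      + c * ((y ^ 3 - 3 * y) * Real.exp (-y ^ 2 / 2)))

lemma hasDerivAt_Dd (y : ℝ) : HasDerivAt (Dd p x c η) (Dd' p x c η y) y := by
  unfold Dd Dd'
  refine HasDerivAt.sub ?_ (hasDerivAt_Gf c y)
  refine HasDerivAt.fun_sum fun i _ => HasDerivAt.const_mul _ ?_
  have h1 : HasDerivAt (fun y : ℝ => (y - x i) / η) η⁻¹ y := by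
    simpa using ((hasDerivAt_id y).sub_const (x i)).div_const η
  exact HasDerivAt.comp (h₂ := stdNormalCDF) y (hasDerivAt_Phi ((y - x i) / η)) h1

lemma continuous_Dd' : Continuous (Dd' p x c η) := by
  unfold Dd'; fun_prop

lemma hd_mul_eq (u t : ℝ) :
    hd p x c η t * cexp (((-(u * t) : ℝ) : ℂ) * I)
      = (∑ i, (p i : ℂ) * gk (η ^ 2 / 2) (u - x i) t)
        - (gk (1 / 2) u t - (c * √(2 * Real.pi) : ℝ) * I * ((t : ℂ) ^ 3 * gk (1 / 2) u t)) := by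
  unfold hd gf
  rw [sub_mul, Finset.sum_mul, Finset.sum_mul]
  congr 1
  · refine Finset.sum_congr rfl fun i _ => ?_
    rw [gk_eq, show -η ^ 2 * t ^ 2 / 2 = -(η ^ 2 / 2) * t ^ 2 by ring]
    have : cexp (((-((u - x i) * t) : ℝ) : ℂ) * I)
        = cexp (((t * x i : ℝ) : ℂ) * I) * cexp (((-(u * t) : ℝ) : ℂ) * I) := by
      rw [← Complex.exp_add]; congr 1; push_cast; ring
    rw [this]; ring
  · rw [gk_eq, show -t ^ 2 / 2 = -(1 / 2) * t ^ 2 by ring]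
    push_cast; ring

variable {η}

lemma integrable_hd_mul (hη : 0 < η) (u : ℝ) :
    Integrable (fun t : ℝ => hd p x c η t * cexp (((-(u * t) : ℝ) : ℂ) * I)) := by
  have h2 : (0 : ℝ) < η ^ 2 / 2 := by positivity
  have h0 : (0 : ℝ) < 1 / 2 := by norm_num
  have e : (fun t : ℝ => hd p x c η t * cexp (((-(u * t) : ℝ) : ℂ) * I)) = _ :=
    funext fun t => hd_mul_eq p x c η u t
  rw [e]
  refine Integrable.sub (integrable_finsetSum _ fun i _ => Integrable.const_mul ?_ _)
    (Integrable.sub ?_ (Integrable.const_mul (integrable_gk h0 u 3) _))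
  · simpa using integrable_gk h2 (u - x i) 0
  · simpa using integrable_gk h0 u 0

lemma integral_hd_mul (hη : 0 < η) (u : ℝ) :
    ∫ t : ℝ, hd p x c η t * cexp (((-(u * t) : ℝ) : ℂ) * I)
      = ((2 * Real.pi * Dd' p x c η u : ℝ) : ℂ) := by
  have h2 : (0 : ℝ) < η ^ 2 / 2 := by positivity
  have h0 : (0 : ℝ) < 1 / 2 := by norm_num
  have i1 : ∀ i, Integrable (fun t => (p i : ℂ) * gk (η ^ 2 / 2) (u - x i) t) := fun i =>
    Integrable.const_mul (by simpa using integrable_gk h2 (u - x i) 0) _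
  have i2 : Integrable (fun t => gk (1 / 2) u t) := by simpa using integrable_gk h0 u 0
  have i3 := (integrable_gk h0 u 3).const_mul ((c * √(2 * Real.pi) : ℝ) * I)
  simp_rw [hd_mul_eq]
  have i4 : Integrable (fun t : ℝ => gk (1 / 2) u t
      - (c * √(2 * Real.pi) : ℝ) * I * ((t : ℂ) ^ 3 * gk (1 / 2) u t)) := i2.sub i3
  rw [MeasureTheory.integral_sub (integrable_finsetSum _ fun i _ => i1 i) i4,
    MeasureTheory.integral_sub i2 i3, MeasureTheory.integral_finsetSum _ fun i _ => i1 i]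
  simp_rw [MeasureTheory.integral_const_mul]
  rw [gk_three, gk_half]
  simp_rw [integral_gk h2]
  have hs : √(2 * Real.pi) * √(2 * Real.pi) = 2 * Real.pi := Real.mul_self_sqrt (by positivity)
  have hsc : ((√(2 * Real.pi) : ℝ) : ℂ) * ((√(2 * Real.pi) : ℝ) : ℂ) = 2 * (Real.pi : ℂ) := by
    exact_mod_cast congrArg (fun r : ℝ => (r : ℂ)) hs
  have hi : 2 * Real.pi * (√(2 * Real.pi))⁻¹ = √(2 * Real.pi) := by
    rw [mul_inv_eq_iff_eq_mul₀ sqrt_two_pi_pos.ne', hs]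
  have e1 : √(Real.pi / (η ^ 2 / 2)) = √(2 * Real.pi) * η⁻¹ := by
    rw [show Real.pi / (η ^ 2 / 2) = 2 * Real.pi * (η⁻¹) ^ 2 by field_simp,
      Real.sqrt_mul (by positivity), Real.sqrt_sq (by positivity)]
  rw [e1]
  unfold Dd'
  have key : 2 * Real.pi * ((∑ i, p i * ((√(2 * Real.pi))⁻¹ *
        Real.exp (-((u - x i) / η) ^ 2 / 2) * η⁻¹))
      - ((√(2 * Real.pi))⁻¹ * Real.exp (-u ^ 2 / 2)
      + c * ((u ^ 3 - 3 * u) * Real.exp (-u ^ 2 / 2))))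
      = (∑ i, p i * (√(2 * Real.pi) * η⁻¹ * Real.exp (-(u - x i) ^ 2 / (4 * (η ^ 2 / 2)))))
        - (√(2 * Real.pi) * Real.exp (-u ^ 2 / 2)
          + √(2 * Real.pi) * √(2 * Real.pi) *
            (c * ((u ^ 3 - 3 * u) * Real.exp (-u ^ 2 / 2)))) := by
    rw [hs, mul_sub, mul_add, ← mul_assoc (2 * Real.pi) (√(2 * Real.pi))⁻¹, hi, Finset.mul_sum]
    congr 1
    refine Finset.sum_congr rfl fun i _ => ?_
    have : -((u - x i) / η) ^ 2 / 2 = -(u - x i) ^ 2 / (4 * (η ^ 2 / 2)) := by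
      field_simp; norm_num
    rw [this]
    calc _ = p i * ((2 * Real.pi * (√(2 * Real.pi))⁻¹) * η⁻¹ *
        Real.exp (-(u - x i) ^ 2 / (4 * (η ^ 2 / 2)))) := by ring
      _ = _ := by rw [hi]
  rw [key]
  push_cast
  linear_combination ((√(2 * Real.pi) : ℝ) * (√(2 * Real.pi) : ℝ) * (c : ℂ) *
    ((u : ℂ) ^ 3 - 3 * u) * cexp (-(u : ℂ) ^ 2 / 2)) * Complex.I_sq

lemma integral_exp_bound (z y : ℝ) {t : ℝ} (ht : t ≠ 0) :
    ‖∫ u in z..y, cexp (((-(u * t) : ℝ) : ℂ) * I)‖ ≤ 2 / |t| := by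
  have hc : (-(t : ℂ) * I) ≠ 0 := by simp [ht]
  have e : (fun u : ℝ => cexp (((-(u * t) : ℝ) : ℂ) * I))
      = fun u : ℝ => cexp ((-(t : ℂ) * I) * u) := by
    funext u; congr 1; push_cast; ring
  rw [e, integral_exp_mul_complex hc, norm_div]
  have hn : ‖-(t : ℂ) * I‖ = |t| := by simp
  have h1 : ∀ v : ℝ, ‖cexp (-(t : ℂ) * I * v)‖ = 1 := fun v => by
    rw [← norm_exp_I (-(t * v))]; congr 2; push_cast; ring
  rw [hn]
  have := norm_sub_le (cexp (-(t : ℂ) * I * y)) (cexp (-(t : ℂ) * I * z))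
  rw [h1, h1] at this
  gcongr
  linarith

lemma Dd_sub_le (hη : 0 < η) {B : ℝ} (hB : ∀ t, ‖hd p x c η t‖ ≤ B * |t| / (1 + t ^ 2))
    (z y : ℝ) : |Dd p x c η y - Dd p x c η z| ≤ B := by
  have hftc : ∫ u in z..y, Dd' p x c η u = Dd p x c η y - Dd p x c η z :=
    intervalIntegral.integral_eq_sub_of_hasDerivAt (fun u _ => hasDerivAt_Dd p x c η u)
      ((continuous_Dd' p x c η).intervalIntegrable _ _)
  have hcont : Continuous (hd p x c η) := by unfold hd gf; fun_prop
  have hint : Integrable (hd p x c η) := by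
    simpa using integrable_hd_mul p x c hη 0
  have e : ((2 * Real.pi * (Dd p x c η y - Dd p x c η z) : ℝ) : ℂ)
      = ∫ t : ℝ, hd p x c η t * ∫ u in z..y, cexp (((-(u * t) : ℝ) : ℂ) * I) := by
    rw [← hftc, ← intervalIntegral.integral_const_mul, ← intervalIntegral.integral_ofReal]
    simp_rw [← integral_hd_mul p x c hη, ← intervalIntegral.integral_const_mul]
    refine intervalIntegral_integral_swap ?_
    have hfin : IsFiniteMeasure (volume.restrict (Set.uIoc z y)) := by
      unfold Set.uIoc; infer_instance
    have h1 : Integrable (fun _ : ℝ => (1 : ℂ)) (volume.restrict (Set.uIoc z y)) :=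
      integrable_const _
    refine Integrable.mono (h1.mul_prod hint) ?_ (ae_of_all _ fun w => ?_)
    · refine Continuous.aestronglyMeasurable ?_
      have := hcont.comp (continuous_snd (X := ℝ) (Y := ℝ))
      unfold Function.uncurry
      refine Continuous.mul this ?_
      fun_prop
    · simp only [Function.uncurry, norm_mul, norm_exp_I, mul_one, one_mul, le_refl]
  have hb : ∀ t : ℝ, ‖hd p x c η t * ∫ u in z..y, cexp (((-(u * t) : ℝ) : ℂ) * I)‖
      ≤ 2 * B * (1 + t ^ 2)⁻¹ := by
    intro t
    rw [norm_mul]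
    have hp : 0 < 1 + t ^ 2 := by positivity
    have h1 := hB t
    rcases eq_or_ne t 0 with rfl | ht
    · have h2 := hB 1
      simp at h1 h2
      have : 0 ≤ B := by
        have := norm_nonneg (hd p x c η 1)
        have h3 := this.trans h2
        linarith
      rw [h1]; simp [this]
    · have ht' : 0 < |t| := abs_pos.2 ht
      calc _ ≤ B * |t| / (1 + t ^ 2) * (2 / |t|) :=
            mul_le_mul h1 (integral_exp_bound z y ht) (norm_nonneg _) ((norm_nonneg _).trans h1)
        _ = _ := by field_simp
  have hi : Integrable (fun t : ℝ => 2 * B * (1 + t ^ 2)⁻¹) := integrable_inv_one_add_sq.const_mul _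
  have hfin := norm_integral_le_of_norm_le hi (ae_of_all _ hb)
  rw [← e, MeasureTheory.integral_const_mul, integral_univ_inv_one_add_sq, Complex.norm_real,
    Real.norm_eq_abs, abs_mul, abs_of_pos (by positivity : 0 < 2 * Real.pi)] at hfin
  have := Real.pi_pos
  nlinarith

lemma tendsto_sq_atBot : Tendsto (fun y : ℝ => y ^ 2) atBot atTop := by
  have h := (tendsto_pow_atTop (α := ℝ) (n := 2) (by norm_num)).comp tendsto_neg_atBot_atTop
  exact h.congr fun y => by simp

lemma tendsto_Phi_atBot : Tendsto stdNormalCDF atBot (𝓝 0) := by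
  have h : Tendsto (fun y : ℝ => 2 * Real.exp (-(y ^ 2) / 4)) atBot (𝓝 0) := by
    rw [show (0 : ℝ) = 2 * 0 by ring]
    refine Tendsto.const_mul 2 (Real.tendsto_exp_atBot.comp ?_)
    refine Tendsto.atBot_div_const (by norm_num) (tendsto_neg_atTop_atBot.comp ?_)
    exact (tendsto_sq_atBot)
  refine squeeze_zero' (Eventually.of_forall Phi_nonneg) ?_ h
  filter_upwards [eventually_le_atBot (0 : ℝ)] with y hy
  simpa using Phi_neg_le (u := -y) (by linarith)

lemma tendsto_Gf_atBot : Tendsto (Gf c) atBot (𝓝 0) := by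
  have h : Tendsto (fun y : ℝ => 8 / y ^ 2) atBot (𝓝 0) :=
    Tendsto.const_div_atTop (tendsto_sq_atBot) 8
  have h2 : Tendsto (fun y : ℝ => (1 - y ^ 2) * Real.exp (-y ^ 2 / 2)) atBot (𝓝 0) := by
    refine squeeze_zero_norm' ?_ h
    filter_upwards [eventually_le_atBot (-1 : ℝ)] with y hy
    have h1 : 1 ≤ y ^ 2 := by nlinarith
    have h3 := exp_neg_half_sq_mul y
    have he := Real.exp_pos (-y ^ 2 / 2)
    rw [Real.norm_eq_abs, abs_mul, Real.abs_exp, abs_of_nonpos (by linarith),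
      le_div_iff₀ (by linarith)]
    have : (y ^ 2 - 1) * y ^ 2 ≤ 8 * (1 + y ^ 2 / 2 + y ^ 4 / 8) := by nlinarith
    nlinarith
  unfold Gf
  simpa using tendsto_Phi_atBot.add (h2.const_mul c)

lemma tendsto_Dd_atBot (hη : 0 < η) : Tendsto (Dd p x c η) atBot (𝓝 0) := by
  unfold Dd
  have h1 : Tendsto (fun y => ∑ i, p i * stdNormalCDF ((y - x i) / η)) atBot
      (𝓝 (∑ i, p i * 0)) := by
    refine tendsto_finsetSum _ fun i _ => Tendsto.const_mul _ (tendsto_Phi_atBot.comp ?_)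
    refine Tendsto.atBot_div_const hη ?_
    exact tendsto_atBot_add_const_right _ (-x i) tendsto_id
  simpa using h1.sub (tendsto_Gf_atBot c)

lemma abs_Dd_le (hη : 0 < η) {B : ℝ} (hB : ∀ t, ‖hd p x c η t‖ ≤ B * |t| / (1 + t ^ 2))
    (y : ℝ) : |Dd p x c η y| ≤ B := by
  have h := ((tendsto_Dd_atBot p x c hη).const_sub (Dd p x c η y)).abs
  rw [sub_zero] at h
  exact le_of_tendsto' h fun z => Dd_sub_le p x c hη hB z y

/-- Smoothing inequality: closeness of the (Gaussian-damped) characteristic function of a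
finite distribution to the transform of `Gf c` gives closeness of the distribution
functions; `a` is a free parameter for removing the smoothing. -/
theorem smoothing_ineq (hp : ∀ i, 0 ≤ p i) (hp1 : ∑ i, p i = 1) (hη : 0 < η) (hc : |c| ≤ 1)
    {a : ℝ} (ha : 0 ≤ a) {B : ℝ} (hB : ∀ t, ‖hd p x c η t‖ ≤ B * |t| / (1 + t ^ 2)) (y : ℝ) :
    |(∑ i, p i * (if x i < y then 1 else 0)) - Gf c y|
      ≤ B + 2 * Real.exp (-((a / η) ^ 2) / 4) + 9 * a := by
  have hu : 0 ≤ a / η := by positivity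
  set e := 2 * Real.exp (-((a / η) ^ 2) / 4) with he
  have he0 : 0 ≤ e := by positivity
  have up : (∑ i, p i * (if x i < y then 1 else 0))
      ≤ (∑ i, p i * stdNormalCDF ((y + a - x i) / η)) + e := by
    have : (∑ i, p i * stdNormalCDF ((y + a - x i) / η)) + e
        = ∑ i, p i * (stdNormalCDF ((y + a - x i) / η) + e) := by
      simp_rw [mul_add, Finset.sum_add_distrib, ← Finset.sum_mul, hp1, one_mul]
    rw [this]
    refine Finset.sum_le_sum fun i _ => mul_le_mul_of_nonneg_left ?_ (hp i)
    have h0 := Phi_nonneg ((y + a - x i) / η)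
    split_ifs with h
    · have h1 := Phi_ge hu
      have h2 : stdNormalCDF (a / η) ≤ stdNormalCDF ((y + a - x i) / η) :=
        Phi_mono (by gcongr; linarith)
      linarith
    · linarith
  have lo : (∑ i, p i * stdNormalCDF ((y - a - x i) / η)) - e
      ≤ ∑ i, p i * (if x i < y then 1 else 0) := by
    have : (∑ i, p i * stdNormalCDF ((y - a - x i) / η)) - e
        = ∑ i, p i * (stdNormalCDF ((y - a - x i) / η) - e) := by
      simp_rw [mul_sub, Finset.sum_sub_distrib, ← Finset.sum_mul, hp1, one_mul]
    rw [this]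
    refine Finset.sum_le_sum fun i _ => mul_le_mul_of_nonneg_left ?_ (hp i)
    split_ifs with h
    · have h0 := Phi_le_one ((y - a - x i) / η)
      linarith
    · have h1 := Phi_neg_le hu
      have h2 : stdNormalCDF ((y - a - x i) / η) ≤ stdNormalCDF (-(a / η)) := by
        refine Phi_mono ?_
        rw [← neg_div]
        gcongr; linarith
      linarith
  have d1 := abs_le.1 (abs_Dd_le p x c hη hB (y + a))
  have d2 := abs_le.1 (abs_Dd_le p x c hη hB (y - a))
  have g1 := abs_le.1 (Gf_lipschitz hc (y + a) y)
  have g2 := abs_le.1 (Gf_lipschitz hc (y - a) y)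
  rw [show y + a - y = a by ring, abs_of_nonneg ha] at g1
  rw [show y - a - y = -a by ring, abs_neg, abs_of_nonneg ha] at g2
  unfold Dd at d1 d2
  rw [abs_le]
  constructor <;> linarith

end smoothing

end ETS

/-! ### Comparison of characteristic functions -/

namespace ETS

open Complex

lemma poly_exp_absorb (t : ℝ) :
    (t ^ 2 + t ^ 4 + t ^ 6) * Real.exp (-(t ^ 2 / 5)) ≤ 320000 * (|t| / (1 + t ^ 2)) := by
  have hy : 0 < 1 + t ^ 2 := by positivity
  have h1 : ((1 + t ^ 2) / 20) ^ 4 ≤ Real.exp ((1 + t ^ 2) / 5) := by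
    have : Real.exp ((1 + t ^ 2) / 5) = Real.exp ((1 + t ^ 2) / 20) ^ 4 := by
      rw [← Real.exp_nat_mul]; congr 1; push_cast; ring
    rw [this]
    refine pow_le_pow_left₀ (by positivity) ?_ 4
    linarith [Real.add_one_le_exp ((1 + t ^ 2) / 20)]
  have h2 : Real.exp ((1 + t ^ 2) / 5) ≤ 2 * Real.exp (t ^ 2 / 5) := by
    rw [show (1 + t ^ 2) / 5 = 1 / 5 + t ^ 2 / 5 by ring, Real.exp_add]
    gcongr
    have h3 : Real.exp (1 / 5) ^ 5 = Real.exp 1 := by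
      rw [← Real.exp_nat_mul]; norm_num
    have h4 := Real.exp_one_lt_d9
    by_contra hcon
    push Not at hcon
    have : (2 : ℝ) ^ 5 < Real.exp (1 / 5) ^ 5 := pow_lt_pow_left₀ hcon (by norm_num) (by norm_num)
    norm_num at this
    norm_num at h3
    linarith
  have h5 : (1 + t ^ 2) ^ 4 ≤ 320000 * Real.exp (t ^ 2 / 5) := by
    have e : ((1 + t ^ 2) / 20) ^ 4 = (1 + t ^ 2) ^ 4 / 160000 := by ring
    rw [e] at h1
    linarith
  have ha := abs_nonneg t
  have ht2 : |t| ^ 2 = t ^ 2 := sq_abs t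
  have hle : |t| ≤ 1 + t ^ 2 := by nlinarith [sq_nonneg (|t| - 1)]
  have h6 : (t ^ 2 + t ^ 4 + t ^ 6) * (1 + t ^ 2) ≤ |t| * (1 + t ^ 2) ^ 4 := by
    have e : (t ^ 2 + t ^ 4 + t ^ 6) = |t| * (|t| * (1 + t ^ 2 + t ^ 4)) := by
      rw [← mul_assoc, ← sq, ht2]; ring
    rw [e, mul_assoc]
    refine mul_le_mul_of_nonneg_left ?_ ha
    have h7 : 1 + t ^ 2 + t ^ 4 ≤ (1 + t ^ 2) ^ 2 := by nlinarith [sq_nonneg t]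
    calc |t| * (1 + t ^ 2 + t ^ 4) * (1 + t ^ 2)
        ≤ (1 + t ^ 2) * (1 + t ^ 2) ^ 2 * (1 + t ^ 2) := by gcongr
      _ = _ := by ring
  rw [Real.exp_neg, ← div_eq_mul_inv, ← mul_div_assoc, div_le_div_iff₀ (Real.exp_pos _) hy]
  calc _ ≤ |t| * (1 + t ^ 2) ^ 4 := h6
    _ ≤ |t| * (320000 * Real.exp (t ^ 2 / 5)) := by gcongr
    _ = _ := by ring

lemma exp_neg_half_sq_six {t : ℝ} (ht : t ≠ 0) :
    Real.exp (-t ^ 2 / 2) ≤ 48 / |t| ^ 6 := by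
  have h := Real.pow_div_factorial_le_exp (t ^ 2 / 2) (by positivity) 3
  have ht' : 0 < |t| ^ 6 := by positivity
  have e : Real.exp (-t ^ 2 / 2) * Real.exp (t ^ 2 / 2) = 1 := by
    rw [← Real.exp_add]; simp; ring
  have e6 : |t| ^ 6 = t ^ 6 := by rw [← abs_pow, abs_of_nonneg (by positivity)]
  rw [le_div_iff₀ ht', e6]
  have h3 : t ^ 6 ≤ 48 * Real.exp (t ^ 2 / 2) := by
    have : (t ^ 2 / 2) ^ 3 / ((Nat.factorial 3 : ℕ) : ℝ) = t ^ 6 / 48 := by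
      norm_num [Nat.factorial]; ring
    rw [this] at h; linarith
  calc _ ≤ Real.exp (-t ^ 2 / 2) * (48 * Real.exp (t ^ 2 / 2)) := by gcongr
    _ = 48 := by rw [← mul_assoc, mul_comm _ 48, mul_assoc, e, mul_one]

/-- The coefficient of the correction term, with `r = √(log n)`. -/
noncomputable def cc (r : ℝ) : ℝ := √3 / (8 * r * √(2 * Real.pi))

lemma cc_mul (r : ℝ) : cc r * √(2 * Real.pi) = √3 / (8 * r) := by
  have := sqrt_two_pi_pos.ne'
  unfold cc
  rw [← div_div]; field_simp

lemma sqrt3_bounds : 1 ≤ √3 ∧ √3 ≤ 2 ∧ √3 ^ 2 = 3 := by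
  refine ⟨?_, ?_, Real.sq_sqrt (by norm_num)⟩
  · rw [Real.one_le_sqrt]; norm_num
  · rw [Real.sqrt_le_left (by norm_num)]; norm_num

lemma norm_gf_le {r : ℝ} (hr : 1 ≤ r) (t : ℝ) :
    ‖gf (cc r) t‖ ≤ Real.exp (-t ^ 2 / 2) * (1 + |t| ^ 3) := by
  unfold gf
  rw [norm_mul, Complex.norm_real, Real.norm_eq_abs, Real.abs_exp, cc_mul]
  refine mul_le_mul_of_nonneg_left ?_ (Real.exp_pos _).le
  refine (norm_sub_le _ _).trans ?_
  rw [norm_mul, Complex.norm_I, mul_one, norm_one, Complex.norm_real, Real.norm_eq_abs, abs_mul,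
    abs_pow]
  have h : |√3 / (8 * r)| ≤ 1 := by
    rw [abs_of_nonneg (by positivity), div_le_one (by positivity)]
    linarith [sqrt3_bounds.2.1]
  have := mul_le_mul_of_nonneg_right h (by positivity : 0 ≤ |t| ^ 3)
  linarith

/-- `exp (-i s m) M(s)` with `s = √3 t / r³`: the characteristic function of the normalized
sum of logarithms. -/
noncomputable def fch (F : Type) [Field F] [Fintype F] (n : ℕ) (r t : ℝ) : ℂ :=
  cexp (((-(√3 * t / r ^ 3 * Ex F n logP) : ℝ) : ℂ) * I) * Mf F (√3 * t / r ^ 3) n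

variable {F : Type} [Field F] [Fintype F]

lemma norm_fch (n : ℕ) (r t : ℝ) : ‖fch F n r t‖ = ‖Mf F (√3 * t / r ^ 3) n‖ := by
  unfold fch; rw [norm_mul, norm_exp_I, one_mul]

lemma exp_sub_one_sub_le (z : ℂ) : ‖cexp z - 1 - z‖ ≤ ‖z‖ ^ 2 * Real.exp ‖z‖ := by
  have h := Complex.norm_exp_sub_sum_le_norm_mul_exp z 2
  simp [Finset.sum_range_succ] at h
  rwa [← sub_sub] at h

set_option maxHeartbeats 1000000 in
/-- Third-order expansion of the normalized characteristic function in the range where the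
exponential approximation applies. -/
lemma fch_central {n : ℕ} {r : ℝ} (hr : 1 ≤ r) (hrn : r ^ 2 = Real.log n) (hL : L0 ≤ r ^ 2)
    {t : ℝ} (ht : √3 * |t| ≤ ee * r) :
    ‖fch F n r t - gf (cc r) t‖
      ≤ (12 * K1 + 20 * CE + 1) / r ^ 2 * ((t ^ 2 + t ^ 4 + t ^ 6) * Real.exp (-(t ^ 2 / 5))) := by
  obtain ⟨h31, h32, h3⟩ := sqrt3_bounds
  have hr0 : 0 < r := by linarith
  set s := √3 * t / r ^ 3 with hs
  set L := Real.log n with hLdef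
  have hn : 1 ≤ n := by
    rcases Nat.eq_zero_or_pos n with rfl | h
    · simp at hLdef; nlinarith
    · exact h
  have habs : |s| = √3 * |t| / r ^ 3 := by
    rw [hs, abs_div, abs_mul, abs_of_nonneg (by positivity : 0 ≤ √3),
      abs_of_nonneg (by positivity : 0 ≤ r ^ 3)]
  have hsL : |s| * L ≤ ee := by
    rw [habs, ← hrn, div_mul_eq_mul_div, div_le_iff₀ (by positivity)]
    calc √3 * |t| * r ^ 2 ≤ ee * r * r ^ 2 := by gcongr
      _ = _ := by ring
  obtain ⟨he1, he2, he3⟩ := ee_bounds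
  have hLL : L0 ≤ L := hrn ▸ hL
  have hL1 : 1 ≤ L := by rw [← hrn]; nlinarith
  have hexp := WW_expansion (F := F) hn hL1 (hsL.trans (by linarith))
  have happ := Mf_approx (F := F) hLL hsL
  have hE := norm_exp_WW (F := F) hLL hsL
  have a2 : s ^ 2 * L ^ 3 = 3 * t ^ 2 := by
    rw [hs, ← hrn, div_pow, mul_pow, h3]; field_simp
  have a1 : s ^ 2 * L ^ 2 = 3 * t ^ 2 / r ^ 2 := by
    rw [hs, ← hrn, div_pow, mul_pow, h3]; field_simp
  have a3 : s ^ 3 * L ^ 4 / 24 = √3 / (8 * r) * t ^ 3 := by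
    have : √3 ^ 3 = 3 * √3 := by rw [pow_succ, h3]
    rw [hs, ← hrn, div_pow, mul_pow, this]; field_simp; ring
  have a4 : s ^ 4 * L ^ 5 = 9 * t ^ 4 / r ^ 2 := by
    have : √3 ^ 4 = 9 := by
      rw [show √3 ^ 4 = (√3 ^ 2) ^ 2 by ring, h3]; norm_num
    rw [hs, ← hrn, div_pow, mul_pow, this]; field_simp
  set W := WW (dl F s) n with hW
  set m := Ex F n logP with hm
  set κ := √3 / (8 * r) with hκ
  set θ : ℂ := W - ((s : ℂ) * (m : ℝ) * I - ((s ^ 2 * L ^ 3 / 6 : ℝ) : ℂ)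
      - ((s ^ 3 * L ^ 4 / 24 : ℝ) : ℂ) * I) with hθ
  have hCE := CE_ge
  have hK1 := K1_ge
  have hθ1 : ‖θ‖ ≤ 9 * CE / r ^ 2 * (t ^ 2 + t ^ 4) := by
    refine hexp.trans ?_
    rw [a1, a4]
    have : 9 * CE / r ^ 2 * (t ^ 2 + t ^ 4) - CE * (3 * t ^ 2 / r ^ 2 + 9 * t ^ 4 / r ^ 2)
        = 6 * CE * t ^ 2 / r ^ 2 := by field_simp; ring
    have h0 : 0 ≤ 6 * CE * t ^ 2 / r ^ 2 := by positivity
    linarith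
  have hθ2 : ‖θ‖ ≤ t ^ 2 / 4 := by
    refine hexp.trans ?_
    have b1 : CE * (s ^ 2 * L ^ 2) ≤ t ^ 2 / 8 := by
      rw [a1]
      have : 24 * CE ≤ r ^ 2 := hL
      rw [← mul_div_assoc, div_le_iff₀ (by positivity)]
      nlinarith [sq_nonneg t]
    have b2 : CE * (s ^ 4 * L ^ 5) ≤ t ^ 2 / 8 := by
      have e : s ^ 4 * L ^ 5 = (|s| * L) ^ 2 * (s ^ 2 * L ^ 3) := by
        rw [mul_pow, sq_abs]; ring
      rw [e, a2, ← mul_assoc]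
      have : CE * (|s| * L) ^ 2 ≤ 1 / 24 := by
        refine le_trans ?_ he2
        gcongr
      nlinarith [sq_nonneg t]
    linarith
  have hκ3 : |κ * t ^ 3| ≤ t ^ 2 / 800 := by
    rw [abs_mul, abs_pow, abs_of_nonneg (by positivity : 0 ≤ κ)]
    have e : κ * |t| ^ 3 = (√3 * |t|) / (8 * r) * t ^ 2 := by
      rw [hκ, pow_succ, sq_abs]; ring
    have : (√3 * |t|) / (8 * r) ≤ 1 / 800 := by
      rw [div_le_div_iff₀ (by positivity) (by norm_num)]
      have := mul_le_mul_of_nonneg_right he1 hr0.le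
      linarith
    rw [e]
    have := mul_le_mul_of_nonneg_right this (sq_nonneg t)
    linarith
  -- the exponent of the centred function is `-t²/2 + z`
  set z : ℂ := θ - ((κ * t ^ 3 : ℝ) : ℂ) * I with hz
  have hzn : ‖z‖ ≤ ‖θ‖ + |κ * t ^ 3| := by
    refine (norm_sub_le _ _).trans ?_
    rw [norm_mul, Complex.norm_I, mul_one, Complex.norm_real, Real.norm_eq_abs]
  have hz3 : ‖z‖ ≤ 3 * t ^ 2 / 10 := by linarith [sq_nonneg t]
  have hzsq : ‖z‖ ^ 2 ≤ 1 / r ^ 2 * (9 * CE * (t ^ 4 + t ^ 6) + t ^ 6) := by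
    have c1 : ‖z‖ ^ 2 ≤ 2 * ‖θ‖ ^ 2 + 2 * |κ * t ^ 3| ^ 2 := by
      have := norm_nonneg z
      nlinarith [sq_nonneg (‖θ‖ - |κ * t ^ 3|)]
    have c2 : ‖θ‖ ^ 2 ≤ t ^ 2 / 4 * (9 * CE / r ^ 2 * (t ^ 2 + t ^ 4)) := by
      rw [sq]; exact mul_le_mul hθ2 hθ1 (norm_nonneg _) (by positivity)
    have c3 : |κ * t ^ 3| ^ 2 = 3 / 64 * t ^ 6 / r ^ 2 := by
      rw [sq_abs, hκ, mul_pow, div_pow, h3]; field_simp; ring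
    have : 1 / r ^ 2 * (9 * CE * (t ^ 4 + t ^ 6) + t ^ 6)
        - (2 * (t ^ 2 / 4 * (9 * CE / r ^ 2 * (t ^ 2 + t ^ 4))) + 2 * (3 / 64 * t ^ 6 / r ^ 2))
        = (9 / 2 * CE * (t ^ 4 + t ^ 6) + 29 / 32 * t ^ 6) / r ^ 2 := by field_simp; ring
    have h0 : 0 ≤ (9 / 2 * CE * (t ^ 4 + t ^ 6) + 29 / 32 * t ^ 6) / r ^ 2 := by positivity
    rw [c3] at c1
    linarith
  have hsplit : cexp (((-(s * m) : ℝ) : ℂ) * I) * cexp W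
      = ((Real.exp (-t ^ 2 / 2) : ℝ) : ℂ) * cexp z := by
    rw [← Complex.exp_add, Complex.ofReal_exp, ← Complex.exp_add]
    congr 1
    rw [hz, hθ, a2, a3]
    push_cast; ring
  have hmain : fch F n r t - gf (cc r) t
      = cexp (((-(s * m) : ℝ) : ℂ) * I) * (Mf F s n - cexp W)
        + ((Real.exp (-t ^ 2 / 2) : ℝ) : ℂ) * ((cexp z - 1 - z) + θ) := by
    rw [mul_sub, hsplit]
    unfold fch gf
    rw [cc_mul, hz]
    ring
  have hEt : Real.exp (-(s ^ 2 * L ^ 3 / 12)) ≤ Real.exp (-(t ^ 2 / 5)) := by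
    rw [a2]; refine Real.exp_le_exp.2 ?_
    nlinarith [sq_nonneg t]
  have p1 : ‖cexp (((-(s * m) : ℝ) : ℂ) * I) * (Mf F s n - cexp W)‖
      ≤ 12 * K1 / r ^ 2 * t ^ 2 * Real.exp (-(t ^ 2 / 5)) := by
    rw [norm_mul, norm_exp_I, one_mul]
    refine happ.trans ?_
    rw [a1]
    calc 4 * K1 * (3 * t ^ 2 / r ^ 2) * ‖cexp W‖
        ≤ 4 * K1 * (3 * t ^ 2 / r ^ 2) * Real.exp (-(t ^ 2 / 5)) := by
          gcongr; exact hE.trans hEt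
      _ = _ := by ring
  have p2 : ‖((Real.exp (-t ^ 2 / 2) : ℝ) : ℂ) * ((cexp z - 1 - z) + θ)‖
      ≤ (1 / r ^ 2 * (9 * CE * (t ^ 4 + t ^ 6) + t ^ 6) + 9 * CE / r ^ 2 * (t ^ 2 + t ^ 4))
          * Real.exp (-(t ^ 2 / 5)) := by
    rw [norm_mul, Complex.norm_real, Real.norm_eq_abs, Real.abs_exp]
    have q1 : Real.exp (-t ^ 2 / 2) * Real.exp ‖z‖ ≤ Real.exp (-(t ^ 2 / 5)) := by
      rw [← Real.exp_add]; exact Real.exp_le_exp.2 (by linarith)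
    have q2 : Real.exp (-t ^ 2 / 2) ≤ Real.exp (-(t ^ 2 / 5)) :=
      Real.exp_le_exp.2 (by linarith [sq_nonneg t])
    have q3 := exp_sub_one_sub_le z
    calc _ ≤ Real.exp (-t ^ 2 / 2) * (‖z‖ ^ 2 * Real.exp ‖z‖ + ‖θ‖) := by
          gcongr; exact (norm_add_le _ _).trans (by linarith)
      _ = ‖z‖ ^ 2 * (Real.exp (-t ^ 2 / 2) * Real.exp ‖z‖) + ‖θ‖ * Real.exp (-t ^ 2 / 2) := by ring
      _ ≤ 1 / r ^ 2 * (9 * CE * (t ^ 4 + t ^ 6) + t ^ 6) * Real.exp (-(t ^ 2 / 5))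
          + 9 * CE / r ^ 2 * (t ^ 2 + t ^ 4) * Real.exp (-(t ^ 2 / 5)) := by
          gcongr
      _ = _ := by ring
  rw [hmain]
  refine (norm_add_le _ _).trans ((add_le_add p1 p2).trans ?_)
  rw [← add_mul, ← mul_assoc]
  refine mul_le_mul_of_nonneg_right ?_ (Real.exp_pos _).le
  have : (12 * K1 + 20 * CE + 1) / r ^ 2 * (t ^ 2 + t ^ 4 + t ^ 6)
      - (12 * K1 / r ^ 2 * t ^ 2 + (1 / r ^ 2 * (9 * CE * (t ^ 4 + t ^ 6) + t ^ 6)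
        + 9 * CE / r ^ 2 * (t ^ 2 + t ^ 4)))
      = (12 * K1 * (t ^ 4 + t ^ 6) + CE * (11 * t ^ 2 + 2 * t ^ 4 + 11 * t ^ 6)
        + (t ^ 2 + t ^ 4)) / r ^ 2 := by
    field_simp; ring
  have h0 : 0 ≤ (12 * K1 * (t ^ 4 + t ^ 6) + CE * (11 * t ^ 2 + 2 * t ^ 4 + 11 * t ^ 6)
        + (t ^ 2 + t ^ 4)) / r ^ 2 := by positivity
  linarith

end ETS

namespace ETS

open Complex

/-- Constant in the bound for the difference of characteristic functions. -/
noncomputable def BB : ℝ :=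
  320000 * (12 * K1 + 20 * CE + 2) + 2 * (288 / ee ^ 2 + 48 + 144 * (192 / ee ^ 3) ^ 4)

/-- Lower threshold for `r = √(log n)`. -/
noncomputable def r0 : ℝ := 4 * L0 / ee

lemma L0_ge : 624 ≤ L0 := by have := CE_ge; unfold L0; linarith

lemma r0_facts {r : ℝ} (hr : r0 ≤ r) : 1 ≤ r ∧ L0 ≤ r ^ 2 ∧ 2 ≤ ee * r ∧ 4 * L0 ≤ ee * r := by
  have h1 := ee_pos
  have h2 := ee_bounds.1
  have h3 := L0_ge
  have h4 : 4 * L0 ≤ ee * r := by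
    unfold r0 at hr
    rw [div_le_iff₀ h1] at hr
    linarith
  have hr0 : 0 < r := by
    by_contra h
    push Not at h
    nlinarith
  have h5 : L0 ≤ r := by nlinarith
  exact ⟨by linarith, by nlinarith, by linarith, h4⟩

variable {F : Type} [Field F] [Fintype F]

lemma inner_bound {n : ℕ} {r η : ℝ} (hr : r0 ≤ r) (hrn : r ^ 2 = Real.log n)
    (hη2 : η ^ 2 * r ^ 2 ≤ 1) {t : ℝ} (ht : √3 * |t| ≤ ee * r) :
    ‖fch F n r t * ((Real.exp (-η ^ 2 * t ^ 2 / 2) : ℝ) : ℂ) - gf (cc r) t‖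
      ≤ 320000 * (12 * K1 + 20 * CE + 2) / r ^ 2 * |t| / (1 + t ^ 2) := by
  obtain ⟨h1, h2, -, -⟩ := r0_facts hr
  have hr0 : 0 < r := by linarith
  have hc := fch_central (F := F) h1 hrn h2 ht
  set D := Real.exp (-η ^ 2 * t ^ 2 / 2) with hD
  have hD1 : D ≤ 1 := Real.exp_le_one_iff.2 (by nlinarith [mul_nonneg (sq_nonneg η) (sq_nonneg t)])
  have hD0 : 0 < D := Real.exp_pos _
  have hD2 : 1 - D ≤ t ^ 2 / (2 * r ^ 2) := by
    have e1 := Real.add_one_le_exp (-η ^ 2 * t ^ 2 / 2)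
    have e2 : η ^ 2 ≤ 1 / r ^ 2 := by rwa [le_div_iff₀ (by positivity)]
    have e3 : η ^ 2 * t ^ 2 / 2 ≤ 1 / r ^ 2 * t ^ 2 / 2 := by gcongr
    have e4 : 1 / r ^ 2 * t ^ 2 / 2 = t ^ 2 / (2 * r ^ 2) := by field_simp
    linarith
  have e : fch F n r t * (D : ℂ) - gf (cc r) t
      = (fch F n r t - gf (cc r) t) * (D : ℂ) + gf (cc r) t * ((D - 1 : ℝ) : ℂ) := by
    push_cast; ring
  have hg := norm_gf_le h1 t
  have q2 : Real.exp (-t ^ 2 / 2) ≤ Real.exp (-(t ^ 2 / 5)) :=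
    Real.exp_le_exp.2 (by linarith [sq_nonneg t])
  have t5 : (1 + |t| ^ 3) * (t ^ 2 / (2 * r ^ 2)) ≤ 1 / r ^ 2 * (t ^ 2 + t ^ 4 + t ^ 6) := by
    have h5 : |t| ^ 3 ≤ t ^ 2 + t ^ 4 := by
      have e : |t| ^ 3 = |t| * t ^ 2 := by rw [pow_succ, sq_abs]; ring
      have : |t| ≤ 1 + t ^ 2 := by
        rw [← sq_abs]; nlinarith [sq_nonneg (|t| - 1), abs_nonneg t]
      rw [e]; nlinarith [sq_nonneg t]
    calc _ ≤ (1 + (t ^ 2 + t ^ 4)) * (t ^ 2 / (2 * r ^ 2)) := by gcongr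
      _ = 1 / 2 * (1 / r ^ 2 * (t ^ 2 + t ^ 4 + t ^ 6)) := by field_simp; ring
      _ ≤ _ := by
        have : 0 ≤ 1 / r ^ 2 * (t ^ 2 + t ^ 4 + t ^ 6) := by positivity
        linarith
  have p2 : ‖gf (cc r) t * ((D - 1 : ℝ) : ℂ)‖
      ≤ 1 / r ^ 2 * ((t ^ 2 + t ^ 4 + t ^ 6) * Real.exp (-(t ^ 2 / 5))) := by
    rw [norm_mul, Complex.norm_real, Real.norm_eq_abs, abs_of_nonpos (by linarith)]
    calc _ ≤ Real.exp (-(t ^ 2 / 5)) * (1 + |t| ^ 3) * (t ^ 2 / (2 * r ^ 2)) := by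
          refine mul_le_mul (hg.trans (by gcongr)) (by linarith) (by linarith) (by positivity)
      _ = Real.exp (-(t ^ 2 / 5)) * ((1 + |t| ^ 3) * (t ^ 2 / (2 * r ^ 2))) := by ring
      _ ≤ Real.exp (-(t ^ 2 / 5)) * (1 / r ^ 2 * (t ^ 2 + t ^ 4 + t ^ 6)) := by gcongr
      _ = _ := by ring
  have p1 : ‖(fch F n r t - gf (cc r) t) * (D : ℂ)‖
      ≤ (12 * K1 + 20 * CE + 1) / r ^ 2 * ((t ^ 2 + t ^ 4 + t ^ 6) * Real.exp (-(t ^ 2 / 5))) := by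
    rw [norm_mul, Complex.norm_real, Real.norm_eq_abs, abs_of_pos hD0]
    exact (mul_le_of_le_one_right (norm_nonneg _) hD1).trans hc
  have hp := poly_exp_absorb t
  have hK1 := K1_ge
  have hCE := CE_ge
  rw [e]
  calc _ ≤ _ := norm_add_le _ _
    _ ≤ _ := add_le_add p1 p2
    _ = (12 * K1 + 20 * CE + 2) / r ^ 2 *
          ((t ^ 2 + t ^ 4 + t ^ 6) * Real.exp (-(t ^ 2 / 5))) := by ring
    _ ≤ (12 * K1 + 20 * CE + 2) / r ^ 2 * (320000 * (|t| / (1 + t ^ 2))) := by gcongr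
    _ = _ := by ring

/-- Frequencies outside the central range: the decay of `Mf` in moderate ranges, and the Gaussian
damping beyond. -/
lemma fch_outer {n : ℕ} {r η : ℝ} (hr : r0 ≤ r) (hrn : r ^ 2 = Real.log n)
    (hη3 : 1 ≤ η ^ 3 * r ^ 4) {t : ℝ} (ht : ee * r < √3 * |t|) :
    ‖fch F n r t‖ * Real.exp (-η ^ 2 * t ^ 2 / 2)
      ≤ (48 + 144 * (192 / ee ^ 3) ^ 4) / (r ^ 2 * |t|) := by
  obtain ⟨h1, h2, h4, h5⟩ := r0_facts hr
  obtain ⟨h31, h32, h3⟩ := sqrt3_bounds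
  have he := ee_pos
  have hr0 : 0 < r := by linarith
  have htp : 0 < |t| := by
    by_contra h
    push Not at h
    nlinarith
  have ht0 : t ≠ 0 := abs_pos.1 htp
  have hX : 0 ≤ 144 * (192 / ee ^ 3) ^ 4 := by positivity
  rcases le_or_gt |t| (r ^ 2) with hle | hgt
  · have hD : Real.exp (-η ^ 2 * t ^ 2 / 2) ≤ 1 :=
      Real.exp_le_one_iff.2 (by nlinarith [mul_nonneg (sq_nonneg η) (sq_nonneg t)])
    have hsabs : |√3 * t / r ^ 3| = √3 * |t| / r ^ 3 := by
      rw [abs_div, abs_mul, abs_of_nonneg (by positivity : 0 ≤ √3),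
        abs_of_nonneg (by positivity : 0 ≤ r ^ 3)]
    set ℓ := ee * r ^ 3 / (√3 * |t|) with hℓ
    have hs3 : 0 < √3 * |t| := by positivity
    have a1 : |√3 * t / r ^ 3| * ℓ = ee := by
      rw [hsabs, hℓ]; field_simp
    have a2 : ee * r / 2 ≤ ℓ := by
      rw [hℓ, div_le_div_iff₀ (by norm_num) hs3]
      have : √3 * |t| ≤ 2 * r ^ 2 := mul_le_mul h32 hle (abs_nonneg _) (by norm_num)
      calc ee * r * (√3 * |t|) ≤ ee * r * (2 * r ^ 2) := by gcongr
        _ = _ := by ring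
    have a3 : ℓ ≤ Real.log n := by
      rw [← hrn, hℓ, div_le_iff₀ hs3]
      calc ee * r ^ 3 = r ^ 2 * (ee * r) := by ring
        _ ≤ r ^ 2 * (√3 * |t|) := by gcongr
    have hM := Mf_large (F := F) a1 (by linarith) a3
    have hx0 : 0 < ee ^ 3 * r / 192 := by positivity
    have hM2 : Real.exp (-(ee ^ 2 * ℓ / 96)) ≤ Real.exp (-(ee ^ 3 * r / 192)) := by
      refine Real.exp_le_exp.2 ?_
      have : ee ^ 2 * (ee * r / 2) ≤ ee ^ 2 * ℓ := by gcongr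
      have e : ee ^ 2 * (ee * r / 2) = ee ^ 3 * r / 2 := by ring
      linarith
    have hM3 : Real.exp (-(ee ^ 3 * r / 192)) ≤ 24 * (192 / ee ^ 3) ^ 4 / r ^ 4 := by
      have h := Real.pow_div_factorial_le_exp (ee ^ 3 * r / 192) hx0.le 4
      rw [Real.exp_neg]
      have e : 24 * (192 / ee ^ 3) ^ 4 / r ^ 4
          = ((ee ^ 3 * r / 192) ^ 4 / ((Nat.factorial 4 : ℕ) : ℝ))⁻¹ := by
        norm_num [Nat.factorial]; field_simp
      rw [e]
      exact inv_anti₀ (by positivity) h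
    rw [norm_fch]
    calc _ ≤ ‖Mf F (√3 * t / r ^ 3) n‖ * 1 := by gcongr
      _ ≤ 6 * (24 * (192 / ee ^ 3) ^ 4 / r ^ 4) := by linarith
      _ = 144 * (192 / ee ^ 3) ^ 4 / (r ^ 2 * r ^ 2) := by ring
      _ ≤ (48 + 144 * (192 / ee ^ 3) ^ 4) / (r ^ 2 * |t|) := by gcongr; linarith
  · have hf : ‖fch F n r t‖ ≤ 1 := by rw [norm_fch]; exact norm_Mf_le _ _
    have hη0 : 0 < η := by
      by_contra h
      push Not at h
      have h3 : η ^ 3 ≤ 0 := Odd.pow_nonpos (by decide) h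
      have : η ^ 3 * r ^ 4 ≤ 0 := mul_nonpos_of_nonpos_of_nonneg h3 (by positivity)
      linarith
    have h6 := exp_neg_half_sq_six (t := η * t) (mul_ne_zero hη0.ne' ht0)
    have e0 : -(η * t) ^ 2 / 2 = -η ^ 2 * t ^ 2 / 2 := by ring
    rw [e0, abs_mul, abs_of_pos hη0] at h6
    have hbig : r ^ 2 * |t| ≤ (η * |t|) ^ 6 := by
      have e1 : 1 ≤ η ^ 6 * r ^ 8 := by
        have := one_le_pow₀ hη3 (n := 2)
        calc 1 ≤ _ := this
          _ = _ := by ring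
      calc r ^ 2 * |t| = 1 * (r ^ 2 * |t|) := by ring
        _ ≤ η ^ 6 * r ^ 8 * (r ^ 2 * |t|) := by gcongr
        _ = η ^ 6 * (r ^ 2) ^ 5 * |t| := by ring
        _ ≤ η ^ 6 * |t| ^ 5 * |t| := by gcongr
        _ = _ := by ring
    calc _ ≤ 1 * (48 / (η * |t|) ^ 6) := by gcongr
      _ ≤ 48 / (r ^ 2 * |t|) := by rw [one_mul]; gcongr
      _ ≤ _ := by gcongr; linarith

/-- The damped characteristic function is uniformly within `O(1 / log n)`, with the weight
`|t| / (1 + t²)`, of the transform of the expansion. -/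
theorem fch_bound {n : ℕ} {r η : ℝ} (hr : r0 ≤ r) (hrn : r ^ 2 = Real.log n)
    (hη2 : η ^ 2 * r ^ 2 ≤ 1) (hη3 : 1 ≤ η ^ 3 * r ^ 4) (t : ℝ) :
    ‖fch F n r t * ((Real.exp (-η ^ 2 * t ^ 2 / 2) : ℝ) : ℂ) - gf (cc r) t‖
      ≤ BB / r ^ 2 * |t| / (1 + t ^ 2) := by
  obtain ⟨h1, h2, h4, h5⟩ := r0_facts hr
  obtain ⟨h31, h32, h3⟩ := sqrt3_bounds
  have he := ee_pos
  have hr0 : 0 < r := by linarith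
  have hK1 := K1_ge
  have hCE := CE_ge
  rcases le_or_gt (√3 * |t|) (ee * r) with ht | ht
  · refine (inner_bound hr hrn hη2 ht).trans ?_
    have : 320000 * (12 * K1 + 20 * CE + 2) ≤ BB := by
      unfold BB
      have : 0 ≤ 2 * (288 / ee ^ 2 + 48 + 144 * (192 / ee ^ 3) ^ 4) := by positivity
      linarith
    gcongr
  · have hf := fch_outer (F := F) hr hrn hη3 ht
    have ht1 : 1 ≤ |t| := by
      by_contra h
      push Not at h
      nlinarith
    have ht0 : t ≠ 0 := abs_pos.1 (by linarith)
    have hg : ‖gf (cc r) t‖ ≤ 288 / ee ^ 2 / (r ^ 2 * |t|) := by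
      have a1 := norm_gf_le h1 t
      have a2 := exp_neg_half_sq_six ht0
      have a3 : 1 ≤ |t| ^ 3 := one_le_pow₀ ht1
      have a4 : (ee * r) ^ 2 ≤ 3 * |t| ^ 2 := by
        rw [← h3, ← mul_pow]
        exact pow_le_pow_left₀ (by positivity) ht.le 2
      calc ‖gf (cc r) t‖ ≤ 48 / |t| ^ 6 * (2 * |t| ^ 3) := by
            refine a1.trans (mul_le_mul a2 (by linarith) (by positivity) (by positivity))
        _ = 288 / (3 * |t| ^ 2 * |t|) := by
            have : |t| ≠ 0 := abs_ne_zero.2 ht0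
            field_simp; norm_num
        _ ≤ 288 / ((ee * r) ^ 2 * |t|) := by gcongr
        _ = _ := by field_simp
    have hw : 1 / |t| ≤ 2 * (|t| / (1 + t ^ 2)) := by
      rw [← mul_div_assoc, div_le_div_iff₀ (by linarith) (by positivity), ← sq_abs t]
      nlinarith
    have hBB : 2 * (288 / ee ^ 2 + 48 + 144 * (192 / ee ^ 3) ^ 4) ≤ BB := by
      unfold BB
      linarith
    refine (norm_sub_le _ _).trans ?_
    rw [norm_mul, Complex.norm_real, Real.norm_eq_abs, Real.abs_exp]
    calc _ ≤ (48 + 144 * (192 / ee ^ 3) ^ 4) / (r ^ 2 * |t|) + 288 / ee ^ 2 / (r ^ 2 * |t|) :=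
          add_le_add hf hg
      _ = (288 / ee ^ 2 + 48 + 144 * (192 / ee ^ 3) ^ 4) / r ^ 2 * (1 / |t|) := by
          field_simp; ring
      _ ≤ (288 / ee ^ 2 + 48 + 144 * (192 / ee ^ 3) ^ 4) / r ^ 2 * (2 * (|t| / (1 + t ^ 2))) := by
          gcongr
      _ = (2 * (288 / ee ^ 2 + 48 + 144 * (192 / ee ^ 3) ^ 4)) / r ^ 2 * |t| / (1 + t ^ 2) := by
          ring
      _ ≤ _ := by gcongr

end ETS

/-! ### Transfer to the logarithm of the least common multiple -/

namespace ETS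

open Complex

variable {F : Type} [Field F] [Fintype F]

lemma Ex_eq_sum (n : ℕ) (f : Multiset ℕ → ℝ) :
    Ex F n f = ∑ c : Fin n → F, ((Fintype.card F : ℝ) ^ n)⁻¹ * f (degs (monicOfCoeffs n c)) := by
  unfold Ex; rw [smul_eq_mul, Finset.mul_sum]

lemma abs_cc_le {r : ℝ} (hr : 1 ≤ r) : |cc r| ≤ 1 := by
  unfold cc
  rw [abs_of_nonneg (by positivity), div_le_one (by have := sqrt_two_pi_pos; positivity)]
  have h1 := sqrt3_bounds.2.1
  have h2 := one_le_sqrt_two_pi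
  have : 8 * 1 * 1 ≤ 8 * r * √(2 * Real.pi) := by gcongr
  linarith

/-- Law of the normalized sum of logarithms, in terms of a smoothing scale `η`. -/
lemma logP_law {n : ℕ} {r η a : ℝ} (hr : r0 ≤ r) (hrn : r ^ 2 = Real.log n) (hη : 0 < η)
    (hη2 : η ^ 2 * r ^ 2 ≤ 1) (hη3 : 1 ≤ η ^ 3 * r ^ 4) (ha : 0 ≤ a) (y : ℝ) :
    |Ex F n (fun A => if √3 / r ^ 3 * (logP A - Ex F n logP) < y then (1 : ℝ) else 0)
        - Gf (cc r) y|
      ≤ BB / r ^ 2 + 2 * Real.exp (-((a / η) ^ 2) / 4) + 9 * a := by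
  obtain ⟨h1, -, -, -⟩ := r0_facts hr
  rw [Ex_eq_sum]
  have hq : (0 : ℝ) < (Fintype.card F : ℝ) ^ n := by
    have := card_pos' (F := F)
    positivity
  refine smoothing_ineq (fun _ : Fin n → F => ((Fintype.card F : ℝ) ^ n)⁻¹)
    (fun c => √3 / r ^ 3 * (logP (degs (monicOfCoeffs n c)) - Ex F n logP)) (cc r)
    (fun _ => by positivity) ?_ hη (abs_cc_le h1) ha (fun t => ?_) y
  · simp
  · have hb := fch_bound (F := F) hr hrn hη2 hη3 t
    refine le_trans (le_of_eq ?_) hb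
    unfold hd
    congr 3
    unfold fch Mf
    rw [← Ex_mul_left_complex]
    generalize Ex F n logP = m
    unfold Ex
    rw [Finset.smul_sum]
    refine Finset.sum_congr rfl fun c _ => ?_
    dsimp only
    rw [← Complex.exp_add, Complex.real_smul]
    congr 2
    push_cast
    ring

/-- Probability that the normalized fluctuation of `logP - logO` exceeds `b`: Chebyshev's
inequality for the prime powers `m ≤ Y`, Markov's inequality for those with `m > Y`. -/
lemma delta_tail {n Y : ℕ} (hY : 1 ≤ Y) (hYn : Y ≤ n) {w b : ℝ} (hw : 0 < w) (hb : 0 < b) :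
    Ex F n (fun A => if b < |w * ((logP A - logO A) - Ex F n (fun A => logP A - logO A))|
        then (1 : ℝ) else 0)
      ≤ 4 * w ^ 2 / b ^ 2 * (4 * (8 * Real.log Y ^ 2 + C0) * harmonic n)
        + 4 * w / b * (12 * (1 + C0) ^ 2 * (harmonic n : ℝ) ^ 2 / √(Y : ℝ)) := by
  set U := UU (Finset.Icc 1 Y) with hU
  set V := UU (Finset.Ioc Y n) with hV
  have hsplit : ∀ A : Multiset ℕ, (∀ k ∈ A, 0 < k) → A.sum = n → logP A - logO A = U A + V A := by
    intro A h0 hn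
    rw [logP_sub_logO A h0 hn, hU, hV]
    have hI : Finset.Icc 1 n = Finset.Icc 1 Y ∪ Finset.Ioc Y n := by
      ext k; simp only [Finset.mem_Icc, Finset.mem_union, Finset.mem_Ioc]; omega
    have hdj : Disjoint (Finset.Icc 1 Y) (Finset.Ioc Y n) := by
      rw [Finset.disjoint_left]; intro k; simp only [Finset.mem_Icc, Finset.mem_Ioc]; omega
    unfold UU
    rw [hI, Finset.sum_union hdj]
  have hmean : Ex F n (fun A => logP A - logO A) = Ex F n U + Ex F n V := by
    rw [← Ex_add]; exact Ex_congr n hsplit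
  have hV0 : ∀ A, 0 ≤ V A := fun A => UU_nonneg _ A
  have hEV0 : 0 ≤ Ex F n V := by
    have := Ex_mono (F := F) n (f := fun _ => (0 : ℝ)) (g := V) fun A _ _ => hV0 A
    rwa [Ex_const] at this
  have hpt : Ex F n (fun A => if b < |w * ((logP A - logO A)
        - Ex F n (fun A => logP A - logO A))| then (1 : ℝ) else 0)
      ≤ Ex F n (fun A => 4 * w ^ 2 / b ^ 2 * (U A - Ex F n U) ^ 2
          + 2 * w / b * (V A + Ex F n V)) := by
    refine Ex_mono n fun A h0 hn => ?_
    have p1 : 0 ≤ 4 * w ^ 2 / b ^ 2 * (U A - Ex F n U) ^ 2 := by positivity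
    have p2 : 0 ≤ 2 * w / b * (V A + Ex F n V) := by
      have := hV0 A; positivity
    split_ifs with h
    · rw [hsplit A h0 hn, hmean, abs_mul, abs_of_pos hw] at h
      have h2 : |U A + V A - (Ex F n U + Ex F n V)| ≤ |U A - Ex F n U| + (V A + Ex F n V) := by
        rw [show U A + V A - (Ex F n U + Ex F n V)
          = (U A - Ex F n U) + (V A - Ex F n V) by ring]
        refine (abs_add_le _ _).trans ?_
        have : |V A - Ex F n V| ≤ V A + Ex F n V := by
          rw [abs_le]; constructor <;> linarith [hV0 A]
        linarith
      have h3 : b < w * |U A - Ex F n U| + w * (V A + Ex F n V) := by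
        rw [← mul_add]; exact h.trans_le (by gcongr)
      rcases le_total (b / 2) (w * (V A + Ex F n V)) with hc | hc
      · have : 1 ≤ 2 * w / b * (V A + Ex F n V) := by
          rw [div_mul_eq_mul_div, le_div_iff₀ hb]; linarith
        linarith
      · have h4 : b / 2 ≤ w * |U A - Ex F n U| := by linarith
        have h5 := pow_le_pow_left₀ (by positivity) h4 2
        rw [mul_pow, sq_abs] at h5
        have : 1 ≤ 4 * w ^ 2 / b ^ 2 * (U A - Ex F n U) ^ 2 := by
          rw [div_mul_eq_mul_div, le_div_iff₀ (by positivity)]; linarith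
        linarith
    · linarith
  refine hpt.trans ?_
  rw [Ex_add, Ex_mul_left, Ex_mul_left, Ex_add, Ex_const]
  have v1 := var_U (F := F) hY n
  have v2 := Ex_V (F := F) hY (hY.trans hYn)
  rw [← hU] at v1
  rw [← hV] at v2
  refine add_le_add (by gcongr) ?_
  calc 2 * w / b * (Ex F n V + Ex F n V) = 4 * w / b * Ex F n V := by ring
    _ ≤ _ := by gcongr

/-- A law for `X` at all points transfers to `X - T` up to the tail of `T` and the modulus of
continuity of the limit. -/
lemma transfer {n : ℕ} (X T : Multiset ℕ → ℝ) {c b ε : ℝ} (hc : |c| ≤ 1) (hb : 0 ≤ b)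
    (hX : ∀ y, |Ex F n (fun A => if X A < y then (1 : ℝ) else 0) - Gf c y| ≤ ε) (y : ℝ) :
    |Ex F n (fun A => if X A - T A < y then (1 : ℝ) else 0) - Gf c y|
      ≤ ε + 9 * b + Ex F n (fun A => if b < |T A| then (1 : ℝ) else 0) := by
  set q := Ex F n (fun A => if b < |T A| then (1 : ℝ) else 0)
  have up : Ex F n (fun A => if X A - T A < y then (1 : ℝ) else 0)
      ≤ Ex F n (fun A => if X A < y + b then (1 : ℝ) else 0) + q := by
    rw [← Ex_add]
    refine Ex_mono n fun A _ _ => ?_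
    by_cases h : b < |T A|
    · rw [if_pos h]; split_ifs <;> norm_num
    · rw [if_neg h]
      have := abs_le.1 (not_lt.1 h)
      split_ifs <;> first | (exfalso; linarith) | norm_num
  have lo : Ex F n (fun A => if X A < y - b then (1 : ℝ) else 0)
      ≤ Ex F n (fun A => if X A - T A < y then (1 : ℝ) else 0) + q := by
    rw [← Ex_add]
    refine Ex_mono n fun A _ _ => ?_
    by_cases h : b < |T A|
    · rw [if_pos h]; split_ifs <;> norm_num
    · rw [if_neg h]
      have := abs_le.1 (not_lt.1 h)
      split_ifs <;> first | (exfalso; linarith) | norm_num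
  have d1 := abs_le.1 (hX (y + b))
  have d2 := abs_le.1 (hX (y - b))
  have g1 := abs_le.1 (Gf_lipschitz hc (y + b) y)
  have g2 := abs_le.1 (Gf_lipschitz hc (y - b) y)
  rw [show y + b - y = b by ring, abs_of_nonneg hb] at g1
  rw [show y - b - y = -b by ring, abs_neg, abs_of_nonneg hb] at g2
  rw [abs_le]
  constructor <;> linarith

end ETS

/-! ### Choice of the parameters -/

namespace ETS

/-- The constant in the expansion for large `n`. -/
noncomputable def CL : ℝ := BB + 30 + 96 * (200 + C0) + 384 * (1 + C0) ^ 2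

/-- The scales used for large `L = log n`: the smoothing scale `η = L ^ (-2/3)`, and the precision
`ρ = (log L / L) ^ (2/3)`. -/
lemma scales {r : ℝ} (hr : 720 ≤ r) :
    ∃ η ρ : ℝ, 0 < η ∧ ρ = (Real.log (r ^ 2) / r ^ 2) ^ ((2 : ℝ) / 3) ∧ 0 < ρ ∧
      1 ≤ Real.log (r ^ 2) ∧ η ^ 2 * r ^ 2 ≤ 1 ∧ 1 ≤ η ^ 3 * r ^ 4 ∧ 1 / r ^ 2 ≤ ρ ∧
      η * √(Real.log (r ^ 2)) ≤ ρ ∧ ρ ^ 3 * r ^ 4 = Real.log (r ^ 2) ^ 2 ∧ 1 ≤ ρ ^ 2 * r ^ 3 := by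
  have hr0 : 0 < r := by linarith
  set l := Real.log (r ^ 2) with hl
  have hl1 : 1 ≤ l := by
    rw [hl, Real.le_log_iff_exp_le (by positivity)]
    have := Real.exp_one_lt_d9
    nlinarith
  have cube : ∀ x : ℝ, 0 ≤ x → (x ^ ((2 : ℝ) / 3)) ^ 3 = x ^ 2 := by
    intro x hx
    rw [← Real.rpow_natCast, ← Real.rpow_mul hx, ← Real.rpow_natCast]
    norm_num
  set η := (1 / r ^ 2) ^ ((2 : ℝ) / 3) with hη
  set ρ := (l / r ^ 2) ^ ((2 : ℝ) / 3) with hρ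
  have η0 : 0 < η := by positivity
  have ρ0 : 0 < ρ := by positivity
  have η3 : η ^ 3 * r ^ 4 = 1 := by
    rw [hη, cube _ (by positivity)]; field_simp
  have ρ3 : ρ ^ 3 * r ^ 4 = l ^ 2 := by
    rw [hρ, cube _ (by positivity)]; field_simp
  have key : ∀ x y : ℝ, 0 ≤ x → 0 ≤ y → x ^ 3 ≤ y ^ 3 → x ≤ y := fun x y _ hy h =>
    le_of_pow_le_pow_left₀ (by norm_num) hy h
  have hηρ : η * √l ≤ ρ := by
    refine key _ _ (by positivity) ρ0.le ?_
    have h1 : (η * √l) ^ 3 * r ^ 4 ≤ ρ ^ 3 * r ^ 4 := by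
      have hs : 1 ≤ √l := Real.one_le_sqrt.2 hl1
      have hs2 : √l ^ 2 = l := Real.sq_sqrt (by linarith)
      calc (η * √l) ^ 3 * r ^ 4 = (η ^ 3 * r ^ 4) * √l ^ 3 := by ring
        _ = √l ^ 3 := by rw [η3, one_mul]
        _ ≤ √l ^ 4 := pow_le_pow_right₀ hs (by norm_num)
        _ = (√l ^ 2) ^ 2 := by ring
        _ = ρ ^ 3 * r ^ 4 := by rw [hs2, ρ3]
    exact le_of_mul_le_mul_right h1 (by positivity)
  have hηρ' : η ≤ ρ := by
    refine le_trans ?_ hηρ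
    have hs : 1 ≤ √l := Real.one_le_sqrt.2 hl1
    nlinarith
  refine ⟨η, ρ, η0, rfl, ρ0, hl1, ?_, η3.ge, ?_, hηρ, ρ3, ?_⟩
  · refine key _ _ (by positivity) zero_le_one ?_
    have h1 : (η ^ 2 * r ^ 2) ^ 3 * r ^ 2 = 1 := by
      calc (η ^ 2 * r ^ 2) ^ 3 * r ^ 2 = (η ^ 3 * r ^ 4) ^ 2 := by ring
        _ = 1 := by rw [η3, one_pow]
    have h2 : (1 : ℝ) ≤ r ^ 2 := one_le_pow₀ (by linarith)
    have h3 : 0 ≤ (η ^ 2 * r ^ 2) ^ 3 := by positivity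
    nlinarith
  · refine le_trans ?_ hηρ'
    rw [div_le_iff₀ (by positivity)]
    refine key _ _ zero_le_one (by positivity) ?_
    have h1 : (η * r ^ 2) ^ 3 = r ^ 2 := by
      calc (η * r ^ 2) ^ 3 = (η ^ 3 * r ^ 4) * r ^ 2 := by ring
        _ = r ^ 2 := by rw [η3, one_mul]
    rw [h1]
    nlinarith
  · refine le_trans ?_ (show η ^ 2 * r ^ 3 ≤ ρ ^ 2 * r ^ 3 by gcongr)
    refine key _ _ zero_le_one (by positivity) ?_
    have h1 : (η ^ 2 * r ^ 3) ^ 3 = r := by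
      calc (η ^ 2 * r ^ 3) ^ 3 = (η ^ 3 * r ^ 4) ^ 2 * r := by ring
        _ = r := by rw [η3]; ring
    rw [h1]
    linarith

variable {F : Type} [Field F] [Fintype F]

lemma large_r {r : ℝ} (hr : r0 ≤ r) : 720 ≤ r := by
  obtain ⟨h1, -, -, h4⟩ := r0_facts hr
  have h2 := L0_ge
  have h3 := ee_bounds.1
  nlinarith

/-- A truncation point of size about `(log n) ^ 4`. -/
lemma exists_cut {n : ℕ} {r : ℝ} (hr : 720 ≤ r) (hrn : r ^ 2 = Real.log n) :
    ∃ Y : ℕ, 1 ≤ Y ∧ Y ≤ n ∧ Real.log Y ≤ 5 * Real.log (r ^ 2) ∧ r ^ 4 ≤ √(Y : ℝ) := by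
  set L := r ^ 2 with hL
  have hL1 : 720 ≤ L := by rw [hL]; nlinarith
  have hn : (0 : ℝ) < n := by
    rcases Nat.eq_zero_or_pos n with h | h
    · rw [h] at hrn; simp at hrn; linarith
    · exact_mod_cast h
  have hceil := Nat.ceil_lt_add_one (show (0 : ℝ) ≤ L ^ 4 by positivity)
  have hle := Nat.le_ceil (L ^ 4)
  set Y := ⌈L ^ 4⌉₊
  have h4 : 1 ≤ L ^ 4 := one_le_pow₀ (by linarith)
  have hY5 : (Y : ℝ) ≤ L ^ 5 := by
    rw [pow_succ L 4]; nlinarith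
  have hYn : (Y : ℝ) ≤ n := by
    have h6 := Real.pow_div_factorial_le_exp L (by linarith) 6
    rw [hrn, Real.exp_log hn, ← hrn, div_le_iff₀ (by positivity)] at h6
    have : (Nat.factorial 6 : ℝ) = 720 := by norm_num [Nat.factorial]
    rw [this, pow_succ L 5] at h6
    have h5 : 0 < L ^ 5 := by positivity
    nlinarith
  refine ⟨Y, by exact_mod_cast h4.trans hle, by exact_mod_cast hYn, ?_, ?_⟩
  · have := Real.log_le_log (by linarith) hY5
    rwa [Real.log_pow] at this
  · refine Real.le_sqrt_of_sq_le (le_trans (le_of_eq ?_) hle)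
    rw [hL]; ring

/-- The expansion for `logO` when `log n` is large. -/
theorem large_case {n : ℕ} {r : ℝ} (hr : r0 ≤ r) (hrn : r ^ 2 = Real.log n) (y : ℝ) :
    |Ex F n (fun A => if √3 / r ^ 3 * (logO A - Ex F n logO) < y then (1 : ℝ) else 0)
        - Gf (cc r) y| ≤ CL * (Real.log (r ^ 2) / r ^ 2) ^ ((2 : ℝ) / 3) := by
  have hr1 := large_r hr
  have hr0 : 0 < r := by linarith
  obtain ⟨η, ρ, η0, hρ, ρ0, hl1, hη2, hη3, hLρ, hηρ, ρ3, hρr⟩ := scales hr1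
  obtain ⟨Y, hY1, hYn, hYlog, hYs⟩ := exists_cut hr1 hrn
  rw [← hρ]
  set l := Real.log (r ^ 2) with hl
  have hs3 := sqrt3_bounds
  have hC := one_le_C0
  have hBB : 0 ≤ BB := by unfold BB; have := ee_pos; have := CE_ge; have := K1_ge; positivity
  have hlaw : ∀ y, |Ex F n (fun A => if √3 / r ^ 3 * (logP A - Ex F n logP) < y then (1 : ℝ)
      else 0) - Gf (cc r) y| ≤ (BB + 20) * ρ := by
    intro y
    refine (logP_law (a := 2 * (η * √l)) hr hrn η0 hη2 hη3 (by positivity) y).trans ?_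
    have e1 : -((2 * (η * √l) / η) ^ 2) / 4 = -l := by
      have : 2 * (η * √l) / η = 2 * √l := by field_simp
      rw [this, mul_pow, Real.sq_sqrt (by linarith)]; ring
    rw [e1, Real.exp_neg, hl, Real.exp_log (by positivity), ← one_div, ← hl]
    have : BB / r ^ 2 ≤ BB * ρ := by
      rw [div_eq_mul_one_div]; gcongr
    linarith
  have htail := delta_tail (F := F) hY1 hYn (w := √3 / r ^ 3) (by positivity) ρ0
  have hmean : Ex F n (fun A => logP A - logO A) = Ex F n logP - Ex F n logO := Ex_sub _ _ _
  have htr := transfer (F := F) (n := n) (fun A => √3 / r ^ 3 * (logP A - Ex F n logP))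
    (fun A => √3 / r ^ 3 * ((logP A - logO A) - Ex F n (fun A => logP A - logO A)))
    (abs_cc_le (by linarith : (1 : ℝ) ≤ r)) ρ0.le hlaw y
  have hfun : ∀ A, √3 / r ^ 3 * (logP A - Ex F n logP)
      - √3 / r ^ 3 * ((logP A - logO A) - Ex F n (fun A => logP A - logO A))
      = √3 / r ^ 3 * (logO A - Ex F n logO) := by
    intro A; rw [hmean]; ring
  simp only [hfun] at htr
  refine htr.trans ?_
  have hn1 : 1 ≤ n := hY1.trans hYn
  have hH : (harmonic n : ℝ) ≤ 2 * r ^ 2 := by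
    have := harmonic_le_one_add_log n
    rw [← hrn] at this
    nlinarith
  have hH0 : 0 ≤ (harmonic n : ℝ) := le_trans zero_le_one (one_le_harmonic hn1)
  have hlogY : 0 ≤ Real.log Y := Real.log_natCast_nonneg Y
  have t1 : 4 * (√3 / r ^ 3) ^ 2 / ρ ^ 2 * (4 * (8 * Real.log Y ^ 2 + C0) * harmonic n)
      ≤ 96 * (200 + C0) * ρ := by
    have hA : 8 * Real.log Y ^ 2 + C0 ≤ (200 + C0) * l ^ 2 := by
      have h1 := pow_le_pow_left₀ hlogY hYlog 2
      have h2 : 1 ≤ l ^ 2 := one_le_pow₀ hl1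
      nlinarith
    calc 4 * (√3 / r ^ 3) ^ 2 / ρ ^ 2 * (4 * (8 * Real.log Y ^ 2 + C0) * harmonic n)
        ≤ 4 * (√3 / r ^ 3) ^ 2 / ρ ^ 2 * (4 * ((200 + C0) * l ^ 2) * (2 * r ^ 2)) := by gcongr
      _ = 96 * (200 + C0) * ρ := by
        rw [← ρ3, div_pow, hs3.2.2]
        field_simp
        ring
  have t2 : 4 * (√3 / r ^ 3) / ρ * (12 * (1 + C0) ^ 2 * (harmonic n : ℝ) ^ 2 / √(Y : ℝ))
      ≤ 384 * (1 + C0) ^ 2 * ρ := by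
    have hw : √3 / r ^ 3 / ρ ≤ 2 * ρ := by
      rw [div_div, div_le_iff₀ (by positivity)]
      nlinarith [hs3.2.1]
    calc 4 * (√3 / r ^ 3) / ρ * (12 * (1 + C0) ^ 2 * (harmonic n : ℝ) ^ 2 / √(Y : ℝ))
        ≤ 4 * (√3 / r ^ 3) / ρ * (12 * (1 + C0) ^ 2 * (2 * r ^ 2) ^ 2 / r ^ 4) := by gcongr
      _ = 192 * (1 + C0) ^ 2 * (√3 / r ^ 3 / ρ) := by field_simp; ring
      _ ≤ 192 * (1 + C0) ^ 2 * (2 * ρ) := by gcongr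
      _ = 384 * (1 + C0) ^ 2 * ρ := by ring
  have : CL * ρ = (BB + 20) * ρ + 10 * ρ + 96 * (200 + C0) * ρ + 384 * (1 + C0) ^ 2 * ρ := by
    unfold CL; ring
  linarith

lemma Ex_indicator_bounds (n : ℕ) (p : Multiset ℕ → Prop) [DecidablePred p] :
    0 ≤ Ex F n (fun A => if p A then (1 : ℝ) else 0) ∧
      Ex F n (fun A => if p A then (1 : ℝ) else 0) ≤ 1 := by
  constructor
  · refine le_trans (Ex_const (F := F) n (0 : ℝ)).ge ?_
    exact Ex_mono n fun A _ _ => by split_ifs <;> norm_num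
  · refine le_trans (Ex_mono n (g := fun _ => (1 : ℝ)) fun A _ _ => by split_ifs <;> norm_num) ?_
    rw [Ex_const]

/-- The trivial bound, used for bounded `n`. -/
lemma small_case {n : ℕ} {r : ℝ} (hr : 1 ≤ r) (y : ℝ) :
    |Ex F n (fun A => if √3 / r ^ 3 * (logO A - Ex F n logO) < y then (1 : ℝ) else 0)
        - Gf (cc r) y| ≤ 4 := by
  obtain ⟨h1, h2⟩ := Ex_indicator_bounds (F := F) n
    (fun A => √3 / r ^ 3 * (logO A - Ex F n logO) < y)
  have h3 := Phi_nonneg y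
  have h4 := Phi_le_one y
  have h5 : |(1 - y ^ 2) * Real.exp (-y ^ 2 / 2)| ≤ 2 := by
    have h := exp_neg_half_sq_mul y
    have he := Real.exp_pos (-y ^ 2 / 2)
    rw [abs_mul, abs_of_pos he]
    have : |1 - y ^ 2| ≤ 1 + y ^ 2 := by
      rw [abs_le]; constructor <;> nlinarith [sq_nonneg y]
    calc |1 - y ^ 2| * Real.exp (-y ^ 2 / 2) ≤ (1 + y ^ 2) * Real.exp (-y ^ 2 / 2) := by gcongr
      _ ≤ 2 * (Real.exp (-y ^ 2 / 2) * (1 + y ^ 2 / 2 + y ^ 4 / 8)) := by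
        have : 0 ≤ Real.exp (-y ^ 2 / 2) * (1 + y ^ 4 / 4) := by positivity
        nlinarith
      _ ≤ 2 := by linarith
  have h6 : |cc r * ((1 - y ^ 2) * Real.exp (-y ^ 2 / 2))| ≤ 2 := by
    rw [abs_mul]
    have := mul_le_mul (abs_cc_le hr) h5 (abs_nonneg _) zero_le_one
    linarith
  have h7 := abs_le.1 h6
  unfold Gf
  rw [abs_le]
  constructor <;> linarith

/-- Both cases combined, with an absolute constant. -/
theorem combined : ∃ C : ℝ, 0 < C ∧ ∀ (F : Type) [Field F] [Fintype F] (n : ℕ), 3 ≤ n →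
    ∀ y : ℝ, |Ex F n (fun A => if √3 / √(Real.log n) ^ 3 * (logO A - Ex F n logO) < y
        then (1 : ℝ) else 0) - Gf (cc (√(Real.log n))) y|
      ≤ C * (Real.log (Real.log n) / Real.log n) ^ ((2 : ℝ) / 3) := by
  have hlog3 : 1 < Real.log 3 := by
    rw [Real.lt_log_iff_exp_lt (by norm_num)]
    linarith [Real.exp_one_lt_d9]
  have hll3 : 0 < Real.log (Real.log 3) := Real.log_pos hlog3
  have hr0 : 0 < r0 := by
    unfold r0; have := L0_ge; have := ee_pos; positivity
  set κ := (Real.log (Real.log 3) / r0 ^ 2) ^ ((2 : ℝ) / 3) with hκ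
  have κ0 : 0 < κ := by positivity
  have hCL : 0 < CL := by
    have := one_le_C0
    have hBB : 0 ≤ BB := by unfold BB; have := ee_pos; have := CE_ge; have := K1_ge; positivity
    unfold CL; positivity
  refine ⟨CL + 4 / κ, by positivity, fun F _ _ n hn y => ?_⟩
  have hL3 : Real.log 3 ≤ Real.log n := Real.log_le_log (by norm_num) (by exact_mod_cast hn)
  have hL1 : 1 < Real.log n := by linarith
  have hsq : √(Real.log n) ^ 2 = Real.log n := Real.sq_sqrt (by linarith)
  have hll : Real.log (Real.log 3) ≤ Real.log (Real.log n) :=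
    Real.log_le_log (by linarith) hL3
  have hρ0 : 0 ≤ (Real.log (Real.log n) / Real.log n) ^ ((2 : ℝ) / 3) := by
    have : 0 < Real.log (Real.log n) := by linarith
    positivity
  rcases le_total r0 (√(Real.log n)) with h | h
  · refine (large_case h hsq y).trans ?_
    rw [hsq]
    refine mul_le_mul_of_nonneg_right ?_ hρ0
    have : 0 < 4 / κ := by positivity
    linarith
  · refine (small_case (Real.one_le_sqrt.2 hL1.le) y).trans ?_
    have hκρ : κ ≤ (Real.log (Real.log n) / Real.log n) ^ ((2 : ℝ) / 3) := by
      refine Real.rpow_le_rpow (by positivity) ?_ (by norm_num)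
      have : Real.log n ≤ r0 ^ 2 := by
        rw [← hsq]; gcongr
      have : 0 ≤ Real.log (Real.log n) := by linarith
      gcongr
    calc (4 : ℝ) = 4 / κ * κ := by field_simp
      _ ≤ (CL + 4 / κ) * (Real.log (Real.log n) / Real.log n) ^ ((2 : ℝ) / 3) := by
        gcongr
        linarith

end ETS

/-- Erdős–Turán type law, with an asymptotic expansion term, for the logarithm of the
degree of the splitting field of a random monic polynomial of degree `n` over a finite
field; the constant is absolute (independent of the finite field and of `n`). -/
theorem erdos_turan_expansion_splitting_field :
    ∃ C : ℝ, 0 < C ∧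
      ∀ (F : Type) [Field F] [Fintype F] [DecidableEq F],
        ∀ n : ℕ, 3 ≤ n →
          (let mean : ℝ :=
              (∑ c : Fin n → F, Real.log (splitDeg (monicOfCoeffs n c))) /
                ((Fintype.card F : ℝ) ^ n);
           ∀ x : ℝ,
            |(∑ c : Fin n → F,
                  if (Real.log (splitDeg (monicOfCoeffs n c)) - mean) /
                      ((Real.sqrt 3)⁻¹ * Real.log n ^ ((3 : ℝ) / 2)) < x
                  then (1 : ℝ) else 0) / ((Fintype.card F : ℝ) ^ n)
                - stdNormalCDF x
                - (3 : ℝ) ^ ((3 : ℝ) / 2) / (24 * Real.sqrt (2 * Real.pi)) *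
                    ((1 - x ^ 2) * Real.exp (-x ^ 2 / 2)) / Real.sqrt (Real.log n)|
              ≤ C * (Real.log (Real.log n) / Real.log n) ^ ((2 : ℝ) / 3)) := by
  obtain ⟨C, hC0, hC⟩ := ETS.combined
  refine ⟨C, hC0, fun F _ _ _ n hn => ?_⟩
  intro mean x
  refine le_trans (le_of_eq ?_) (hC F n hn x)
  have hlog : 0 ≤ Real.log n := Real.log_natCast_nonneg n
  have hr : 0 < √(Real.log n) :=
    Real.sqrt_pos.2 (Real.log_pos (by exact_mod_cast (by omega : 1 < n)))
  have hpow : ∀ z : ℝ, 0 ≤ z → z ^ ((3 : ℝ) / 2) = √z ^ 3 := by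
    intro z hz
    rw [Real.sqrt_eq_rpow, ← Real.rpow_natCast, ← Real.rpow_mul hz]
    norm_num
  have hmean : mean = ETS.Ex F n ETS.logO := by
    unfold ETS.Ex
    rw [smul_eq_mul, mul_comm, ← div_eq_mul_inv]
    rfl
  have h3 : √3 ^ 2 = 3 := ETS.sqrt3_bounds.2.2
  have h30 : 0 < √3 := by positivity
  have hstat : ∀ c : Fin n → F, (Real.log (splitDeg (monicOfCoeffs n c)) - mean) /
      ((Real.sqrt 3)⁻¹ * Real.log n ^ ((3 : ℝ) / 2))
      = √3 / √(Real.log n) ^ 3 * (ETS.logO (ETS.degs (monicOfCoeffs n c)) - ETS.Ex F n ETS.logO) := by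
    intro c
    rw [hmean, hpow _ hlog]
    change (ETS.logO (ETS.degs (monicOfCoeffs n c)) - _) / _ = _
    field_simp
  have hcc : (3 : ℝ) ^ ((3 : ℝ) / 2) / (24 * Real.sqrt (2 * Real.pi)) *
      ((1 - x ^ 2) * Real.exp (-x ^ 2 / 2)) / Real.sqrt (Real.log n)
      = ETS.cc (√(Real.log n)) * ((1 - x ^ 2) * Real.exp (-x ^ 2 / 2)) := by
    have hpi := ETS.sqrt_two_pi_pos
    rw [hpow 3 (by norm_num), pow_succ, h3]
    unfold ETS.cc
    generalize √(2 * Real.pi) = p at hpi ⊢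
    generalize √(Real.log n) = r at hr ⊢
    generalize Real.exp (-x ^ 2 / 2) = e
    field_simp
    ring
  have hsum : (∑ c : Fin n → F,
      if (Real.log (splitDeg (monicOfCoeffs n c)) - mean) /
          ((Real.sqrt 3)⁻¹ * Real.log n ^ ((3 : ℝ) / 2)) < x
      then (1 : ℝ) else 0) / ((Fintype.card F : ℝ) ^ n)
      = ETS.Ex F n (fun A => if √3 / √(Real.log n) ^ 3 * (ETS.logO A - ETS.Ex F n ETS.logO) < x
        then (1 : ℝ) else 0) := by
    simp only [hstat]
    generalize ETS.Ex F n ETS.logO = m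
    unfold ETS.Ex
    rw [smul_eq_mul, mul_comm, ← div_eq_mul_inv]
  rw [hcc, hsum, ETS.Gf, sub_sub]
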